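/- Suppose 1 < H₀ < H and y₀ < y ≤ exp(log H/(c·log log H)) with c = 1.4·10⁴ and y₀ a sufficiently large absolute constant, and let ν be an integer with 0 ≤ ν ≤ exp((log y)^{1/4}). Then for any real T and any real α < β, one has ∫_T^{T+H} χ_{α,β}(V_y(t)) dt = (H/√(2π))·Σ_{n=0}^{ν} (Φ_n/(2σ)ⁿ)·∫_{−∞}^{+∞} e^{−u²/2} H_{2n}(u)·χ_{a,b}(u) du + O(H·Δ), where a = α·√(2/σ), b = β·√(2/σ), Δ = (log y)^{−1/2}/(log log y) + (log y/log H)^{1/2} + (1/(ν+1))·((log log(ν+2)+1)/σ)^{ν+1}, and the implied O-constant is absolute. -/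

import Mathlib

open MeasureTheory Real Complex Filter

/-- The set of primes `p ≤ y`. -/
noncomputable def primesLe (y : ℝ) : Finset ℕ :=
  (Finset.range (⌊y⌋₊ + 1)).filter Nat.Prime

/-- `V_y(t) = ∑_{p ≤ y} sin(t log p)/√p`. -/
noncomputable def Vy (y t : ℝ) : ℝ :=
  ∑ p ∈ primesLe y, Real.sin (t * Real.log p) / Real.sqrt p

/-- `σ = σ(y) = ∑_{p ≤ y} 1/p`. -/
noncomputable def sigmay (y : ℝ) : ℝ := ∑ p ∈ primesLe y, (1 : ℝ) / p

/-- `J0twoISqrt w = J₀(2i√w) = ∑_{n≥0} wⁿ/(n!)²`, where `J₀` is the Bessel function of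
the first kind of order 0. -/
noncomputable def J0twoISqrt (w : ℂ) : ℂ := ∑' n : ℕ, w ^ n / ((n.factorial : ℂ)) ^ 2

/-- `G(z) = ∏_{p ≤ y} J₀(2i√(z/p))`. -/
noncomputable def Gfun (y : ℝ) (z : ℂ) : ℂ := ∏ p ∈ primesLe y, J0twoISqrt (z / (p : ℂ))

/-- `φ(z) = e^{-z} J₀(2i√z)`. -/
noncomputable def phifun (z : ℂ) : ℂ := Complex.exp (-z) * J0twoISqrt z

/-- `Φ(z) = ∏_{p ≤ y} φ(z/p)`. -/
noncomputable def Phifun (y : ℝ) (z : ℂ) : ℂ := ∏ p ∈ primesLe y, phifun (z / (p : ℂ))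

/-- The `n`-th Taylor coefficient of `Φ` at `0`. -/
noncomputable def PhiCoef (y : ℝ) (n : ℕ) : ℂ := iteratedDeriv n (Phifun y) 0 / (n.factorial : ℂ)

/-- Evaluation of the (probabilists') Hermite polynomial
`H_n(x) = (-1)ⁿ e^{x²/2} (d/dx)ⁿ e^{-x²/2}`. -/
noncomputable def hermiteEval (n : ℕ) (x : ℝ) : ℝ := Polynomial.aeval x (Polynomial.hermite n)

/-- The `n`-th Taylor coefficient `Φ_n` of `Φ` at `0` (a real number). -/
noncomputable def PhiCoefR (y : ℝ) (n : ℕ) : ℝ := (PhiCoef y n).re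



lemma primesLe_eq (y : ℝ) : primesLe y = Nat.primesLE ⌊y⌋₊ := rfl

/-- Mertens first theorem, upper bound. -/
lemma mertens_first (n : ℕ) (hn : 1 ≤ n) :
    ∑ p ∈ Nat.primesLE n, Real.log p / p ≤ Real.log n + 2 := by
  have hn0 : (0:ℝ) < n := by exact_mod_cast hn
  -- log n! = Σ v_p log p
  have hfac : Real.log (n.factorial) =
      ∑ p ∈ Nat.primesLE n, ((n.factorial).factorization p : ℝ) * Real.log p := by
    have h1 : n.factorial = ∏ p ∈ Nat.primesLE n, p ^ ((n.factorial).factorization p) := by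
      conv_lhs => rw [← Nat.prod_factorization_pow_eq_self (Nat.factorial_ne_zero n)]
      apply Finset.prod_subset
      · intro p hp
        rw [Nat.support_factorization, Nat.mem_primeFactors] at hp
        rw [Nat.mem_primesLE]
        exact ⟨(hp.1.dvd_factorial).1 hp.2.1, hp.1⟩
      · intro p _ hp
        rw [Finsupp.notMem_support_iff] at hp
        simp [hp]
    conv_lhs => rw [h1]
    push_cast
    rw [Real.log_prod]
    · simp [Real.log_pow]
    · intro p hp
      have := (Nat.prime_of_mem_primesLE hp).pos
      positivity
  have hge : ∀ p ∈ Nat.primesLE n, ((n:ℝ)/p - 1) * Real.log p ≤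
      ((n.factorial).factorization p : ℝ) * Real.log p := by
    intro p hp
    have hpp := Nat.prime_of_mem_primesLE hp
    have hlog : 0 ≤ Real.log p := Real.log_natCast_nonneg p
    apply mul_le_mul_of_nonneg_right _ hlog
    have h1 : n / p ≤ (n.factorial).factorization p := by
      have : p ^ (n/p) ∣ n.factorial := by
        have h2 : p ^ (n/p) ∣ (p * (n/p)).factorial := by
          have : p ^ (n/p) * (n/p).factorial ∣ (p * (n/p)).factorial := by
            generalize n / p = k
            induction k with
            | zero => simp
            | succ k ih =>
              have e1 : p * (k+1) = p*k + p := by ring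
              rw [pow_succ, Nat.factorial_succ]
              have : p * (k+1) = (p*(k+1) - 1) + 1 := by
                have := Nat.mul_pos hpp.pos (Nat.succ_pos k)
                have h3 : 0 < p * (k+1) := this
                omega
              have h4 : (p*(k+1)).factorial = (p*(k+1)) * (p*(k+1)-1).factorial := by
                conv_lhs => rw [this]
                rw [Nat.factorial_succ, ← this]
              rw [h4]
              have h5 : p ^ k * k.factorial ∣ (p*(k+1)-1).factorial := by
                refine ih.trans (Nat.factorial_dvd_factorial ?_)
                have := hpp.pos
                rw [e1]; omega
              have : p ^ k * p * ((k+1) * k.factorial) = (p * (k+1)) * (p^k * k.factorial) := by ring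
              rw [this]
              exact Nat.mul_dvd_mul_left _ h5
          exact (Dvd.intro _ rfl).trans this
        exact h2.trans (Nat.factorial_dvd_factorial (Nat.mul_div_le n p))
      exact (hpp.pow_dvd_iff_le_factorization (Nat.factorial_ne_zero n)).1 this
    have h2 : (n:ℝ)/p - 1 ≤ ((n/p : ℕ) : ℝ) := by
      have := Nat.lt_floor_add_one ((n:ℝ)/p)
      rw [Nat.floor_div_eq_div] at this
      linarith
    exact h2.trans (by exact_mod_cast h1)
  have hsum := Finset.sum_le_sum hge
  rw [← hfac] at hsum
  have hup : Real.log n.factorial ≤ n * Real.log n := by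
    have : (n.factorial : ℝ) ≤ (n:ℝ)^n := by exact_mod_cast Nat.factorial_le_pow n
    calc _ ≤ Real.log ((n:ℝ)^n) := Real.log_le_log (by positivity) this
      _ = _ := by rw [Real.log_pow]
  have hth := Chebyshev.theta_le_log4_mul_x (x := n) hn0.le
  rw [Chebyshev.theta_eq_sum_primesLE_log] at hth
  have e : ∑ p ∈ Nat.primesLE n, ((n:ℝ)/p - 1) * Real.log p =
      n * ∑ p ∈ Nat.primesLE n, Real.log p / p - ∑ p ∈ Nat.primesLE n, Real.log p := by
    rw [Finset.mul_sum, ← Finset.sum_sub_distrib]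
    apply Finset.sum_congr rfl
    intros; ring
  rw [e] at hsum
  have hl4 : Real.log 4 ≤ 2 := by
    have : Real.log 4 = 2 * Real.log 2 := by
      rw [show (4:ℝ) = 2^2 by norm_num, Real.log_pow]; norm_num
    have := Real.log_two_lt_d9
    linarith
  have : (n:ℝ) * ∑ p ∈ Nat.primesLE n, Real.log p / p ≤ n * (Real.log n + 2) := by
    nlinarith
  exact le_of_mul_le_mul_left this hn0

lemma zeta_upper {s : ℝ} (hs : 1 < s) : (∑' n : ℕ, 1 / (n + 1 : ℝ) ^ s) ≤ 1 + 1 / (s - 1) := by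
  have h := ZetaAsymptotics.zeta_limit_aux1 hs
  have : 0 ≤ ZetaAsymptotics.termTSum s := tsum_nonneg fun n => ZetaAsymptotics.term_nonneg _ _
  nlinarith

/-- the multiplicative function n ↦ n^{-s} -/
noncomputable def powHom (s : ℝ) : ℕ →* ℝ where
  toFun n := (n:ℝ) ^ (-s)
  map_one' := by simp
  map_mul' a b := by push_cast; rw [Real.mul_rpow (by positivity) (by positivity)]

lemma euler_upper {s : ℝ} (hs : 1 < s) (N : ℕ) :
    ∑ p ∈ Nat.primesLE N, -Real.log (1 - (p:ℝ)^(-s)) ≤ Real.log (1 + 1/(s-1)) := by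
  have hsum : Summable (powHom s : ℕ → ℝ) := by
    have := Real.summable_nat_rpow (p := -s)
    exact this.2 (by linarith)
  have h1 := EulerProduct.prod_primesBelow_geometric_eq_tsum_smoothNumbers hsum (N+1)
  have hlt : ∀ p ∈ Nat.primesLE N, 0 < 1 - (p:ℝ)^(-s) := by
    intro p hp
    have hp2 : (1:ℝ) < p := by exact_mod_cast Nat.one_lt_of_mem_primesLE hp
    have := Real.rpow_lt_one_of_one_lt_of_neg hp2 (by linarith : -s < 0)
    linarith
  have h2 : (∑' m : (N+1).smoothNumbers, powHom s m) ≤ 1 + 1/(s-1) := by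
    refine le_trans ?_ (zeta_upper hs)
    have hz : (powHom s : ℕ → ℝ) 0 = 0 := by
      change ((0:ℕ):ℝ)^(-s) = 0
      rw [Nat.cast_zero, Real.zero_rpow (by linarith)]
    have e : (∑' n : ℕ, 1 / (n + 1 : ℝ) ^ s) = ∑' n, powHom s n := by
      rw [hsum.tsum_eq_zero_add, hz, zero_add]
      apply tsum_congr
      intro n
      change _ = ((n+1:ℕ):ℝ)^(-s)
      rw [Real.rpow_neg (by positivity)]; push_cast; rw [one_div]
    rw [e]
    exact hsum.tsum_subtype_le (powHom s) ((N+1).smoothNumbers : Set ℕ) (fun n => by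
      change 0 ≤ (n:ℝ)^(-s); positivity)
  rw [← h1] at h2
  have h3 : ∑ p ∈ Nat.primesLE N, -Real.log (1 - (p:ℝ)^(-s)) =
      Real.log (∏ p ∈ Nat.primesLE N, (1 - powHom s p)⁻¹) := by
    rw [Real.log_prod]
    · apply Finset.sum_congr rfl
      intro p hp
      rw [Real.log_inv]; rfl
    · intro p hp
      exact inv_ne_zero (hlt p hp).ne'
  rw [h3]
  apply Real.log_le_log _ h2
  apply Finset.prod_pos
  intro p hp
  exact inv_pos.2 (hlt p hp)

lemma neg_log_one_sub_ge {u : ℝ} (h0 : 0 ≤ u) (h1 : u < 1) : u + u^2/2 ≤ -Real.log (1-u) := by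
  have h := Real.hasSum_pow_div_log_of_abs_lt_one (x := u) (by rwa [abs_of_nonneg h0])
  have := h.summable.sum_le_tsum (Finset.range 2) (fun i _ => by positivity)
  rw [h.tsum_eq] at this
  norm_num [Finset.sum_range_succ] at this
  linarith

/-- Upper Mertens with explicit constant. -/
lemma mertens_upper_aux {s : ℝ} (hs : 1 < s) (N : ℕ) (hN : 2 ≤ N) (hs2 : (0.49:ℝ) ≤ (2:ℝ)^(-s)) :
    ∑ p ∈ Nat.primesLE N, (1:ℝ)/p ≤
      Real.log (1 + 1/(s-1)) - 0.12 + (s-1) * (Real.log N + 2) := by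
  have h1 : ∀ p ∈ Nat.primesLE N, (1:ℝ)/p + (if p = 2 then 0.12 else 0) ≤
      -Real.log (1 - (p:ℝ)^(-s)) + (s-1) * (Real.log p / p) := by
    intro p hp
    have hp1 : (1:ℝ) < p := by exact_mod_cast Nat.one_lt_of_mem_primesLE hp
    have hp0 : (0:ℝ) < p := by linarith
    have hlt := Real.rpow_lt_one_of_one_lt_of_neg hp1 (by linarith : -s < 0)
    have hpos : 0 < (p:ℝ)^(-s) := by positivity
    have h2 := neg_log_one_sub_ge hpos.le hlt
    have h3 : (1:ℝ)/p - (p:ℝ)^(-s) ≤ (s-1) * (Real.log p / p) := by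
      have e : (p:ℝ)^(-s) = (1/p) * Real.exp (-(s-1) * Real.log p) := by
        rw [Real.rpow_def_of_pos hp0, one_div, ← Real.exp_log (inv_pos.2 hp0), ← Real.exp_add,
          Real.log_inv]
        congr 1; ring
      rw [e]
      have := Real.add_one_le_exp (-(s-1) * Real.log p)
      have h4 : (1:ℝ)/p * (1 - Real.exp (-(s-1) * Real.log p)) ≤ (1/p) * ((s-1) * Real.log p) := by
        apply mul_le_mul_of_nonneg_left _ (by positivity)
        linarith
      calc _ = (1:ℝ)/p * (1 - Real.exp (-(s-1) * Real.log p)) := by ring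
        _ ≤ _ := h4
        _ = _ := by ring
    split_ifs with hp2
    · subst hp2
      norm_num at *
      nlinarith
    · nlinarith [sq_nonneg ((p:ℝ)^(-s))]
  have h2 := Finset.sum_le_sum h1
  rw [Finset.sum_add_distrib, Finset.sum_add_distrib, ← Finset.mul_sum] at h2
  have h3 := euler_upper hs N
  have h4 := mertens_first N (by omega)
  have h5 : ∑ p ∈ Nat.primesLE N, (if p = 2 then (0.12:ℝ) else 0) = 0.12 := by
    rw [Finset.sum_ite_eq']
    rw [if_pos]
    rw [Nat.mem_primesLE]; exact ⟨hN, Nat.prime_two⟩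
  have h6 := mul_le_mul_of_nonneg_left h4 (by linarith : 0 ≤ s - 1)
  linarith

lemma mertens_upper : ∃ N₀ : ℕ, ∀ N : ℕ, N₀ ≤ N →
    ∑ p ∈ Nat.primesLE N, (1:ℝ)/p ≤ Real.log (Real.log N) + 0.9 := by
  have ht : Tendsto (fun N : ℕ => Real.log (N:ℝ)) atTop atTop :=
    Real.tendsto_log_atTop.comp tendsto_natCast_atTop_atTop
  have e1 : ∀ᶠ N : ℕ in atTop, 300 ≤ Real.log (N:ℝ) := ht.eventually_ge_atTop 300
  obtain ⟨N₀, hN₀⟩ := eventually_atTop.1 (e1.and (eventually_ge_atTop 2))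
  refine ⟨N₀, fun N hN => ?_⟩
  obtain ⟨hL, hN2⟩ := hN₀ N hN
  set L := Real.log (N:ℝ) with hLd
  have hL0 : 0 < L := by linarith
  have h := mertens_upper_aux (s := 1 + 1/L) (by simp; exact hL0) N hN2 (by
    rw [Real.rpow_def_of_pos (by norm_num)]
    have hl2 := Real.log_two_lt_d9
    have hl2' := Real.log_two_gt_d9
    have : Real.log 2 * -(1+1/L) = -Real.log 2 + (- Real.log 2/L) := by field_simp; ring
    rw [this, Real.exp_add, Real.exp_neg, Real.exp_log (by norm_num)]
    have h1 := Real.add_one_le_exp (-Real.log 2 / L)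
    have h2 : Real.log 2 / L ≤ 1/300 := by
      rw [div_le_div_iff₀ hL0 (by norm_num)]; linarith
    have h3 : -Real.log 2 / L = -(Real.log 2/L) := by ring
    rw [h3] at h1 ⊢
    linarith)
  have e2 : 1 + 1/L - 1 = 1/L := by ring
  rw [e2, one_div_one_div] at h
  have h3 : Real.log (1 + L) ≤ Real.log L + 1/L := by
    have : 1 + L = L * (1 + 1/L) := by field_simp; ring
    rw [this, Real.log_mul hL0.ne' (by positivity)]
    have := Real.log_le_sub_one_of_pos (x := 1+1/L) (by positivity)
    linarith
  have h4 : 1/L * (L + 2) = 1 + 2/L := by field_simp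
  have h5 : 1/L ≤ 1/300 := by
    rw [div_le_div_iff₀ hL0 (by norm_num)]; linarith
  have h6 : 2/L = 2 * (1/L) := by ring
  rw [h4, h6] at h
  linarith

/-- lower Mertens -/
lemma mertens_lower (N : ℕ) (hN : 1 ≤ N) :
    Real.log (Real.log (N+1)) - 1 ≤ ∑ p ∈ Nat.primesLE N, (1:ℝ)/p := by
  have hpb : ∀ {p : ℕ}, p.Prime → ‖powHom 1 p‖ < 1 := by
    intro p hp
    have hp1 : (1:ℝ) < p := by exact_mod_cast hp.one_lt
    change ‖(p:ℝ)^(-1:ℝ)‖ < 1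
    rw [Real.norm_of_nonneg (by positivity)]
    exact Real.rpow_lt_one_of_one_lt_of_neg hp1 (by norm_num)
  obtain ⟨hs, hS⟩ := EulerProduct.summable_and_hasSum_smoothNumbers_prod_primesBelow_geometric
    hpb (N+1)
  have h1 : Real.log (N+1) ≤ ∏ p ∈ Nat.primesLE N, (1 - powHom 1 p)⁻¹ := by
    have h0 := log_add_one_le_harmonic N
    push_cast at h0
    refine h0.trans ?_
    norm_cast
    rw [harmonic_eq_sum_Icc]
    push_cast
    have hmem : ∀ m ∈ Finset.Icc 1 N, m ∈ (N+1).smoothNumbers := by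
      intro m hm
      rw [Finset.mem_Icc] at hm
      rw [Nat.mem_smoothNumbers_iff_forall_le]
      exact ⟨by omega, fun p hp _ _ => by omega⟩
    have h2 : ∑ m ∈ Finset.Icc 1 N, ((m:ℝ))⁻¹ =
        ∑ m ∈ (Finset.Icc 1 N).attach, powHom 1 m := by
      rw [Finset.sum_attach (Finset.Icc 1 N) (fun m => powHom 1 m)]
      apply Finset.sum_congr rfl
      intro m _
      change _ = (m:ℝ)^(-1:ℝ)
      rw [Real.rpow_neg_one]
    rw [h2]
    let e : {x // x ∈ Finset.Icc 1 N} ↪ (N+1).smoothNumbers :=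
      ⟨fun m => ⟨m.1, hmem m.1 m.2⟩, fun a b h => by
        simpa using h⟩
    have h3 : ∑ m ∈ (Finset.Icc 1 N).attach, powHom 1 m =
        ∑ m ∈ (Finset.Icc 1 N).attach.map e, powHom 1 m := by
      rw [Finset.sum_map]; rfl
    rw [h3]
    exact sum_le_hasSum _ (fun i _ => by
      change 0 ≤ ((i:ℕ):ℝ)^(-1:ℝ); positivity) hS
  have hlt : ∀ p ∈ Nat.primesLE N, 0 < 1 - powHom 1 p := by
    intro p hp
    have := hpb (Nat.prime_of_mem_primesLE hp)
    have := (abs_lt.1 this).2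
    linarith
  have hlogpos : 0 < Real.log (N+1) := Real.log_pos (by
    have : (1:ℝ) ≤ N := by exact_mod_cast hN
    linarith)
  have h2 := Real.log_le_log hlogpos h1
  rw [Real.log_prod (fun p hp => inv_ne_zero (hlt p hp).ne')] at h2
  have h3 : ∀ p ∈ Nat.primesLE N, Real.log ((1 - powHom 1 p)⁻¹) ≤
      (1:ℝ)/p + (1/((p:ℝ)-1) - 1/p) := by
    intro p hp
    have hp1 : (1:ℝ) < p := by exact_mod_cast Nat.one_lt_of_mem_primesLE hp
    have e : powHom 1 p = 1/(p:ℝ) := by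
      change (p:ℝ)^(-1:ℝ) = _
      rw [Real.rpow_neg_one, one_div]
    rw [e]
    have hp0 : (0:ℝ) < p := by linarith
    have hp2 : (0:ℝ) < p - 1 := by linarith
    have e2 : (1 - 1/(p:ℝ))⁻¹ = 1 + 1/((p:ℝ)-1) := by
      field_simp; ring
    rw [e2]
    have := Real.log_le_sub_one_of_pos (x := 1 + 1/((p:ℝ)-1)) (by positivity)
    linarith
  have h4 := h2.trans (Finset.sum_le_sum h3)
  rw [Finset.sum_add_distrib] at h4
  have h5 : ∑ p ∈ Nat.primesLE N, (1/((p:ℝ)-1) - 1/p) ≤ 1 := by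
    calc _ ≤ ∑ p ∈ Finset.Icc 2 (N+1), (1/((p:ℝ)-1) - 1/p) := by
          apply Finset.sum_le_sum_of_subset_of_nonneg
          · intro p hp
            rw [Finset.mem_Icc]
            have := Nat.one_lt_of_mem_primesLE hp
            have := Nat.le_of_mem_primesLE hp
            omega
          · intro p hp _
            rw [Finset.mem_Icc] at hp
            have hp1 : (2:ℝ) ≤ p := by exact_mod_cast hp.1
            rw [sub_nonneg]
            apply one_div_le_one_div_of_le <;> linarith
      _ = 1 - 1/((N:ℝ)+1) := by
          clear h4 h3 h2 hlogpos hlt h1 hS hs hpb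
          induction N, hN using Nat.le_induction with
          | base => norm_num
          | succ n hn ih =>
            rw [Finset.sum_Icc_succ_top (by omega), ih]
            push_cast
            have : (0:ℝ) < n + 1 := by positivity
            field_simp; ring
      _ ≤ 1 := by
          have : (0:ℝ) ≤ 1/((N:ℝ)+1) := by positivity
          linarith
  linarith


noncomputable def lagL (k : ℕ) : ℝ :=
  ∑ j ∈ Finset.range (k+1), (k.choose j : ℝ) * (-1)^j / j.factorial
noncomputable def lagE (k : ℕ) : ℝ :=
  ∑ j ∈ Finset.range k, (k.choose (j+1) : ℝ) * (-1)^(j+1) / j.factorial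

lemma lagE_succ (k : ℕ) : lagE (k+1) = lagE k - lagL k := by
  have h : lagE k = ∑ j ∈ Finset.range (k+1), (k.choose (j+1) : ℝ) * (-1)^(j+1) / j.factorial := by
    rw [Finset.sum_range_succ]; simp [lagE]
  rw [h]
  unfold lagE lagL
  rw [← Finset.sum_sub_distrib]
  apply Finset.sum_congr rfl
  intro j _
  rw [Nat.choose_succ_succ]; push_cast; ring

lemma lagL_succ (k : ℕ) : ((k:ℝ)+1) * (lagL (k+1) - lagL k) = lagE (k+1) := by
  have h : lagL k = ∑ j ∈ Finset.range (k+2), (k.choose j : ℝ) * (-1)^j / j.factorial := by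
    rw [Finset.sum_range_succ]; simp [lagL]
  rw [h]
  unfold lagE lagL
  rw [← Finset.sum_sub_distrib, Finset.sum_range_succ']
  simp only [Nat.choose_zero_right, sub_self, add_zero]
  rw [Finset.mul_sum]
  apply Finset.sum_congr rfl
  intro j _
  have h1 : (((k+1).choose (j+1) : ℕ):ℝ) * ((j:ℝ)+1) = ((k:ℝ)+1) * (k.choose j) := by
    exact_mod_cast (Nat.add_one_mul_choose_eq k j).symm
  have h2 : (((k+1).choose (j+1) : ℕ):ℝ) = k.choose j + k.choose (j+1) := by
    rw [Nat.choose_succ_succ]; push_cast; ring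
  rw [Nat.factorial_succ]
  push_cast
  have h3 : (j.factorial : ℝ) ≠ 0 := by positivity
  have h4 : ((j:ℝ)+1) ≠ 0 := by positivity
  rw [← sub_div, ← sub_mul]
  rw [show (((k+1).choose (j+1) : ℕ):ℝ) - (k.choose (j+1)) = k.choose j by rw [h2]; ring]
  rw [mul_div_assoc', div_eq_div_iff (by positivity) h3]
  linear_combination (-(-1)^(j+1) * (j.factorial:ℝ)) * h1

lemma lag_energy (k : ℕ) : lagL (k+2)^2 + lagE (k+2)^2 * ((k:ℝ)+1)/((k:ℝ)+2)^2
    ≤ ((k:ℝ)+1)/((k:ℝ)+2) := by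
  induction k with
  | zero =>
    norm_num [lagL, lagE, Finset.sum_range_succ, Nat.choose, Nat.factorial]
  | succ k ih =>
    have h1 := lagE_succ (k+2)
    have h2 := lagL_succ (k+2)
    push_cast at h1 h2 ⊢
    set K : ℝ := (k:ℝ) with hK
    have hK0 : 0 ≤ K := by positivity
    have e3 : k + 1 + 2 = k + 2 + 1 := by ring
    rw [e3]
    set a := lagL (k+2)
    set b := lagE (k+2)
    have h3 : lagL (k+2+1) = a + (b - a)/(K+3) := by
      rw [h1] at h2
      field_simp; linarith
    rw [h3, h1]
    have e : (a + (b - a)/(K+3))^2 + (b-a)^2*(K+1+1)/(K+1+2)^2 =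
        (K+2)/(K+3) * (a^2 + b^2/(K+2)) := by
      field_simp; ring
    rw [e]
    have h6 : a^2 + b^2/(K+2) ≤ 1 := by
      have : a^2 + b^2/(K+2) ≤ (K+2)/(K+1) * (a^2 + b^2*(K+1)/(K+2)^2) := by
        have : (K+2)/(K+1) * (a^2 + b^2*(K+1)/(K+2)^2) = a^2 + b^2/(K+2) + a^2/(K+1) := by
          field_simp; ring
        rw [this]
        have : 0 ≤ a^2/(K+1) := by positivity
        linarith
      calc _ ≤ _ := this
        _ ≤ (K+2)/(K+1) * ((K+1)/(K+2)) := by gcongr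
        _ = 1 := by field_simp
    calc (K+2)/(K+3) * (a^2 + b^2/(K+2)) ≤ (K+2)/(K+3) * 1 := by gcongr
      _ = (K+1+1)/(K+1+2) := by ring_nf

lemma lagL_abs (k : ℕ) : |lagL k| ≤ 1 := by
  match k with
  | 0 => norm_num [lagL]
  | 1 => norm_num [lagL, Finset.sum_range_succ]
  | k+2 =>
    have h := lag_energy k
    have h2 : ((k:ℝ)+1)/((k:ℝ)+2) ≤ 1 := by
      rw [div_le_one (by positivity)]; linarith
    have h3 : 0 ≤ lagE (k+2)^2 * ((k:ℝ)+1)/((k:ℝ)+2)^2 := by positivity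
    rw [← sq_le_one_iff_abs_le_one]; linarith

lemma lagL_one : lagL 1 = 0 := by norm_num [lagL, Finset.sum_range_succ]
lemma lagL_zero : lagL 0 = 1 := by norm_num [lagL]

lemma J0_summable (w : ℂ) : Summable (fun n : ℕ => ‖w ^ n / ((n.factorial : ℂ)) ^ 2‖) := by
  refine Summable.of_nonneg_of_le (fun n => norm_nonneg _) (fun n => ?_)
    (Real.summable_pow_div_factorial ‖w‖)
  rw [norm_div, norm_pow, norm_pow, Complex.norm_natCast]
  have : (1:ℝ) ≤ n.factorial := by exact_mod_cast Nat.one_le_iff_ne_zero.2 (Nat.factorial_ne_zero n)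
  gcongr
  nlinarith

lemma phifun_eq (z : ℂ) : phifun z = ∑' k : ℕ, ((-1)^k * lagL k / k.factorial : ℝ) * z^k := by
  unfold phifun J0twoISqrt
  have hexp : Complex.exp (-z) = ∑' n : ℕ, (-z)^n / n.factorial := by
    rw [Complex.exp_eq_exp_ℂ, NormedSpace.exp_eq_tsum_div]
  have hs1 : Summable (fun n : ℕ => ‖(-z)^n / (n.factorial : ℂ)‖) :=
    NormedSpace.norm_expSeries_div_summable (-z)
  rw [hexp, mul_comm, tsum_mul_tsum_eq_tsum_sum_antidiagonal_of_summable_norm (J0_summable z) hs1]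
  apply tsum_congr
  intro k
  rw [Finset.Nat.sum_antidiagonal_eq_sum_range_succ_mk]
  unfold lagL
  push_cast
  rw [Finset.mul_sum, Finset.sum_div, Finset.sum_mul]
  apply Finset.sum_congr rfl
  intro j hj
  have hj' : j ≤ k := by simpa [Nat.lt_succ_iff] using hj
  obtain ⟨m, rfl⟩ := Nat.exists_eq_add_of_le hj'
  have h1 : ((j+m).choose j : ℂ) * j.factorial * m.factorial = (j+m).factorial := by
    have := Nat.choose_mul_factorial_mul_factorial (Nat.le_add_right j m)
    rw [Nat.add_sub_cancel_left] at this
    exact_mod_cast this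
  have f1 : (j.factorial : ℂ) ≠ 0 := by exact_mod_cast Nat.factorial_ne_zero _
  have f2 : (m.factorial : ℂ) ≠ 0 := by exact_mod_cast Nat.factorial_ne_zero _
  have f3 : ((j+m).factorial : ℂ) ≠ 0 := by exact_mod_cast Nat.factorial_ne_zero _
  have h4 : ((-1:ℂ))^j * (-1)^j = 1 := by rw [← mul_pow]; norm_num
  rw [Nat.add_sub_cancel_left, neg_pow]
  rw [← h1]
  have f4 : ((j+m).choose j : ℂ) ≠ 0 := by
    exact_mod_cast (Nat.choose_pos (Nat.le_add_right j m)).ne'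
  field_simp
  rw [pow_add, pow_add]
  linear_combination (-(z^j * z^m * (-1)^m)) * h4

lemma phifun_norm_le_sub (z : ℂ) : ‖phifun z‖ ≤ Real.exp ‖z‖ - ‖z‖ := by
  rw [phifun_eq]
  have hsum : Summable (fun k : ℕ => ‖z‖^k / k.factorial) := Real.summable_pow_div_factorial ‖z‖
  have hb : ∀ k : ℕ, ‖(((-1)^k * lagL k / k.factorial : ℝ) : ℂ) * z^k‖ ≤
      ‖z‖^k/k.factorial - (if k = 1 then ‖z‖ else 0) := by
    intro k
    rw [norm_mul, norm_pow, Complex.norm_real, Real.norm_eq_abs, abs_div, abs_mul, abs_pow]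
    simp only [abs_neg, abs_one, one_pow, one_mul, Nat.abs_cast]
    split_ifs with h
    · subst h; simp [lagL_one]
    · rw [sub_zero, div_mul_eq_mul_div]
      gcongr
      have := lagL_abs k
      have h2 : 0 ≤ ‖z‖^k := by positivity
      nlinarith
  have hsum2 : HasSum (fun k : ℕ => ‖z‖^k/k.factorial - (if k = 1 then ‖z‖ else 0))
      (Real.exp ‖z‖ - ‖z‖) := by
    apply HasSum.sub
    · have := NormedSpace.expSeries_div_hasSum_exp (𝔸 := ℝ) ‖z‖
      rwa [← Real.exp_eq_exp_ℝ] at this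
    · exact hasSum_ite_eq 1 ‖z‖
  exact tsum_of_norm_bounded hsum2 hb

lemma phifun_norm_le (z : ℂ) : ‖phifun z‖ ≤ Real.exp ‖z‖ := by
  have := phifun_norm_le_sub z
  have := norm_nonneg z
  linarith

lemma phifun_norm_le_sq (z : ℂ) : ‖phifun z‖ ≤ Real.exp (‖z‖^2) := by
  by_cases h : ‖z‖ ≤ 1
  · refine (phifun_norm_le_sub z).trans ?_
    have h1 := Real.exp_bound' (norm_nonneg z) h (n := 2) (by norm_num)
    norm_num [Finset.sum_range_succ, Nat.factorial] at h1
    have := Real.add_one_le_exp (‖z‖^2)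
    nlinarith [norm_nonneg z]
  · push Not at h
    refine (phifun_norm_le z).trans (Real.exp_le_exp.2 ?_)
    nlinarith

lemma J0_differentiable : Differentiable ℂ J0twoISqrt := by
  intro w
  have hopen : IsOpen (Metric.ball (0:ℂ) (‖w‖+1)) := Metric.isOpen_ball
  have : DifferentiableOn ℂ J0twoISqrt (Metric.ball (0:ℂ) (‖w‖+1)) := by
    apply Complex.differentiableOn_tsum_of_summable_norm
      (Real.summable_pow_div_factorial (‖w‖+1)) _ hopen
    · intro n z hz
      rw [norm_div, norm_pow, norm_pow, Complex.norm_natCast]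
      have : (1:ℝ) ≤ n.factorial := by
        exact_mod_cast Nat.one_le_iff_ne_zero.2 (Nat.factorial_ne_zero n)
      have hz' : ‖z‖ ≤ ‖w‖+1 := by simpa using (mem_ball_zero_iff.1 hz).le
      gcongr
      nlinarith
    · intro n
      fun_prop
  exact (this w (by simp)).differentiableAt (hopen.mem_nhds (by simp))

lemma phifun_differentiable : Differentiable ℂ phifun := by
  unfold phifun
  have := J0_differentiable
  fun_prop

lemma Phifun_differentiable (y : ℝ) : Differentiable ℂ (Phifun y) := by
  unfold Phifun
  have := phifun_differentiable
  apply Differentiable.fun_finsetProd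
  intro p _
  exact phifun_differentiable.comp (differentiable_id.div_const _)


lemma sum_inv_sq_tail (M : ℕ) (hM : 1 ≤ M) (s : Finset ℕ) (hs : ∀ p ∈ s, M < p) :
    ∑ p ∈ s, (1:ℝ)/(p:ℝ)^2 ≤ 1/M := by
  obtain ⟨N, hN⟩ := s.exists_nat_subset_range
  have hM0 : (0:ℝ) < M := by exact_mod_cast hM
  have h1 : ∀ K : ℕ, ∑ p ∈ Finset.Ioc M (M+K), (1:ℝ)/(p:ℝ)^2 ≤ 1/M - 1/((M:ℝ)+K) := by
    intro K
    induction K with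
    | zero => simp
    | succ K ih =>
      rw [← add_assoc, Finset.sum_Ioc_succ_top (by omega)]
      push_cast
      have : (1:ℝ)/((M:ℝ)+K+1)^2 ≤ 1/((M:ℝ)+K) - 1/((M:ℝ)+(K+1)) := by
        have hK : (0:ℝ) ≤ K := by positivity
        have hh : 0 < (M:ℝ)+K := by positivity
        rw [div_sub_div _ _ (by positivity) (by positivity), div_le_div_iff₀ (by positivity) (by positivity)]
        nlinarith
      linarith
  calc _ ≤ ∑ p ∈ Finset.Ioc M (M+N), (1:ℝ)/(p:ℝ)^2 := by
        apply Finset.sum_le_sum_of_subset_of_nonneg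
        · intro p hp
          have := hs p hp
          have := Finset.mem_range.1 (hN hp)
          rw [Finset.mem_Ioc]; omega
        · intros; positivity
    _ ≤ _ := h1 N
    _ ≤ _ := by
      have : 0 ≤ 1/((M:ℝ)+N) := by positivity
      linarith

lemma mem_primesLe {y : ℝ} {p : ℕ} (hp : p ∈ primesLe y) : p.Prime := by
  unfold primesLe at hp
  exact (Finset.mem_filter.1 hp).2

lemma Phi_norm (y R : ℝ) (M : ℕ) (hM : 1 ≤ M) (z : ℂ) (hz : ‖z‖ = R) :
    ‖Phifun y z‖ ≤ Real.exp (R * ∑ p ∈ Nat.primesLE M, (1:ℝ)/p + R^2 / M) := by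
  have hR : 0 ≤ R := hz ▸ norm_nonneg z
  unfold Phifun
  rw [norm_prod]
  have hb : ∀ p ∈ primesLe y, ‖phifun (z / (p:ℂ))‖ ≤
      Real.exp (if p ≤ M then R * (1/(p:ℝ)) else R^2 * (1/(p:ℝ)^2)) := by
    intro p hp
    split_ifs
    · refine (phifun_norm_le _).trans (le_of_eq ?_)
      rw [norm_div, hz, Complex.norm_natCast, mul_one_div]
    · refine (phifun_norm_le_sq _).trans (le_of_eq ?_)
      rw [norm_div, hz, Complex.norm_natCast, mul_one_div, div_pow]
  refine (Finset.prod_le_prod (fun _ _ => norm_nonneg _) hb).trans ?_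
  rw [← Real.exp_sum]
  apply Real.exp_le_exp.2
  rw [Finset.sum_ite, ← Finset.mul_sum, ← Finset.mul_sum]
  have h1 : ∑ p ∈ (primesLe y).filter (· ≤ M), 1/(p:ℝ) ≤ ∑ p ∈ Nat.primesLE M, (1:ℝ)/p := by
    apply Finset.sum_le_sum_of_subset_of_nonneg
    · intro p hp
      rw [Finset.mem_filter] at hp
      rw [Nat.mem_primesLE]
      exact ⟨hp.2, mem_primesLe hp.1⟩
    · intros; positivity
  have h2 := sum_inv_sq_tail M hM ((primesLe y).filter (¬ · ≤ M)) (by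
    intro p hp
    rw [Finset.mem_filter] at hp
    omega)
  have h3 : R^2 / M = R^2 * (1/M) := by ring
  rw [h3]
  gcongr

lemma Phi_norm_sigma (y : ℝ) (z : ℂ) : ‖Phifun y z‖ ≤ Real.exp (‖z‖ * sigmay y) := by
  unfold Phifun sigmay
  rw [norm_prod, Finset.mul_sum, Real.exp_sum]
  apply Finset.prod_le_prod (fun _ _ => norm_nonneg _)
  intro p hp
  refine (phifun_norm_le _).trans (le_of_eq ?_)
  rw [norm_div, Complex.norm_natCast, mul_one_div]

lemma coef_bound (y R B : ℝ) (hR : 0 < R) (n : ℕ) (h : ∀ z : ℂ, ‖z‖ = R → ‖Phifun y z‖ ≤ B) :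
    |PhiCoefR y n| ≤ B / R^n := by
  have h1 := Complex.norm_iteratedDeriv_le_of_forall_mem_sphere_norm_le (c := 0) (R := R) (C := B)
    (f := Phifun y) n hR (Phifun_differentiable y).diffContOnCl
    (fun z hz => h z (by simpa using hz))
  unfold PhiCoefR
  refine (Complex.abs_re_le_norm _).trans ?_
  unfold PhiCoef
  rw [norm_div, Complex.norm_natCast, div_le_iff₀ (by positivity)]
  refine h1.trans (le_of_eq ?_)
  ring

noncomputable def Lf (n : ℕ) : ℝ := Real.log (Real.log ((n:ℝ)+1)) + 1

lemma Lf_mono {m n : ℕ} (hm : 1 ≤ m) (h : m ≤ n) : Lf m ≤ Lf n := by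
  unfold Lf
  have hm' : (1:ℝ) ≤ m := by exact_mod_cast hm
  have h' : (m:ℝ) ≤ n := by exact_mod_cast h
  have h2 : 0 < Real.log ((m:ℝ)+1) := Real.log_pos (by linarith)
  have h3 := Real.log_le_log (by linarith) (by linarith : (m:ℝ)+1 ≤ n+1)
  have := Real.log_le_log h2 h3
  linarith

lemma Lf_ge {n : ℕ} (hn : 1 ≤ n) : 1/2 ≤ Lf n := by
  refine le_trans ?_ (Lf_mono le_rfl hn)
  unfold Lf
  norm_num
  have h1 := Real.log_two_gt_d9
  have h2 := Real.one_sub_inv_le_log_of_pos (x := Real.log 2) (by linarith)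
  have h3 : (Real.log 2)⁻¹ ≤ 3/2 := by
    rw [inv_le_comm₀ (by linarith) (by norm_num)]; norm_num; linarith
  linarith

lemma factorial_le_stirling (n : ℕ) (hn : 1 ≤ n) :
    (n.factorial : ℝ) ≤ n * Real.exp 1 * (n / Real.exp 1)^n := by
  induction n, hn using Nat.le_induction with
  | base => simp
  | succ n hn ih =>
    rw [Nat.factorial_succ]
    push_cast
    have hn0 : (0:ℝ) < n := by exact_mod_cast hn
    have key : Real.exp 1 * (n:ℝ)^(n+1) ≤ ((n:ℝ)+1)^(n+1) := by
      have h1 : 1 ≤ ((n:ℝ)+1) * Real.log (((n:ℝ)+1)/n) := by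
        have := Real.one_sub_inv_le_log_of_pos (x := ((n:ℝ)+1)/n) (by positivity)
        have h2 : 1 - (((n:ℝ)+1)/n)⁻¹ = 1/((n:ℝ)+1) := by field_simp; ring
        rw [h2] at this
        calc (1:ℝ) = ((n:ℝ)+1) * (1/((n:ℝ)+1)) := by field_simp
          _ ≤ _ := by gcongr
      have h2 : Real.exp 1 ≤ (((n:ℝ)+1)/n)^(n+1) := by
        rw [← Real.exp_log (x := ((n:ℝ)+1)/n) (by positivity), ← Real.exp_nat_mul]
        apply Real.exp_le_exp.2
        push_cast; exact h1
      calc _ ≤ (((n:ℝ)+1)/n)^(n+1) * (n:ℝ)^(n+1) := by gcongr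
        _ = _ := by rw [← mul_pow]; congr 1; field_simp
    calc ((n:ℝ)+1) * n.factorial ≤ ((n:ℝ)+1) * (n * Real.exp 1 * (n / Real.exp 1)^n) := by gcongr
      _ = ((n:ℝ)+1) * (Real.exp 1 * (n:ℝ)^(n+1)) / (Real.exp 1)^n := by
          rw [div_pow, pow_succ]; ring
      _ ≤ ((n:ℝ)+1) * (((n:ℝ)+1)^(n+1)) / (Real.exp 1)^n := by gcongr
      _ = _ := by rw [div_pow, pow_succ (Real.exp 1)]; field_simp

lemma coef_large : ∃ n₂ : ℕ, ∀ n : ℕ, n₂ ≤ n → ∀ y : ℝ,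
    (n.factorial : ℝ) * |PhiCoefR y n| ≤ Real.exp 1 * (Lf n)^n := by
  obtain ⟨N₀, hN₀⟩ := mertens_upper
  have ht : Tendsto (fun N : ℕ => Real.log (Real.log ((N:ℝ)+1)) + 1) atTop atTop := by
    apply tendsto_atTop_add_const_right
    apply Real.tendsto_log_atTop.comp
    apply Real.tendsto_log_atTop.comp
    exact tendsto_atTop_add_const_right _ _ tendsto_natCast_atTop_atTop
  have e1 : ∀ᶠ n : ℕ in atTop, 20 ≤ Lf n := ht.eventually_ge_atTop 20
  have e2 : ∀ᶠ n : ℕ in atTop, 40 * (Real.log n)^2 ≤ n := by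
    have := (isLittleO_pow_log_id_atTop (n := 2)).bound (c := 1/40) (by norm_num)
    have := tendsto_natCast_atTop_atTop (R := ℝ) |>.eventually this
    filter_upwards [this] with n hn
    simp at hn
    linarith
  obtain ⟨n₂, hn₂⟩ := eventually_atTop.1 (e1.and (e2.and ((eventually_ge_atTop N₀).and (eventually_ge_atTop 3))))
  refine ⟨n₂, fun n hn y => ?_⟩
  obtain ⟨hL, hlog, hnN, hn3⟩ := hn₂ n hn
  have hn3' : (3:ℝ) ≤ n := by exact_mod_cast hn3
  have hn0 : (0:ℝ) < n := by linarith
  set L := Lf n with hLd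
  have hL0 : 0 < L := by linarith
  have hlogn : 1 < Real.log n := by
    rw [Real.lt_log_iff_exp_lt hn0]
    have := Real.exp_one_lt_d9
    linarith
  have hM := hN₀ n hnN
  have hll : Real.log (Real.log n) + 1 ≤ L := by
    rw [hLd]; unfold Lf
    have := Real.log_le_log (by linarith) (Real.log_le_log hn0 (by linarith : (n:ℝ) ≤ n+1))
    linarith
  set R := (n:ℝ) / L with hR
  have hR0 : 0 < R := by positivity
  have hB : ∀ z : ℂ, ‖z‖ = R → ‖Phifun y z‖ ≤ Real.exp (n - 0.05 * R) := by
    intro z hz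
    refine (Phi_norm y R n (by omega) z hz).trans (Real.exp_le_exp.2 ?_)
    have h1 : R^2 / n = R * (1/L) := by rw [hR]; field_simp
    have h2 : (n:ℝ) = R * L := by rw [hR]; field_simp
    rw [h1]
    conv_rhs => rw [h2]
    have h3 : 1/L ≤ 1/20 := one_div_le_one_div_of_le (by norm_num) hL
    have h4 : ∑ p ∈ Nat.primesLE n, (1:ℝ)/p ≤ L - 0.1 := by linarith
    have h5 := mul_le_mul_of_nonneg_left h4 hR0.le
    have h6 := mul_le_mul_of_nonneg_left h3 hR0.le
    linarith
  have hc := coef_bound y R _ hR0 n hB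
  have hf := factorial_le_stirling n (by omega)
  have hLle : L ≤ 2 * Real.log n := by
    have h1 : L ≤ Real.log ((n:ℝ)+1) := by
      rw [hLd]; unfold Lf
      have := Real.log_le_sub_one_of_pos (x := Real.log ((n:ℝ)+1)) (Real.log_pos (by linarith))
      linarith
    have h2 : Real.log ((n:ℝ)+1) ≤ Real.log ((n:ℝ)^2) := Real.log_le_log (by linarith) (by nlinarith)
    rw [Real.log_pow] at h2
    push_cast at h2
    linarith
  have hRl : Real.log n ≤ 0.05 * R := by
    have : 20 * Real.log n ≤ R := by
      rw [hR, le_div_iff₀ hL0]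
      nlinarith
    linarith
  have hexp : (n:ℝ) * Real.exp (- (0.05 * R)) ≤ 1 := by
    rw [Real.exp_neg, ← div_eq_mul_inv, div_le_one (Real.exp_pos _)]
    calc (n:ℝ) = Real.exp (Real.log n) := (Real.exp_log hn0).symm
      _ ≤ _ := Real.exp_le_exp.2 hRl
  calc (n.factorial : ℝ) * |PhiCoefR y n|
      ≤ (n * Real.exp 1 * (n / Real.exp 1)^n) * (Real.exp (n - 0.05 * R) / R^n) := by gcongr
    _ = Real.exp 1 * L^n * (n * Real.exp (- (0.05 * R))) := by
        rw [sub_eq_add_neg, Real.exp_add, div_pow, hR, div_pow, ← Real.exp_nat_mul, mul_one]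
        have := Real.exp_pos (n:ℝ)
        field_simp
    _ ≤ Real.exp 1 * L^n * 1 := by gcongr
    _ = _ := by ring

lemma coef_main : ∃ C₁ : ℝ, 0 < C₁ ∧ ∀ n : ℕ, 1 ≤ n → ∀ y : ℝ,
    (n.factorial : ℝ) * |PhiCoefR y n| ≤ C₁ * (Lf n)^n := by
  obtain ⟨n₂, h⟩ := coef_large
  refine ⟨Real.exp 1 * (n₂.factorial * 2^n₂ + 1), by positivity, fun n hn y => ?_⟩
  have hL := Lf_ge hn
  have hLp : 0 < Lf n := by linarith
  by_cases hc : n₂ ≤ n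
  · refine (h n hc y).trans ?_
    gcongr
    have : (0:ℝ) ≤ n₂.factorial * 2^n₂ := by positivity
    have := Real.exp_pos 1
    nlinarith
  · push Not at hc
    have h1 := coef_bound y 1 (Real.exp 1) one_pos n (fun z hz => by
      refine (Phi_norm y 1 1 le_rfl z hz).trans (Real.exp_le_exp.2 ?_)
      simp)
    rw [one_pow, div_one] at h1
    have h2 : (n.factorial : ℝ) ≤ n₂.factorial := by exact_mod_cast Nat.factorial_le hc.le
    have h3 : 1 ≤ 2^n₂ * (Lf n)^n := by
      calc (1:ℝ) ≤ 2^n₂ * (1/2)^n := by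
            rw [one_div, inv_pow, ← div_eq_mul_inv, one_le_div (by positivity)]
            exact pow_le_pow_right₀ (by norm_num) hc.le
        _ ≤ _ := by gcongr
    calc (n.factorial : ℝ) * |PhiCoefR y n| ≤ n₂.factorial * Real.exp 1 := by gcongr
      _ ≤ n₂.factorial * Real.exp 1 * (2^n₂ * (Lf n)^n) := by
          apply le_mul_of_one_le_right (by positivity) h3
      _ ≤ _ := by
          have : 0 ≤ Real.exp 1 * (Lf n)^n := by positivity
          nlinarith

lemma coef_zero (y : ℝ) : PhiCoefR y 0 = 1 := by
  unfold PhiCoefR PhiCoef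
  simp [Phifun, phifun, J0twoISqrt]
  have : (∑' n : ℕ, (0:ℂ)^n / ((n.factorial : ℂ))^2) = 1 := by
    rw [tsum_eq_single 0]
    · simp
    · intro n hn; simp [hn]
  simp [this]

/-- Taylor series of Φ at real points -/
lemma Phi_hasSum (y x : ℝ) : HasSum (fun n => PhiCoefR y n * x^n) (Phifun y x).re := by
  have h := Complex.hasSum_taylorSeries_of_entire (Phifun_differentiable y) 0 x
  have h2 := Complex.hasSum_re h
  convert h2 using 2 with n
  unfold PhiCoefR PhiCoef
  rw [sub_zero, smul_eq_mul, smul_eq_mul]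
  rw [show ((n.factorial : ℂ))⁻¹ * ((x:ℂ)^n * iteratedDeriv n (Phifun y) 0) =
    ((x^n : ℝ) : ℂ) * (iteratedDeriv n (Phifun y) 0 / (n.factorial : ℂ)) by push_cast; ring]
  rw [Complex.re_ofReal_mul]; ring

lemma Phi_real (y x : ℝ) : (Phifun y x) = ((Phifun y x).re : ℂ) := by
  have h1 : ∀ x : ℝ, ∃ r : ℝ, phifun x = r := by
    intro x
    refine ⟨∑' k : ℕ, ((-1)^k * lagL k / k.factorial : ℝ) * x^k, ?_⟩
    rw [phifun_eq, Complex.ofReal_tsum]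
    push_cast
    rfl
  choose r hr using h1
  have h2 : Phifun y x = ((∏ p ∈ primesLe y, r (x / p) : ℝ) : ℂ) := by
    unfold Phifun
    push_cast
    apply Finset.prod_congr rfl
    intro p _
    rw [← hr]; push_cast; rfl
  rw [h2, Complex.ofReal_re]


/-- `e^{-u^2/2} H_m(u)` -/
noncomputable def hf (m : ℕ) (u : ℝ) : ℝ := Real.exp (-u ^ 2 / 2) * hermiteEval m u

lemma integrable_pow_gauss (m : ℕ) : Integrable (fun u : ℝ => u ^ m * Real.exp (-u ^ 2 / 2)) := by
  have h := integrable_rpow_mul_exp_neg_mul_sq (b := 1/2) (by norm_num) (s := (m:ℝ))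
    (by have : (0:ℝ) ≤ m := Nat.cast_nonneg m
        linarith)
  refine h.congr (Filter.Eventually.of_forall fun u => ?_)
  simp only [Real.rpow_natCast]
  congr 2; ring

lemma integrable_poly_gauss (P : Polynomial ℝ) :
    Integrable (fun u : ℝ => Polynomial.eval u P * Real.exp (-u ^ 2 / 2)) := by
  have : (fun u : ℝ => Polynomial.eval u P * Real.exp (-u ^ 2 / 2)) =
      fun u => ∑ i ∈ Finset.range (P.natDegree + 1), P.coeff i * (u ^ i * Real.exp (-u ^ 2 / 2)) := by
    funext u
    rw [Polynomial.eval_eq_sum_range, Finset.sum_mul]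
    exact Finset.sum_congr rfl fun i _ => by ring
  rw [this]
  exact integrable_finsetSum _ fun i _ => (integrable_pow_gauss i).const_mul _

lemma hf_integrable (m : ℕ) : Integrable (hf m) := by
  have := integrable_poly_gauss ((Polynomial.hermite m).map (Int.castRingHom ℝ))
  refine this.congr (Filter.Eventually.of_forall fun u => ?_)
  simp only [hf, hermiteEval, Polynomial.eval_map, Polynomial.aeval_def]
  rw [mul_comm]; rfl

lemma gauss_deriv (u : ℝ) :
    HasDerivAt (fun u : ℝ => Real.exp (-u ^ 2 / 2)) (Real.exp (-u^2/2) * (-u)) u := by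
  have h0 : HasDerivAt (fun u : ℝ => -u^2/2) (-u) u :=
    (((hasDerivAt_pow 2 u).fun_neg).div_const 2).congr_deriv (by push_cast; ring)
  exact h0.exp

lemma hf_hasDeriv (m : ℕ) (u : ℝ) : HasDerivAt (hf m) (-hf (m+1) u) u := by
  have h1 := gauss_deriv u
  have h2 : HasDerivAt (fun u : ℝ => hermiteEval m u)
      (Polynomial.aeval u (Polynomial.derivative (Polynomial.hermite m))) u :=
    Polynomial.hasDerivAt_aeval _ _
  refine (h1.fun_mul h2).congr_deriv ?_
  simp only [hf, hermiteEval, Polynomial.hermite_succ, map_sub, map_mul, Polynomial.aeval_X]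
  ring

lemma hf_continuous (m : ℕ) : Continuous (hf m) :=
  continuous_iff_continuousAt.2 fun u => (hf_hasDeriv m u).continuousAt

lemma hf_zero (u : ℝ) : hf 0 u = Real.exp (-u^2/2) := by
  simp [hf, hermiteEval, Polynomial.hermite_zero]

lemma integrable_exp_mul {q : ℝ → ℂ} (hq : Integrable q) (ξ : ℝ) :
    Integrable (fun u : ℝ => Complex.exp (I * ξ * u) * q u) := by
  refine hq.bdd_mul (c := 1) (Continuous.aestronglyMeasurable (by fun_prop)) (Filter.Eventually.of_forall fun u => ?_)
  have : I * (ξ:ℂ) * u = I * ((ξ * u : ℝ) : ℂ) := by push_cast; ring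
  rw [this, Complex.norm_exp_I_mul_ofReal]

lemma hf_fourier (m : ℕ) (ξ : ℝ) :
    ∫ u : ℝ, Complex.exp (I * ξ * u) * (hf m u : ℂ) =
      Real.sqrt (2 * π) * (I * ξ) ^ m * Real.exp (-ξ^2/2) := by
  induction m with
  | zero =>
    have h := fourierIntegral_gaussian (b := 1/2) (by norm_num) (ξ:ℂ)
    have e : (fun u : ℝ => Complex.exp (I * ξ * u) * (hf 0 u : ℂ)) =
        fun x : ℝ => Complex.exp (I * ξ * x) * Complex.exp (-(1/2 : ℂ) * x ^ 2) := by
      funext u; rw [hf_zero]; push_cast; congr 2; ring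
    rw [e, h]
    have h2 : ((π : ℂ) / (1/2)) ^ (1/2 : ℂ) = (Real.sqrt (2*π) : ℂ) := by
      have : ((π : ℂ) / (1/2)) = ((2 * π : ℝ) : ℂ) := by push_cast; ring
      rw [this, show (1/2 : ℂ) = ((1/2 : ℝ) : ℂ) by norm_num,
        ← Complex.ofReal_cpow (by positivity), Real.sqrt_eq_rpow]
    rw [h2]; push_cast; congr 1
    · simp
    · congr 1; ring
  | succ m ih =>
    have h := integral_mul_deriv_eq_deriv_mul_of_integrable
      (u := fun x : ℝ => Complex.exp (I * ξ * x)) (v := fun x : ℝ => (hf m x : ℂ))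
      (u' := fun x : ℝ => Complex.exp (I * ξ * x) * (I * ξ)) (v' := fun x : ℝ => ((-hf (m+1) x : ℝ) : ℂ))
      (fun x _ => by
        have : HasDerivAt (fun x : ℝ => I * (ξ:ℂ) * x) (I * ξ) x := by
          simpa using (Complex.ofRealCLM.hasDerivAt (x := x)).const_mul (I * (ξ:ℂ))
        exact this.cexp)
      (fun x _ => (hf_hasDeriv m x).ofReal_comp)
      (integrable_exp_mul (hf_integrable (m+1)).neg.ofReal ξ)
      (by
        have := (integrable_exp_mul (hf_integrable m).ofReal ξ).const_mul (I * ξ)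
        refine this.congr (Filter.Eventually.of_forall fun u => ?_)
        simp only [Pi.mul_apply, Complex.coe_algebraMap]
        ring)
      (integrable_exp_mul (hf_integrable m).ofReal ξ)
    have e1 : (fun x : ℝ => Complex.exp (I * ξ * x) * (((-hf (m+1) x : ℝ)) : ℂ)) =
      fun x : ℝ => -(Complex.exp (I * ξ * x) * (hf (m+1) x : ℂ)) := by
      funext x; push_cast; ring
    have e2 : (fun x : ℝ => Complex.exp (I * ξ * x) * (I * ξ) * (hf m x : ℂ)) =
      fun x : ℝ => (I * ξ) * (Complex.exp (I * ξ * x) * (hf m x : ℂ)) := by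
      funext x; ring
    rw [e1, e2, integral_neg, integral_const_mul, ih] at h
    have h' := neg_injective h
    rw [h']; ring

/-- inverse transform -/
noncomputable def kf (m : ℕ) (u : ℝ) : ℂ :=
  ∫ ξ : ℝ, Complex.exp (-(I * u * ξ)) * ((I * ξ) ^ m * (Real.exp (-ξ^2/2) : ℂ))

lemma kf_integrable (m : ℕ) (u : ℝ) : Integrable
    (fun ξ : ℝ => Complex.exp (-(I * u * ξ)) * ((I * ξ) ^ m * (Real.exp (-ξ^2/2) : ℂ))) := by
  have h := ((integrable_pow_gauss m).ofReal (𝕜 := ℂ)).const_mul (I^m)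
  have h2 := integrable_exp_mul h (-u)
  refine h2.congr (Filter.Eventually.of_forall fun u => ?_)
  simp only [Complex.coe_algebraMap]
  push_cast
  congr 1
  · congr 1; ring
  · ring

lemma norm_exp_aux (a b : ℝ) : ‖Complex.exp (-(I * a * b))‖ = 1 := by
  have : -(I * (a:ℂ) * b) = I * ((-(a * b) : ℝ) : ℂ) := by push_cast; ring
  rw [this, Complex.norm_exp_I_mul_ofReal]

lemma kf_hasDeriv (m : ℕ) (u : ℝ) : HasDerivAt (kf m) (-kf (m+1) u) u := by
  have h := hasDerivAt_integral_of_dominated_loc_of_deriv_le (μ := volume) (s := Set.univ)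
    (F := fun (u : ℝ) (ξ : ℝ) => Complex.exp (-(I * u * ξ)) * ((I * ξ) ^ m * (Real.exp (-ξ^2/2) : ℂ)))
    (F' := fun (u : ℝ) (ξ : ℝ) => -(Complex.exp (-(I * u * ξ)) * ((I * ξ) ^ (m+1) * (Real.exp (-ξ^2/2) : ℂ))))
    (bound := fun ξ => ‖ξ ^ (m+1) * Real.exp (-ξ^2/2)‖) (x₀ := u)
    (Filter.univ_mem)
    (Filter.Eventually.of_forall fun x => (kf_integrable m x).aestronglyMeasurable)
    (kf_integrable m u) (kf_integrable (m+1) u).neg.aestronglyMeasurable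
    (Filter.Eventually.of_forall fun ξ x _ => by
      rw [norm_neg, norm_mul, norm_exp_aux, one_mul, norm_mul, norm_pow, norm_mul, Complex.norm_I,
        one_mul, Complex.norm_real, Complex.norm_real, norm_mul, norm_pow])
    (integrable_pow_gauss (m+1)).norm
    (Filter.Eventually.of_forall fun ξ x _ => by
      have h1 : HasDerivAt (fun x : ℝ => -(I * (x:ℂ) * ξ)) (-(I * ξ)) x := by
        simpa using (((Complex.ofRealCLM.hasDerivAt (x := x)).const_mul I).mul_const (ξ:ℂ)).fun_neg
      have h2 := h1.cexp.mul_const ((I * (ξ:ℂ)) ^ m * (Real.exp (-ξ^2/2) : ℂ))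
      exact h2.congr_deriv (by ring))
  have h2 := h.2
  rw [integral_neg] at h2
  exact h2

lemma hf_eq_kf (m : ℕ) (u : ℝ) : (Real.sqrt (2*π) : ℂ) * (hf m u : ℂ) = kf m u := by
  induction m generalizing u with
  | zero =>
    have h := hf_fourier 0 (-u)
    rw [hf_zero]
    simp only [hf_zero] at h
    simp only [kf]
    have e : (fun ξ : ℝ => Complex.exp (-(I * u * ξ)) * ((I * ξ) ^ 0 * (Real.exp (-ξ^2/2) : ℂ))) =
       fun ξ : ℝ => Complex.exp (I * ((-u : ℝ):ℂ) * ξ) * ((Real.exp (-ξ^2/2) : ℝ) : ℂ) := by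
      funext ξ; push_cast; rw [pow_zero, one_mul]; congr 2; ring
    rw [e, h]; simp
  | succ m ih =>
    have h1 := (hf_hasDeriv m u).ofReal_comp.const_mul (Real.sqrt (2*π) : ℂ)
    have h2 := kf_hasDeriv m u
    have e : (fun y : ℝ => (Real.sqrt (2*π) : ℂ) * ((hf m y : ℝ) : ℂ)) = kf m := funext ih
    rw [e] at h1
    have := h1.unique h2
    push_cast at this
    linear_combination -this

lemma gauss_moment_rec (m : ℕ) : ∫ u : ℝ, u ^ (m+2) * Real.exp (-u^2/2) =
    (m+1) * ∫ u : ℝ, u ^ m * Real.exp (-u^2/2) := by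
  have hd : ∀ u : ℝ, HasDerivAt (fun u : ℝ => u^(m+1) * Real.exp (-u^2/2))
    ((m+1) * (u ^ m * Real.exp (-u^2/2)) - u^(m+2) * Real.exp (-u^2/2)) u := by
    intro u
    have h1 := gauss_deriv u
    refine ((hasDerivAt_pow (m+1) u).fun_mul h1).congr_deriv ?_
    push_cast
    ring
  have hi : Integrable (fun u : ℝ => (m+1) * (u ^ m * Real.exp (-u^2/2)) - u^(m+2) * Real.exp (-u^2/2)) :=
    ((integrable_pow_gauss m).const_mul _).sub (integrable_pow_gauss (m+2))
  have h0 := integral_eq_zero_of_hasDerivAt_of_integrable hd hi (integrable_pow_gauss (m+1))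
  rw [integral_sub ((integrable_pow_gauss m).const_mul _) (integrable_pow_gauss (m+2)),
    integral_const_mul] at h0
  linarith

lemma gauss_zero : ∫ u : ℝ, Real.exp (-u^2/2) = Real.sqrt (2*π) := by
  have := integral_gaussian (1/2)
  rw [show π / (1/2) = 2 * π by ring] at this
  rw [← this]; congr 1; funext u; congr 1; ring

lemma gauss_moment (n : ℕ) : ∫ u : ℝ, u ^ (2*n) * Real.exp (-u^2/2) ≤
    Real.sqrt (2*π) * (2^n * n.factorial) := by
  induction n with
  | zero => simp [gauss_zero]
  | succ n ih =>
    rw [show 2 * (n+1) = 2*n+2 by ring, gauss_moment_rec]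
    have h0 : 0 ≤ ∫ u : ℝ, u ^ (2*n) * Real.exp (-u^2/2) :=
      integral_nonneg fun u => mul_nonneg (by rw [pow_mul]; positivity) (Real.exp_pos _).le
    have : ((2 * n : ℕ) : ℝ) + 1 ≤ 2 * (n+1) := by push_cast; linarith
    calc _ ≤ (2 * ((n:ℝ)+1)) * (Real.sqrt (2*π) * (2^n * n.factorial)) := by gcongr
      _ = _ := by rw [Nat.factorial_succ]; push_cast; ring

lemma hf_sup (n : ℕ) (u : ℝ) : |hf (2*n) u| ≤ 2^n * n.factorial := by
  have h := congrArg norm (hf_eq_kf (2*n) u)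
  have hp : 0 < Real.sqrt (2*π) := by positivity
  rw [norm_mul, Complex.norm_real, Complex.norm_real, Real.norm_eq_abs, Real.norm_eq_abs,
    abs_of_pos hp] at h
  have h2 : ‖kf (2*n) u‖ ≤ ∫ u : ℝ, u ^ (2*n) * Real.exp (-u^2/2) := by
    refine (norm_integral_le_integral_norm _).trans (le_of_eq ?_)
    congr 1; funext ξ
    rw [norm_mul, norm_exp_aux, one_mul, norm_mul, norm_pow, norm_mul, Complex.norm_I, one_mul,
      Complex.norm_real, Complex.norm_real, Real.norm_eq_abs, Real.norm_eq_abs, abs_of_pos (Real.exp_pos _), pow_mul, pow_mul, sq_abs]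
  have := h2.trans (gauss_moment n)
  rw [← h] at this
  exact le_of_mul_le_mul_left this hp

lemma gauss_abs_moment (n : ℕ) (Λ : ℝ) (hΛ : 0 ≤ Λ) :
    ∫ ξ in (-Λ)..Λ, Real.exp (-ξ^2/2) * |ξ| ^ (2*n+1) ≤ 2^(n+1) * n.factorial := by
  have hintv : ∀ a b : ℝ, IntervalIntegrable (fun ξ : ℝ => Real.exp (-ξ^2/2) * |ξ| ^ (2*n+1)) volume a b :=
    fun a b => Continuous.intervalIntegrable (by fun_prop) a b
  have h1 : ∫ ξ in (-Λ)..Λ, Real.exp (-ξ^2/2) * |ξ| ^ (2*n+1) =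
     2 * ∫ ξ in (0:ℝ)..Λ, Real.exp (-ξ^2/2) * |ξ| ^ (2*n+1) := by
    rw [← intervalIntegral.integral_add_adjacent_intervals (hintv (-Λ) 0) (hintv 0 Λ)]
    have := intervalIntegral.integral_comp_neg (a := 0) (b := Λ)
      (fun ξ : ℝ => Real.exp (-ξ^2/2) * |ξ| ^ (2*n+1))
    simp only [neg_zero] at this
    rw [← this]
    simp only [abs_neg, neg_sq]
    ring
  have h2 : ∫ ξ in (0:ℝ)..Λ, Real.exp (-ξ^2/2) * |ξ| ^ (2*n+1) ≤
      ∫ ξ in Set.Ioi (0:ℝ), ξ ^ (2*n+1) * Real.exp (-ξ^2/2) := by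
    rw [intervalIntegral.integral_of_le hΛ]
    have : ∫ ξ in Set.Ioc (0:ℝ) Λ, Real.exp (-ξ^2/2) * |ξ| ^ (2*n+1) =
        ∫ ξ in Set.Ioc (0:ℝ) Λ, ξ ^ (2*n+1) * Real.exp (-ξ^2/2) := by
      refine setIntegral_congr_fun measurableSet_Ioc fun ξ hξ => ?_
      simp only [abs_of_pos hξ.1, mul_comm]
    rw [this]
    refine setIntegral_mono_set (integrable_pow_gauss _).integrableOn ?_
      (Set.Ioc_subset_Ioi_self).eventuallyLE
    filter_upwards [ae_restrict_mem measurableSet_Ioi] with ξ hξ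
    have : 0 < ξ := hξ
    simp only [Pi.zero_apply]; positivity
  have h3 : ∫ ξ in Set.Ioi (0:ℝ), ξ ^ (2*n+1) * Real.exp (-ξ^2/2) = 2^n * n.factorial := by
    have h := _root_.integral_rpow_mul_exp_neg_mul_rpow (p := 2) (q := 2*n+1) (b := 1/2) (by norm_num)
      (by have : (0:ℝ) ≤ n := Nat.cast_nonneg n
          linarith) (by norm_num)
    have e : ((2:ℝ)*n+1+1)/2 = n+1 := by ring
    rw [show -((2:ℝ)*n+1+1)/2 = -(n+1:ℝ) by ring, e, Real.Gamma_nat_eq_factorial] at h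
    have e2 : ((1:ℝ)/2)^(-(n+1:ℝ)) = 2^(n+1) := by
      rw [Real.rpow_neg (by norm_num), ← Real.inv_rpow (by norm_num)]
      norm_num
      exact_mod_cast Real.rpow_natCast 2 (n+1)
    rw [e2] at h
    have : ∫ ξ in Set.Ioi (0:ℝ), ξ ^ (2*n+1) * Real.exp (-ξ^2/2) =
       ∫ (x : ℝ) in Set.Ioi 0, x ^ (2 * (n:ℝ) + 1) * Real.exp (-(1/2) * x ^ (2:ℝ)) := by
      refine setIntegral_congr_fun measurableSet_Ioi fun ξ hξ => ?_
      rw [show (2 * (n:ℝ) + 1) = ((2*n+1 : ℕ) : ℝ) by push_cast; ring, Real.rpow_natCast, show (2:ℝ) = ((2:ℕ):ℝ) by norm_num, Real.rpow_natCast]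
      congr 2; push_cast; ring
    rw [this, h]; ring
  rw [h1]; rw [h3] at h2
  calc _ ≤ 2 * (2^n * (n.factorial:ℝ)) := by linarith
    _ = _ := by ring


/-- Fejer kernel -/
noncomputable def fk (s : ℝ) : ℝ := 2 * (1 - Real.cos s) / s ^ 2

lemma fk_nonneg (s : ℝ) : 0 ≤ fk s := by
  unfold fk; have := Real.cos_le_one s
  exact div_nonneg (by linarith) (sq_nonneg s)

lemma fk_le_one (s : ℝ) : fk s ≤ 1 := by
  unfold fk
  rcases eq_or_ne s 0 with rfl | h
  · simp
  · rw [div_le_one (by positivity)]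
    have := Real.one_sub_sq_div_two_le_cos (x := s)
    linarith

lemma fk_measurable : Measurable fk := by unfold fk; fun_prop

lemma fk_integrable : Integrable fk := by
  have h := integrable_inv_one_add_sq.const_mul 5
  refine h.mono' fk_measurable.aestronglyMeasurable (Filter.Eventually.of_forall fun s => ?_)
  rw [Real.norm_eq_abs, abs_of_nonneg (fk_nonneg s)]
  rw [← div_eq_mul_inv, le_div_iff₀ (by positivity)]
  have h1 := fk_le_one s
  have h2 : fk s * s^2 ≤ 4 := by
    unfold fk
    rcases eq_or_ne s 0 with rfl | h
    · simp
    · rw [div_mul_cancel₀ _ (by positivity)]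
      have := Real.neg_one_le_cos s
      linarith
  nlinarith

lemma fk_W_pos : 0 < ∫ s, fk s := by
  rw [integral_pos_iff_support_of_nonneg fk_nonneg fk_integrable]
  have : Set.Ioo (0:ℝ) 1 ⊆ Function.support fk := by
    intro s hs
    have hc : Real.cos s < 1 := by
      have := Real.cos_lt_cos_of_nonneg_of_le_pi (x := 0) (y := s) le_rfl (by linarith [Real.pi_gt_three, hs.2]) hs.1
      simpa using this
    have hs0 : 0 < s := hs.1
    have : 0 < fk s := by unfold fk; exact div_pos (by linarith) (by positivity)
    exact this.ne'
  refine lt_of_lt_of_le ?_ (measure_mono this)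
  simp

lemma fk_A : ∃ A : ℝ, 0 < A ∧ 3/4 * (∫ s, fk s) ≤ ∫ s in Set.Icc (-A) A, fk s := by
  have h := intervalIntegral_tendsto_integral fk_integrable tendsto_neg_atTop_atBot tendsto_id
  have hW := fk_W_pos
  have h1 := h.eventually (lt_mem_nhds (show 3/4 * (∫ s, fk s) < ∫ s, fk s by linarith))
  obtain ⟨A, hA, hA0⟩ := (h1.and (eventually_gt_atTop 0)).exists
  refine ⟨A, hA0, ?_⟩
  rw [integral_Icc_eq_integral_Ioc, ← intervalIntegral.integral_of_le (by linarith)]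
  exact hA.le

lemma fk_ft (x : ℝ) (hx : x ≠ 0) :
    ∫ η in Set.Icc (-1:ℝ) 1, ((1 - |η| : ℝ) : ℂ) * Complex.exp (I * η * x) = (fk x : ℂ) := by
  rw [integral_Icc_eq_integral_Ioc, ← intervalIntegral.integral_of_le (by norm_num)]
  have hintv : ∀ a b : ℝ, IntervalIntegrable
     (fun η : ℝ => ((1 - |η| : ℝ) : ℂ) * Complex.exp (I * η * x)) volume a b :=
    fun a b => Continuous.intervalIntegrable (by fun_prop) a b
  rw [← intervalIntegral.integral_add_adjacent_intervals (hintv (-1) 0) (hintv 0 1)]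
  have h := intervalIntegral.integral_comp_neg (a := 0) (b := 1)
     (fun η : ℝ => ((1 - |η| : ℝ) : ℂ) * Complex.exp (I * η * x))
  rw [neg_zero] at h
  rw [← h, ← intervalIntegral.integral_add]
  rotate_left
  · exact Continuous.intervalIntegrable (by fun_prop) _ _
  · exact hintv _ _
  have e : ∫ η in (0:ℝ)..1, (((1 - |(-η)| : ℝ) : ℂ) * Complex.exp (I * (-η : ℝ) * x) +
      ((1 - |η| : ℝ) : ℂ) * Complex.exp (I * η * x)) =
      ∫ η in (0:ℝ)..1, ((2 * ((1 - η) * Real.cos (η * x)) : ℝ) : ℂ) := by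
    refine intervalIntegral.integral_congr fun η hη => ?_
    rw [Set.uIcc_of_le zero_le_one] at hη
    simp only [abs_neg, abs_of_nonneg hη.1]
    push_cast
    rw [Complex.cos]
    rw [show (η:ℂ) * x * I = I * η * x by ring, show -((η:ℂ) * x) * I = I * -η * x by ring]
    ring
  rw [e, intervalIntegral.integral_ofReal]
  congr 1
  have hd : ∀ η ∈ Set.uIcc (0:ℝ) 1, HasDerivAt
      (fun η : ℝ => 2 * ((1 - η) * (Real.sin (η * x) / x) - Real.cos (η * x) / x^2))
      (2 * ((1 - η) * Real.cos (η * x))) η := by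
    intro η _
    have h0 : HasDerivAt (fun η : ℝ => η * x) x η := by
      simpa using (hasDerivAt_id η).mul_const x
    have h1 := (h0.sin).div_const x
    have h2 := (h0.cos).div_const (x^2)
    have h3 : HasDerivAt (fun η : ℝ => 1 - η) (-1) η := (hasDerivAt_id η).const_sub 1
    refine (((h3.fun_mul h1).fun_sub h2).const_mul 2).congr_deriv ?_
    field_simp
    ring
  rw [intervalIntegral.integral_eq_sub_of_hasDerivAt hd (Continuous.intervalIntegrable (by fun_prop) _ _)]
  unfold fk
  simp
  ring

/-- transform of the window -/
noncomputable def wE (a b ξ : ℝ) : ℂ := ∫ s in Set.Icc (-b) (-a), Complex.exp (I * ξ * s)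

lemma norm_exp_aux2 (a b : ℝ) : ‖Complex.exp (I * a * b)‖ = 1 := by
  have : (I * (a:ℂ) * b) = I * (((a * b) : ℝ) : ℂ) := by push_cast; ring
  rw [this, Complex.norm_exp_I_mul_ofReal]

lemma wE_bound (a b ξ : ℝ) (hab : a ≤ b) (hξ : ξ ≠ 0) : ‖wE a b ξ‖ ≤ 2 / |ξ| := by
  unfold wE
  rw [integral_Icc_eq_integral_Ioc, ← intervalIntegral.integral_of_le (by linarith)]
  have hc : (I * (ξ:ℂ)) ≠ 0 := by simp [hξ]
  rw [integral_exp_mul_complex hc, norm_div]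
  have : ‖I * (ξ:ℂ)‖ = |ξ| := by simp
  rw [this]
  gcongr
  refine (norm_sub_le _ _).trans ?_
  rw [norm_exp_aux2, norm_exp_aux2]; norm_num

lemma wE_bound' (a b ξ : ℝ) (hab : a ≤ b) : ‖wE a b ξ‖ ≤ b - a := by
  unfold wE
  refine (norm_setIntegral_le_of_norm_le_const (C := 1) (by simp) (fun x _ => by rw [norm_exp_aux2])).trans ?_
  rw [one_mul, Real.volume_real_Icc_of_le (by linarith)]
  linarith

lemma wE_measurable (a b : ℝ) : AEStronglyMeasurable (wE a b) (volume.restrict (Set.Icc (-1:ℝ) 1)) := by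
  have : Continuous (wE a b) := by
    unfold wE
    exact continuous_parametric_integral_of_continuous (by fun_prop) isCompact_Icc
  exact this.aestronglyMeasurable

lemma window_eq (a b x : ℝ) (hab : a ≤ b) :
    ((∫ s in Set.Icc (x - b) (x - a), fk s : ℝ) : ℂ) =
      ∫ ξ in Set.Icc (-1:ℝ) 1, ((1 - |ξ| : ℝ) : ℂ) * wE a b ξ * Complex.exp (I * ξ * x) := by
  rw [← integral_complex_ofReal]
  have h1 : ∫ s in Set.Icc (x - b) (x - a), ((fk s : ℝ) : ℂ) =
      ∫ s in Set.Icc (x - b) (x - a), ∫ η in Set.Icc (-1:ℝ) 1, ((1 - |η| : ℝ) : ℂ) * Complex.exp (I * η * s) := by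
    refine integral_congr_ae ?_
    refine ae_restrict_of_ae ?_
    filter_upwards [Measure.ae_ne volume (0:ℝ)] with s hs
    exact (fk_ft s hs).symm
  refine h1.trans ?_
  rw [integral_integral_swap]
  · refine integral_congr_ae (Filter.Eventually.of_forall fun ξ => ?_)
    simp only
    rw [integral_const_mul, mul_assoc]
    congr 1
    unfold wE
    rw [integral_Icc_eq_integral_Ioc, ← intervalIntegral.integral_of_le (by linarith),
     integral_Icc_eq_integral_Ioc, ← intervalIntegral.integral_of_le (by linarith)]
    have := intervalIntegral.integral_comp_add_left (a := -b) (b := -a)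
      (fun s : ℝ => Complex.exp (I * ξ * s)) x
    rw [show x - b = x + -b by ring, show x - a = x + -a by ring, ← this,
      ← intervalIntegral.integral_mul_const]
    congr 1; funext s
    rw [← Complex.exp_add]; congr 1; push_cast; ring
  · have hw : Integrable (fun η : ℝ => ((1 - |η| : ℝ) : ℂ)) (volume.restrict (Set.Icc (-1:ℝ) 1)) :=
      ContinuousOn.integrableOn_compact isCompact_Icc (by fun_prop)
    have h1 : Integrable (fun s : ℝ => (1:ℂ)) (volume.restrict (Set.Icc (x-b) (x-a))) :=
      ContinuousOn.integrableOn_compact isCompact_Icc (by fun_prop)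
    have := (h1.mul_prod hw).bdd_mul (c := 1) (f := fun z : ℝ × ℝ => Complex.exp (I * z.2 * z.1))
      (Continuous.aestronglyMeasurable (by fun_prop))
      (Filter.Eventually.of_forall fun z => by rw [norm_exp_aux2])
    refine this.congr (Filter.Eventually.of_forall fun z => ?_)
    simp only [Function.uncurry]
    ring

lemma shift_fubini (ρ : Measure ℝ) [SFinite ρ] (q : ℝ → ℝ) (hq : Integrable q ρ) (a b : ℝ)
    (hab : a ≤ b) :
    Integrable (fun s => fk s * ∫ x in Set.Icc (a+s) (b+s), q x ∂ρ) ∧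
    Integrable (fun ξ : ℝ => ((1 - |ξ| : ℝ) : ℂ) * wE a b ξ * ∫ x, Complex.exp (I * ξ * x) * (q x : ℂ) ∂ρ) (volume.restrict (Set.Icc (-1:ℝ) 1)) ∧
    ((∫ s, fk s * ∫ x in Set.Icc (a+s) (b+s), q x ∂ρ : ℝ) : ℂ) =
      ∫ ξ in Set.Icc (-1:ℝ) 1, ((1 - |ξ| : ℝ) : ℂ) * wE a b ξ * ∫ x, Complex.exp (I * ξ * x) * (q x : ℂ) ∂ρ := by
  have hS : MeasurableSet ({z : ℝ × ℝ | a + z.1 ≤ z.2} ∩ {z : ℝ × ℝ | z.2 ≤ b + z.1}) :=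
    (measurableSet_le (by fun_prop) (by fun_prop)).inter (measurableSet_le (by fun_prop) (by fun_prop))
  have hI : Integrable (Function.uncurry fun s x : ℝ => fk s * (Set.Icc (a+s) (b+s)).indicator q x)
      (volume.prod ρ) := by
    refine ((fk_integrable.mul_prod hq).indicator hS).congr (Filter.Eventually.of_forall fun z => ?_)
    simp only [Function.uncurry, Set.indicator, Set.mem_inter_iff, Set.mem_ofPred_eq, Set.mem_Icc]
    split_ifs <;> simp
  have e1 : (fun s => fk s * ∫ x in Set.Icc (a+s) (b+s), q x ∂ρ) =
      fun s => ∫ x, fk s * (Set.Icc (a+s) (b+s)).indicator q x ∂ρ := by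
    funext s
    rw [integral_const_mul, integral_indicator measurableSet_Icc]
  have hw : Integrable (fun η : ℝ => ((1 - |η| : ℝ) : ℂ) * wE a b η) (volume.restrict (Set.Icc (-1:ℝ) 1)) := by
    have h0 : Integrable (fun η : ℝ => ((1 - |η| : ℝ) : ℂ)) (volume.restrict (Set.Icc (-1:ℝ) 1)) :=
      ContinuousOn.integrableOn_compact isCompact_Icc (by fun_prop)
    exact h0.mul_bdd (c := b - a) (wE_measurable a b) (Filter.Eventually.of_forall fun ξ => wE_bound' a b ξ hab)
  have hI2 : Integrable (Function.uncurry fun (ξ x : ℝ) =>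
      ((1 - |ξ| : ℝ) : ℂ) * wE a b ξ * (Complex.exp (I * ξ * x) * (q x : ℂ)))
      ((volume.restrict (Set.Icc (-1:ℝ) 1)).prod ρ) := by
    have := (hw.mul_prod hq.ofReal).bdd_mul (c := 1) (f := fun z : ℝ × ℝ => Complex.exp (I * z.1 * z.2))
      (Continuous.aestronglyMeasurable (by fun_prop))
      (Filter.Eventually.of_forall fun z => by rw [norm_exp_aux2])
    refine this.congr (Filter.Eventually.of_forall fun z => ?_)
    simp only [Function.uncurry, Complex.coe_algebraMap]
    ring
  refine ⟨?_, ?_, ?_⟩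
  · rw [e1]; exact hI.integral_prod_left
  · refine hI2.integral_prod_left.congr (Filter.Eventually.of_forall fun ξ => ?_)
    simp only [Function.uncurry]
    rw [integral_const_mul]
  · rw [e1, integral_integral_swap hI]
    have e2 : (∫ x, (∫ s, fk s * (Set.Icc (a+s) (b+s)).indicator q x) ∂ρ) =
       ∫ x, (∫ s in Set.Icc (x - b) (x - a), fk s) * q x ∂ρ := by
      refine integral_congr_ae (Filter.Eventually.of_forall fun x => ?_)
      simp only
      rw [← integral_indicator measurableSet_Icc, ← integral_mul_const]
      congr 1; funext s
      have : x ∈ Set.Icc (a+s) (b+s) ↔ s ∈ Set.Icc (x-b) (x-a) := by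
        simp only [Set.mem_Icc]; constructor <;> rintro ⟨h1, h2⟩ <;> constructor <;> linarith
      by_cases h : s ∈ Set.Icc (x-b) (x-a)
      · rw [Set.indicator_of_mem h, Set.indicator_of_mem (this.2 h)]
      · rw [Set.indicator_of_notMem h, Set.indicator_of_notMem (fun h' => h (this.1 h'))]; simp
    rw [e2, ← integral_complex_ofReal]
    have e3 : ∫ x, (((∫ s in Set.Icc (x - b) (x - a), fk s) * q x : ℝ) : ℂ) ∂ρ =
        ∫ x, (∫ ξ in Set.Icc (-1:ℝ) 1, ((1 - |ξ| : ℝ) : ℂ) * wE a b ξ * (Complex.exp (I * ξ * x) * (q x : ℂ))) ∂ρ := by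
      refine integral_congr_ae (Filter.Eventually.of_forall fun x => ?_)
      simp only
      rw [Complex.ofReal_mul, window_eq a b x hab, ← integral_mul_const]
      congr 1; funext ξ; ring
    refine e3.trans ?_
    rw [← integral_integral_swap hI2]
    refine integral_congr_ae (Filter.Eventually.of_forall fun x => ?_)
    simp only
    rw [integral_const_mul]


lemma window_lower (d : ℝ → ℝ) (hd : Integrable (fun s => fk s * d s)) (A η D0 : ℝ)
    (h1 : ∀ s, -η ≤ d s) (h2 : ∀ s, |s| ≤ A → D0 ≤ d s) :
    -η * (∫ s, fk s) + (D0 + η) * (∫ s in Set.Icc (-A) A, fk s) ≤ ∫ s, fk s * d s := by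
  have hi : Integrable (fun s => -η * fk s + (D0 + η) * (Set.Icc (-A) A).indicator fk s) :=
    (fk_integrable.const_mul _).add ((fk_integrable.indicator measurableSet_Icc).const_mul _)
  have := integral_mono hi hd (fun s => by
    simp only
    by_cases hs : s ∈ Set.Icc (-A) A
    · rw [Set.indicator_of_mem hs]
      have := h2 s (abs_le.2 hs)
      nlinarith [fk_nonneg s]
    · rw [Set.indicator_of_notMem hs]
      have := h1 s
      nlinarith [fk_nonneg s])
  rw [integral_add (fk_integrable.const_mul _) ((fk_integrable.indicator measurableSet_Icc).const_mul _),
    integral_const_mul, integral_const_mul, integral_indicator measurableSet_Icc] at this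
  exact this

lemma setInt_sub_bound (g : ℝ → ℝ) (hg : Integrable g) (m : ℝ) (hm : ∀ x, |g x| ≤ m)
    (a b c d : ℝ) (h1 : c ≤ a) (h2 : a ≤ b) (h3 : b ≤ d) :
    |(∫ x in Set.Icc c d, g x) - ∫ x in Set.Icc a b, g x| ≤ m * ((d - c) - (b - a)) := by
  have hI : ∀ p q : ℝ, IntervalIntegrable g volume p q := fun p q => hg.intervalIntegrable
  have e : ∀ p q : ℝ, p ≤ q → ∫ x in Set.Icc p q, g x = ∫ x in p..q, g x := fun p q h => by
    rw [integral_Icc_eq_integral_Ioc, intervalIntegral.integral_of_le h]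
  rw [e c d (by linarith), e a b h2]
  have s1 := intervalIntegral.integral_add_adjacent_intervals (hI c a) (hI a b)
  have s2 := intervalIntegral.integral_add_adjacent_intervals (hI c b) (hI b d)
  have b1 := intervalIntegral.norm_integral_le_of_norm_le_const (a := c) (b := a) (f := g) (C := m) (fun x _ => hm x)
  have b2 := intervalIntegral.norm_integral_le_of_norm_le_const (a := b) (b := d) (f := g) (C := m) (fun x _ => hm x)
  rw [Real.norm_eq_abs] at b1 b2
  rw [abs_of_nonneg (by linarith : 0 ≤ a - c)] at b1
  rw [abs_of_nonneg (by linarith : 0 ≤ d - b)] at b2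
  rw [abs_le] at *
  constructor <;> nlinarith [b1.1, b1.2, b2.1, b2.2]

lemma smooth : ∃ C : ℝ, 0 < C ∧ ∀ (μ : Measure ℝ) [IsProbabilityMeasure μ] (g : ℝ → ℝ)
    (m : ℝ) (B : ℝ → ℝ), Integrable g → (∀ x, |g x| ≤ m) →
    IntegrableOn B (Set.Icc (-1:ℝ) 1) →
    (∀ ξ : ℝ, |ξ| ≤ 1 → ‖(∫ x, Complex.exp (I * ξ * x) ∂μ) -
       ∫ x : ℝ, Complex.exp (I * ξ * x) * (g x : ℂ)‖ ≤ |ξ| * B ξ) →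
    ∀ a b : ℝ, a ≤ b → |μ.real (Set.Icc a b) - ∫ x in Set.Icc a b, g x| ≤
      C * ((∫ ξ in Set.Icc (-1:ℝ) 1, B ξ) + m) := by
  obtain ⟨A, hA, hAW⟩ := fk_A
  have hW := fk_W_pos
  set W := ∫ s, fk s with hWdef
  set W' := ∫ s in Set.Icc (-A) A, fk s with hW'def
  refine ⟨6 / W + 6 * A, by positivity, ?_⟩
  intro μ _ g m B hg hm hB hfg
  have hm0 : 0 ≤ m := (abs_nonneg _).trans (hm 0)
  set β := ∫ ξ in Set.Icc (-1:ℝ) 1, B ξ with hβ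
  set D : ℝ → ℝ → ℝ := fun a b => μ.real (Set.Icc a b) - ∫ x in Set.Icc a b, g x with hD
  -- bounded
  have hDb : ∀ a b, |D a b| ≤ 1 + ∫ x, |g x| := by
    intro a b
    have h1 : μ.real (Set.Icc a b) ≤ 1 := measureReal_le_one
    have h2 : |∫ x in Set.Icc a b, g x| ≤ ∫ x, |g x| := by
      rw [← Real.norm_eq_abs]
      refine (norm_integral_le_integral_norm _).trans ?_
      exact setIntegral_le_integral hg.norm (Filter.Eventually.of_forall fun x => norm_nonneg _)
    have h0 : 0 ≤ μ.real (Set.Icc a b) := measureReal_nonneg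
    calc |D a b| ≤ |μ.real (Set.Icc a b)| + |∫ x in Set.Icc a b, g x| := abs_sub _ _
      _ ≤ _ := by rw [abs_of_nonneg h0]; linarith
  set η := sSup (Set.range fun z : ℝ × ℝ => |D z.1 z.2|) with hη
  have hbdd : BddAbove (Set.range fun z : ℝ × ℝ => |D z.1 z.2|) :=
    ⟨1 + ∫ x, |g x|, by rintro _ ⟨z, rfl⟩; exact hDb _ _⟩
  have hle : ∀ a b, |D a b| ≤ η := fun a b => le_csSup hbdd ⟨(a,b), rfl⟩
  have hη0 : 0 ≤ η := (abs_nonneg _).trans (hle 0 0)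
  have hβ0 : 0 ≤ β := by
    refine integral_nonneg_of_ae ?_
    filter_upwards [ae_restrict_mem measurableSet_Icc, ae_restrict_of_ae (Measure.ae_ne volume (0:ℝ))] with ξ hξ h0
    have h1 := (norm_nonneg _).trans (hfg ξ (abs_le.2 hξ))
    have : 0 < |ξ| := abs_pos.2 h0
    exact nonneg_of_mul_nonneg_right h1 this
  -- smoothed bound
  have hJ : ∀ a b, a ≤ b → Integrable (fun s => fk s * D (a+s) (b+s)) ∧
      |∫ s, fk s * D (a+s) (b+s)| ≤ 2 * β := by
    intro a b hab
    obtain ⟨i1, j1, e1⟩ := shift_fubini μ (fun _ => 1) (integrable_const 1) a b hab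
    obtain ⟨i2, j2, e2⟩ := shift_fubini volume g hg a b hab
    have e : (fun s => fk s * D (a+s) (b+s)) = fun s => fk s * (∫ x in Set.Icc (a+s) (b+s), (1:ℝ) ∂μ)
       - fk s * ∫ x in Set.Icc (a+s) (b+s), g x := by
      funext s; simp only [hD]; simp [mul_sub]
    refine ⟨by rw [e]; exact i1.sub i2, ?_⟩
    rw [e, integral_sub i1 i2, ← Real.norm_eq_abs, ← Complex.norm_real, Complex.ofReal_sub, e1, e2,
      ← integral_sub j1 j2, ← integral_const_mul]
    refine norm_integral_le_of_norm_le (hB.const_mul 2) ?_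
    filter_upwards [ae_restrict_mem measurableSet_Icc, ae_restrict_of_ae (Measure.ae_ne volume (0:ℝ))] with ξ hξ h0
    have hξ1 : |ξ| ≤ 1 := abs_le.2 hξ
    have hp : 0 < |ξ| := abs_pos.2 h0
    have h1 := hfg ξ hξ1
    rw [← mul_sub, norm_mul, norm_mul, Complex.norm_real, Real.norm_eq_abs,
      abs_of_nonneg (by linarith : 0 ≤ 1 - |ξ|)]
    simp only [Complex.ofReal_one, mul_one]
    calc (1 - |ξ|) * ‖wE a b ξ‖ * _ ≤ 1 * (2 / |ξ|) * (|ξ| * B ξ) := by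
          refine mul_le_mul ?_ h1 (norm_nonneg _) (by positivity)
          exact mul_le_mul (by linarith) (wE_bound a b ξ hab h0) (norm_nonneg _) zero_le_one
      _ = 2 * B ξ := by field_simp
  have hW'W : W' ≤ W := setIntegral_le_integral fk_integrable (Filter.Eventually.of_forall fk_nonneg)
  have hW'0 : 0 < W' := by linarith
  -- final algebra
  have alg : ∀ D0 : ℝ, -η * W + (D0 + η) * W' ≤ 2 * β → D0 ≤ 8/3 * β / W + η / 3 := by
    intro D0 h
    have h1 : D0 * W' ≤ 2 * β + η * (W - W') := by linarith
    have h2 : η * (W - W') ≤ η * (W' / 3) := mul_le_mul_of_nonneg_left (by linarith) hη0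
    have h3 : 2 * β ≤ (8/3 * β / W) * W' := by
      have : 2 * β = (8/3 * β / W) * (3/4 * W) := by field_simp; ring
      rw [this]; gcongr
    have : D0 * W' ≤ (8/3 * β / W + η / 3) * W' := by nlinarith
    exact le_of_mul_le_mul_right this hW'0
  have key : ∀ a b, |D a b| ≤ 8/3 * β / W + 2 * m * A + η / 3 := by
    intro a b
    have hXpos : 0 ≤ 8/3 * β / W + η / 3 := by positivity
    rcases lt_or_ge b a with hba | hab
    · have : D a b = 0 := by simp [hD, Set.Icc_eq_empty (not_le.2 hba)]
      rw [this, abs_zero]; positivity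
    rw [abs_le]
    constructor
    · rcases lt_or_ge (b - a) (2 * A) with h | h
      · have h1 : |∫ x in Set.Icc a b, g x| ≤ m * (b - a) := by
          have := setInt_sub_bound g hg m hm a a a b le_rfl le_rfl hab
          simpa using this
        have h0 : 0 ≤ μ.real (Set.Icc a b) := measureReal_nonneg
        have h2 := (abs_le.1 h1).2
        have : m * (b-a) ≤ m * (2 * A) := by gcongr
        simp only [hD]; linarith
      · obtain ⟨iJ, bJ⟩ := hJ (a+A) (b-A) (by linarith)
        have hd : Integrable (fun s => fk s * (-D (a+A+s) (b-A+s))) := by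
          refine iJ.neg.congr (Filter.Eventually.of_forall fun s => ?_)
          simp
        have := window_lower (fun s => -D (a+A+s) (b-A+s)) hd A η (-D a b - 2 * m * A)
          (fun s => by have := (abs_le.1 (hle (a+A+s) (b-A+s))).2; linarith)
          (fun s hs => by
            have hs' := abs_le.1 hs
            have hsub : Set.Icc (a+A+s) (b-A+s) ⊆ Set.Icc a b :=
              Set.Icc_subset_Icc (by linarith) (by linarith)
            have hmu : μ.real (Set.Icc (a+A+s) (b-A+s)) ≤ μ.real (Set.Icc a b) := measureReal_mono hsub
            have hg1 := setInt_sub_bound g hg m hm (a+A+s) (b-A+s) a b (by linarith) (by linarith) (by linarith)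
            have := (abs_le.1 hg1).2
            simp only [hD]
            linarith)
        have e : ∫ s, fk s * (-D (a+A+s) (b-A+s)) = -∫ s, fk s * D (a+A+s) (b-A+s) := by
          rw [← integral_neg]; congr 1; funext s; ring
        rw [e] at this
        have h3 := alg _ (this.trans (by have := (abs_le.1 bJ).1; linarith))
        linarith
    · obtain ⟨iJ, bJ⟩ := hJ (a-A) (b+A) (by linarith)
      have := window_lower (fun s => D (a-A+s) (b+A+s)) iJ A η (D a b - 2 * m * A)
          (fun s => by have := (abs_le.1 (hle (a-A+s) (b+A+s))).1; linarith)
          (fun s hs => by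
            have hs' := abs_le.1 hs
            have hsub : Set.Icc a b ⊆ Set.Icc (a-A+s) (b+A+s) :=
              Set.Icc_subset_Icc (by linarith) (by linarith)
            have hmu : μ.real (Set.Icc a b) ≤ μ.real (Set.Icc (a-A+s) (b+A+s)) := measureReal_mono hsub
            have hg1 := setInt_sub_bound g hg m hm a b (a-A+s) (b+A+s) (by linarith) (by linarith) (by linarith)
            have := (abs_le.1 hg1).2
            simp only [hD]
            linarith)
      have h3 := alg _ (this.trans (by have := (abs_le.1 bJ).2; linarith))
      linarith
  have hηle : η ≤ 8/3 * β / W + 2 * m * A + η / 3 := by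
    refine csSup_le (Set.range_nonempty _) ?_
    rintro _ ⟨z, rfl⟩
    exact key _ _
  intro a b _
  refine (hle a b).trans ?_
  have : η ≤ 4 * (β / W) + 3 * m * A := by
    have : 8/3 * β / W = 8/3 * (β / W) := by ring
    rw [this] at hηle; linarith
  have p1 : 0 ≤ β / W := by positivity
  have p2 : 0 ≤ m * A := by positivity
  have p3 : 0 ≤ m / W := by positivity
  have p4 : 0 ≤ β * A := by positivity
  calc η ≤ 4 * (β / W) + 3 * m * A := this
    _ ≤ 6 * (β / W) + 6 * (m / W) + 6 * (β * A) + 6 * (m * A) := by nlinarith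
    _ = _ := by ring

lemma smoothL : ∃ C : ℝ, 0 < C ∧ ∀ (μ : Measure ℝ) [IsProbabilityMeasure μ] (g : ℝ → ℝ)
    (m Λ : ℝ) (B : ℝ → ℝ), 0 < Λ → Integrable g → (∀ x, |g x| ≤ m) → Continuous B →
    (∀ ξ : ℝ, |ξ| ≤ Λ → ‖(∫ x, Complex.exp (I * ξ * x) ∂μ) -
       ∫ x : ℝ, Complex.exp (I * ξ * x) * (g x : ℂ)‖ ≤ |ξ| * B ξ) →
    ∀ a b : ℝ, a ≤ b → |μ.real (Set.Icc a b) - ∫ x in Set.Icc a b, g x| ≤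
      C * ((∫ ξ in (-Λ)..Λ, B ξ) + m / Λ) := by
  obtain ⟨C, hC, h⟩ := smooth
  refine ⟨C, hC, ?_⟩
  intro μ _ g m Λ B hΛ hg hm hB hfg a b hab
  have hmeas : Measurable (fun x : ℝ => Λ * x) := by fun_prop
  have hpr : IsProbabilityMeasure (μ.map (fun x : ℝ => Λ * x)) :=
    Measure.isProbabilityMeasure_map hmeas.aemeasurable
  have hpre : (fun x : ℝ => Λ * x) ⁻¹' (Set.Icc (Λ * a) (Λ * b)) = Set.Icc a b := by
    ext x; simp [mul_le_mul_iff_right₀ hΛ]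
  have h1 := h (μ.map (fun x : ℝ => Λ * x)) (fun x => Λ⁻¹ * g (x / Λ)) (m / Λ) (fun ξ => Λ * B (Λ * ξ))
    ((hg.comp_div hΛ.ne').const_mul _)
    (fun x => by
      rw [abs_mul, abs_of_pos (inv_pos.2 hΛ), div_eq_inv_mul m]
      exact mul_le_mul_of_nonneg_left (hm _) (inv_pos.2 hΛ).le)
    (ContinuousOn.integrableOn_compact isCompact_Icc (by fun_prop))
    (fun ξ hξ => by
      have h2 := hfg (Λ * ξ) (by rw [abs_mul, abs_of_pos hΛ]; nlinarith)
      rw [integral_map hmeas.aemeasurable (Continuous.aestronglyMeasurable (by fun_prop))]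
      have e1 : (fun x : ℝ => Complex.exp (I * ξ * ((Λ * x : ℝ) : ℂ))) =
         fun x : ℝ => Complex.exp (I * ((Λ * ξ : ℝ) : ℂ) * x) := by
        funext x; congr 1; push_cast; ring
      have e2 : ∫ x : ℝ, Complex.exp (I * ξ * x) * ((Λ⁻¹ * g (x / Λ) : ℝ) : ℂ) =
         ∫ x : ℝ, Complex.exp (I * ((Λ * ξ : ℝ) : ℂ) * x) * (g x : ℂ) := by
        have := Measure.integral_comp_div
          (fun x : ℝ => Complex.exp (I * ((Λ * ξ : ℝ) : ℂ) * x) * (g x : ℂ)) Λ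
        rw [abs_of_pos hΛ] at this
        have e3 : ∫ x : ℝ, Complex.exp (I * ((Λ * ξ : ℝ) : ℂ) * x) * (g x : ℂ) = (Λ⁻¹ : ℝ) • (Λ • ∫ x : ℝ, Complex.exp (I * ((Λ * ξ : ℝ) : ℂ) * x) * (g x : ℂ)) := by
          rw [smul_smul, inv_mul_cancel₀ hΛ.ne', one_smul]
        rw [e3, ← this, ← integral_smul]
        congr 1; funext x
        have hL : (Λ:ℂ) ≠ 0 := by exact_mod_cast hΛ.ne'
        rw [Complex.real_smul]
        push_cast
        rw [show I * ((Λ:ℂ) * ξ) * (x / Λ) = I * ξ * x by field_simp]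
        ring
      rw [e1, e2]
      refine h2.trans (le_of_eq ?_)
      rw [abs_mul, abs_of_pos hΛ]; ring)
    (Λ * a) (Λ * b) (by gcongr)
  rw [Measure.real, Measure.map_apply hmeas measurableSet_Icc, hpre] at h1
  have e4 : ∫ x in Set.Icc (Λ * a) (Λ * b), Λ⁻¹ * g (x / Λ) = ∫ x in Set.Icc a b, g x := by
    rw [integral_Icc_eq_integral_Ioc, ← intervalIntegral.integral_of_le (by gcongr),
      integral_Icc_eq_integral_Ioc, ← intervalIntegral.integral_of_le hab,
      intervalIntegral.integral_const_mul, intervalIntegral.integral_comp_div _ hΛ.ne']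
    rw [mul_div_cancel_left₀ _ hΛ.ne', mul_div_cancel_left₀ _ hΛ.ne', smul_eq_mul, inv_mul_cancel_left₀ hΛ.ne']
  have e5 : ∫ ξ in Set.Icc (-1:ℝ) 1, Λ * B (Λ * ξ) = ∫ ξ in (-Λ)..Λ, B ξ := by
    rw [integral_Icc_eq_integral_Ioc, ← intervalIntegral.integral_of_le (by norm_num),
      intervalIntegral.integral_const_mul, intervalIntegral.integral_comp_mul_left _ hΛ.ne']
    rw [smul_eq_mul, mul_inv_cancel_left₀ hΛ.ne']; simp
  rw [e4, e5] at h1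
  exact h1


/-- uniform probability measure on `[-π, π]` -/
noncomputable def unif : Measure ℝ := (ENNReal.ofReal (2 * π))⁻¹ • volume.restrict (Set.Ioc (-π) π)

instance unif_prob : IsProbabilityMeasure unif := by
  refine ⟨?_⟩
  unfold unif
  rw [Measure.smul_apply, Measure.restrict_apply_univ, Real.volume_Ioc, smul_eq_mul,
    show π - -π = 2 * π by ring]
  exact ENNReal.inv_mul_cancel (by simp [Real.pi_pos]) ENNReal.ofReal_ne_top

lemma unif_integral {E : Type*} [NormedAddCommGroup E] [NormedSpace ℝ E] (f : ℝ → E) :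
    ∫ θ, f θ ∂unif = (2 * π)⁻¹ • ∫ θ in (-π)..π, f θ := by
  unfold unif
  rw [integral_smul_measure, intervalIntegral.integral_of_le (by linarith [Real.pi_pos])]
  congr 1
  rw [ENNReal.toReal_inv, ENNReal.toReal_ofReal (by positivity)]

lemma unif_integrable {E : Type*} [NormedAddCommGroup E] [NormedSpace ℝ E] (f : ℝ → E) (hf : Continuous f) :
    Integrable f unif := by
  unfold unif
  refine Integrable.smul_measure ?_ (by simp [Real.pi_pos])
  exact (hf.integrableOn_Icc).mono_set Set.Ioc_subset_Icc_self

lemma unif_exp (n : ℤ) (hn : n ≠ 0) : ∫ θ : ℝ, Complex.exp (I * (n * θ)) ∂unif = 0 := by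
  rw [unif_integral]
  have hc : I * (n:ℂ) ≠ 0 := by simp [hn]
  have := integral_exp_mul_complex (a := -π) (b := π) hc
  simp only [← mul_assoc]
  rw [this]
  have : Complex.exp (I * n * π) = Complex.exp (I * n * ((-π : ℝ) : ℂ)) := by
    rw [Complex.exp_eq_exp_iff_exists_int]
    exact ⟨n, by push_cast; ring⟩
  rw [this]; simp

lemma unif_sin_odd (n : ℕ) : ∫ θ : ℝ, Real.sin θ ^ (2*n+1) ∂unif = 0 := by
  rw [unif_integral]
  have h := intervalIntegral.integral_comp_neg (a := -π) (b := π) (fun θ : ℝ => Real.sin θ ^ (2*n+1))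
  rw [neg_neg] at h
  have e : (fun θ : ℝ => Real.sin (-θ) ^ (2*n+1)) = fun θ : ℝ => -(Real.sin θ ^ (2*n+1)) := by
    funext θ; rw [Real.sin_neg, Odd.neg_pow ⟨n, rfl⟩]
  rw [e, intervalIntegral.integral_neg] at h
  have : ∫ θ in (-π)..π, Real.sin θ ^ (2*n+1) = 0 := by linarith
  rw [this]; simp

lemma prod_even (n : ℕ) : ∏ i ∈ Finset.range n, ((2 * (i:ℝ) + 1) / (2 * i + 2)) =
    (2*n).factorial / (4^n * (n.factorial:ℝ)^2) := by
  induction n with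
  | zero => simp
  | succ n ih =>
    rw [Finset.prod_range_succ, ih, show 2 * (n+1) = (2*n+1)+1 by ring, Nat.factorial_succ,
      Nat.factorial_succ, Nat.factorial_succ]
    have : (n.factorial : ℝ) ≠ 0 := by exact_mod_cast n.factorial_ne_zero
    have h2 : (n:ℝ) + 1 ≠ 0 := by positivity
    push_cast
    field_simp
    ring

lemma unif_sin_even (n : ℕ) : ∫ θ : ℝ, Real.sin θ ^ (2*n) ∂unif =
    (2*n).factorial / (4^n * (n.factorial:ℝ)^2) := by
  rw [unif_integral, ← prod_even]
  have h := intervalIntegral.integral_comp_neg (a := 0) (b := π) (fun θ : ℝ => Real.sin θ ^ (2*n))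
  rw [neg_zero] at h
  have e : (fun θ : ℝ => Real.sin (-θ) ^ (2*n)) = fun θ : ℝ => (Real.sin θ ^ (2*n)) := by
    funext θ; rw [Real.sin_neg, Even.neg_pow ⟨n, by ring⟩]
  rw [e] at h
  have hI : ∀ a b : ℝ, IntervalIntegrable (fun θ : ℝ => Real.sin θ ^ (2*n)) volume a b :=
    fun a b => Continuous.intervalIntegrable (by fun_prop) _ _
  rw [← intervalIntegral.integral_add_adjacent_intervals (hI (-π) 0) (hI 0 π), ← h, integral_sin_pow_even,
    smul_eq_mul]
  have := Real.pi_pos.ne'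
  field_simp
  ring

lemma unif_J0 (w : ℂ) : ∫ θ : ℝ, Complex.exp (w * Real.sin θ) ∂unif = J0twoISqrt (w^2/4) := by
  have h := hasSum_integral_of_summable_integral_norm (μ := unif)
    (F := fun (k : ℕ) (θ : ℝ) => (w * Real.sin θ)^k / (k.factorial : ℂ))
    (fun k => unif_integrable _ (by fun_prop))
    (by
      refine Summable.of_nonneg_of_le (fun k => integral_nonneg fun θ => norm_nonneg _) (fun k => ?_)
        (Real.summable_pow_div_factorial ‖w‖)
      have : ∫ θ : ℝ, ‖(w * Real.sin θ)^k / (k.factorial : ℂ)‖ ∂unif ≤ ∫ θ : ℝ, ‖w‖^k / k.factorial ∂unif := by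
        refine integral_mono (unif_integrable _ (by fun_prop)) (integrable_const _) fun θ => ?_
        simp only [norm_div, norm_pow, norm_mul, Complex.norm_real, Complex.norm_natCast]
        gcongr
        have := Real.abs_sin_le_one θ
        rw [Real.norm_eq_abs]
        nlinarith [norm_nonneg w]
      simpa using this)
  have e1 : (fun θ : ℝ => ∑' k : ℕ, (w * Real.sin θ)^k / (k.factorial : ℂ)) =
      fun θ : ℝ => Complex.exp (w * Real.sin θ) := by
    funext θ
    rw [Complex.exp_eq_exp_ℂ, NormedSpace.exp_eq_tsum_div]
  rw [e1] at h
  have e2 : ∀ k : ℕ, ∫ θ : ℝ, (w * Real.sin θ)^k / (k.factorial : ℂ) ∂unif =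
      w^k / k.factorial * ((∫ θ : ℝ, Real.sin θ ^ k ∂unif : ℝ) : ℂ) := by
    intro k
    rw [← integral_complex_ofReal, ← integral_const_mul]
    congr 1; funext θ; push_cast; rw [mul_pow]; ring
  simp only [e2] at h
  have h3 : HasSum (fun n : ℕ => (w^2/4) ^ n / ((n.factorial : ℂ)) ^ 2) (∫ θ : ℝ, Complex.exp (w * Real.sin θ) ∂unif) := by
    have hinj : Function.Injective (fun n : ℕ => 2 * n) := fun a b h => by simpa using h
    have := (hinj.hasSum_iff (f := fun k : ℕ => w^k / k.factorial * ((∫ θ : ℝ, Real.sin θ ^ k ∂unif : ℝ) : ℂ))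
      (fun k hk => by
        rcases Nat.even_or_odd' k with ⟨n, rfl | rfl⟩
        · exact absurd ⟨n, rfl⟩ hk
        · simp [unif_sin_odd])).2 h
    convert this using 1
    funext n
    simp only [Function.comp]
    rw [unif_sin_even]
    have h1 : (n.factorial : ℂ) ≠ 0 := by exact_mod_cast n.factorial_ne_zero
    have h2 : ((2*n).factorial : ℂ) ≠ 0 := by exact_mod_cast (2*n).factorial_ne_zero
    push_cast
    rw [div_pow, pow_mul]
    field_simp
  unfold J0twoISqrt
  exact h3.tsum_eq.symm

lemma taylor_pos (K : ℕ) (x : ℝ) (hx : 0 ≤ x) :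
    ‖Complex.exp (I * x) - ∑ k ∈ Finset.range K, (I * x)^k / (k.factorial : ℂ)‖ ≤ x^K / K.factorial := by
  induction K generalizing x with
  | zero => simp [Complex.norm_exp_I_mul_ofReal]
  | succ K ih =>
    have hderiv : ∀ t : ℝ, HasDerivAt (fun x : ℝ => Complex.exp (I * x) - ∑ k ∈ Finset.range (K+1), (I * x)^k / (k.factorial : ℂ))
        (I * (Complex.exp (I * t) - ∑ k ∈ Finset.range K, (I * t)^k / (k.factorial : ℂ))) t := by
      intro t
      have h0 : HasDerivAt (fun x : ℝ => I * (x:ℂ)) I t := by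
        simpa using (Complex.ofRealCLM.hasDerivAt (x := t)).const_mul I
      have h1 := h0.cexp
      have h2 : HasDerivAt (fun x : ℝ => ∑ k ∈ Finset.range (K+1), (I * (x:ℂ))^k / (k.factorial : ℂ))
         (∑ k ∈ Finset.range (K+1), (k * (I * (t:ℂ))^(k-1) * I) / (k.factorial : ℂ)) t :=
        HasDerivAt.fun_sum fun k _ => ((h0.fun_pow k).div_const _)
      refine (h1.fun_sub h2).congr_deriv ?_
      rw [Finset.sum_range_succ', mul_sub, Finset.mul_sum]
      simp only [Nat.cast_zero, zero_mul, zero_div, add_zero]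
      congr 1
      · ring
      · refine Finset.sum_congr rfl fun k _ => ?_
        rw [Nat.factorial_succ]
        have h1 : (k.factorial : ℂ) ≠ 0 := by exact_mod_cast k.factorial_ne_zero
        have h2 : (k:ℂ) + 1 ≠ 0 := by exact_mod_cast k.succ_ne_zero
        push_cast
        field_simp
    have hB : ∀ t : ℝ, HasDerivAt (fun x : ℝ => x^(K+1) / ((K+1).factorial:ℝ)) (t^K / K.factorial) t := by
      intro t
      refine ((hasDerivAt_pow (K+1) t).div_const _).congr_deriv ?_
      rw [Nat.factorial_succ]
      have h1 : (K.factorial : ℝ) ≠ 0 := by exact_mod_cast K.factorial_ne_zero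
      have h2 : (K:ℝ) + 1 ≠ 0 := by positivity
      push_cast
      field_simp
    have := image_norm_le_of_norm_deriv_right_le_deriv_boundary (a := 0) (b := x)
      (f := fun x : ℝ => Complex.exp (I * x) - ∑ k ∈ Finset.range (K+1), (I * x)^k / (k.factorial : ℂ))
      (f' := fun t : ℝ => (I * (Complex.exp (I * t) - ∑ k ∈ Finset.range K, (I * t)^k / (k.factorial : ℂ))))
      (B := fun x : ℝ => x^(K+1) / ((K+1).factorial:ℝ)) (B' := fun t => t^K / K.factorial)
      (fun t _ => (hderiv t).continuousAt.continuousWithinAt)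
      (fun t _ => (hderiv t).hasDerivWithinAt)
      (by rw [Finset.sum_range_succ']; simp)
      hB
      (fun t ht => by
        rw [norm_mul, Complex.norm_I, one_mul]
        exact ih t ht.1)
    exact this ⟨hx, le_rfl⟩

lemma taylor_exp (K : ℕ) (x : ℝ) :
    ‖Complex.exp (I * x) - ∑ k ∈ Finset.range K, (I * x)^k / (k.factorial : ℂ)‖ ≤ |x|^K / K.factorial := by
  rcases le_total 0 x with h | h
  · rw [abs_of_nonneg h]; exact taylor_pos K x h
  · have h1 := taylor_pos K (-x) (by linarith)
    rw [abs_of_nonpos h]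
    rw [← Complex.norm_conj] at h1
    convert h1 using 2
    rw [map_sub, map_sum, ← Complex.exp_conj]
    simp

lemma even_pow_le_cosh (K : ℕ) (hK : Even K) (x : ℝ) :
    x^K / K.factorial ≤ Real.exp x + Real.exp (-x) := by
  have : x^K = |x|^K := (Even.pow_abs hK x).symm
  rw [this]
  refine (Real.pow_div_factorial_le_exp _ (abs_nonneg x) K).trans ?_
  rcases abs_cases x with ⟨h, _⟩ | ⟨h, _⟩ <;> rw [h]
  · linarith [Real.exp_pos (-x)]
  · linarith [Real.exp_pos x]


/-- index type of primes -/
abbrev Pr (y : ℝ) : Type := {p : ℕ // p ∈ primesLe y}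

/-- product measure -/
noncomputable def PM (y : ℝ) : Measure (Pr y → ℝ) := Measure.pi (fun _ : Pr y => unif)

instance PM_prob (y : ℝ) : IsProbabilityMeasure (PM y) := by unfold PM; infer_instance

/-- random model -/
noncomputable def SS (y : ℝ) (θ : Pr y → ℝ) : ℝ := ∑ p : Pr y, Real.sin (θ p) / Real.sqrt (p.1 : ℝ)

lemma Vy_eq_SS (y t : ℝ) : Vy y t = SS y (fun p => t * Real.log (p.1:ℝ)) := by
  unfold Vy SS
  exact (Finset.sum_coe_sort (primesLe y) (fun p => Real.sin (t * Real.log (p:ℝ)) / Real.sqrt (p:ℝ))).symm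

lemma SS_continuous (y : ℝ) : Continuous (SS y) := by unfold SS; fun_prop

lemma SS_bound (y : ℝ) (θ : Pr y → ℝ) : |SS y θ| ≤ Fintype.card (Pr y) := by
  unfold SS
  refine (Finset.abs_sum_le_sum_abs _ _).trans ?_
  rw [← nsmul_one, ← Finset.card_univ]
  refine Finset.sum_le_card_nsmul _ _ _ fun p _ => ?_
  have hp : 1 ≤ (p.1 : ℝ) := by exact_mod_cast (mem_primesLe p.2).one_lt.le
  have : 1 ≤ Real.sqrt (p.1:ℝ) := Real.one_le_sqrt.2 hp
  rw [abs_div, abs_of_pos (by linarith : 0 < Real.sqrt (p.1:ℝ)), div_le_one (by linarith)]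
  exact (Real.abs_sin_le_one _).trans this

lemma SS_integrable {E : Type*} [NormedAddCommGroup E] (y : ℝ) (F : ℝ → E) (hF : Continuous F) :
    Integrable (fun θ => F (SS y θ)) (PM y) := by
  have hc : IsCompact (Set.Icc (-(Fintype.card (Pr y) : ℝ)) (Fintype.card (Pr y))) := isCompact_Icc
  obtain ⟨C, hC⟩ := hc.exists_bound_of_continuousOn hF.continuousOn
  refine Integrable.of_bound (C := C) (Continuous.aestronglyMeasurable (hF.comp (SS_continuous y))) (Filter.Eventually.of_forall fun θ => ?_)
  exact hC _ (abs_le.1 (SS_bound y θ))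

lemma SS_mgf (y : ℝ) (w : ℂ) : ∫ θ, Complex.exp (w * SS y θ) ∂(PM y) =
    Complex.exp (w^2/4 * sigmay y) * Phifun y (w^2/4) := by
  have e : (fun θ : Pr y → ℝ => Complex.exp (w * SS y θ)) =
     fun θ => ∏ p : Pr y, (fun (p : Pr y) (x : ℝ) => Complex.exp ((w / (Real.sqrt (p.1:ℝ) : ℂ)) * Real.sin x)) p (θ p) := by
    funext θ
    simp only
    rw [← Complex.exp_sum]
    congr 1
    unfold SS
    push_cast
    rw [Finset.mul_sum]
    exact Finset.sum_congr rfl fun p _ => by ring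
  rw [e]
  unfold PM
  refine (integral_fintype_prod_eq_prod (μ := fun _ : Pr y => unif)
    (fun (p : Pr y) (x : ℝ) => Complex.exp ((w / (Real.sqrt (p.1:ℝ) : ℂ)) * Real.sin x))).trans ?_
  simp only [unif_J0]
  unfold Phifun sigmay
  rw [Finset.prod_coe_sort (primesLe y) (fun p => J0twoISqrt ((w / (Real.sqrt (p:ℝ) : ℂ))^2/4))]
  push_cast
  rw [Finset.mul_sum, Complex.exp_sum, ← Finset.prod_mul_distrib]
  refine Finset.prod_congr rfl fun p hp => ?_
  unfold phifun
  have hs : ((Real.sqrt (p:ℝ) : ℂ))^2 = p := by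
    rw [← Complex.ofReal_pow, Real.sq_sqrt (Nat.cast_nonneg p)]; simp
  rw [← mul_assoc, ← Complex.exp_add, div_pow, hs]
  rw [show w^2/4 * (1/(p:ℂ)) + -(w^2/4/(p:ℂ)) = 0 by ring, Complex.exp_zero, one_mul]
  congr 1; ring

lemma J0_real_le (x : ℝ) (hx : 0 ≤ x) : ‖J0twoISqrt x‖ ≤ Real.exp x := by
  unfold J0twoISqrt
  have h := J0_summable (x:ℂ)
  refine (norm_tsum_le_tsum_norm h).trans ?_
  rw [Real.exp_eq_exp_ℝ, NormedSpace.exp_eq_tsum_div]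
  refine h.tsum_le_tsum (fun n => ?_) (Real.summable_pow_div_factorial x)
  rw [norm_div, norm_pow, norm_pow, Complex.norm_real, Complex.norm_natCast, Real.norm_eq_abs, abs_of_nonneg hx]
  have h1 : (1:ℝ) ≤ n.factorial := by exact_mod_cast n.factorial_pos
  gcongr
  nlinarith

lemma SS_mgf_le (y s : ℝ) : ∫ θ, Real.exp (s * SS y θ) ∂(PM y) ≤ Real.exp (s^2/4 * sigmay y) := by
  have h := SS_mgf y (s:ℂ)
  have e : (fun θ => Complex.exp ((s:ℂ) * SS y θ)) = fun θ => ((Real.exp (s * SS y θ) : ℝ) : ℂ) := by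
    funext θ; push_cast; rfl
  rw [e, integral_complex_ofReal] at h
  have h2 := congrArg norm h
  rw [Complex.norm_real, Real.norm_eq_abs] at h2
  refine (le_abs_self _).trans ?_
  rw [h2]
  have e2 : Complex.exp ((s:ℂ)^2/4 * sigmay y) * Phifun y ((s:ℂ)^2/4) = ∏ p ∈ primesLe y, J0twoISqrt (((s^2/4/p : ℝ)) : ℂ) := by
    unfold Phifun sigmay
    push_cast
    rw [Finset.mul_sum, Complex.exp_sum, ← Finset.prod_mul_distrib]
    refine Finset.prod_congr rfl fun p hp => ?_
    unfold phifun
    rw [← mul_assoc, ← Complex.exp_add]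
    rw [show (s:ℂ)^2/4 * (1/(p:ℂ)) + -((s:ℂ)^2/4/(p:ℂ)) = 0 by ring, Complex.exp_zero, one_mul]
  rw [e2, norm_prod]
  unfold sigmay
  rw [Finset.mul_sum, Real.exp_sum]
  refine Finset.prod_le_prod (fun _ _ => norm_nonneg _) fun p hp => ?_
  refine (J0_real_le _ (by positivity)).trans (le_of_eq ?_)
  congr 1; ring

lemma SS_moment_le (y s : ℝ) (hs : 0 < s) (K : ℕ) (hK : Even K) :
    (∫ θ, SS y θ ^ K ∂(PM y)) / K.factorial ≤ 2 * Real.exp (s^2/4 * sigmay y) / s^K := by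
  rw [le_div_iff₀ (by positivity)]
  have h1 : (∫ θ, SS y θ ^ K ∂(PM y)) / K.factorial * s^K = ∫ θ, (s * SS y θ)^K / K.factorial ∂(PM y) := by
    rw [div_mul_eq_mul_div, ← integral_mul_const, ← integral_div]
    congr 1; funext θ; rw [mul_pow]; ring
  have i1 : Integrable (fun θ => Real.exp (s * SS y θ)) (PM y) := SS_integrable y (fun x => Real.exp (s * x)) (by fun_prop)
  have i2 : Integrable (fun θ => Real.exp (-s * SS y θ)) (PM y) := SS_integrable y (fun x => Real.exp (-s * x)) (by fun_prop)
  have h2 : ∫ θ, (s * SS y θ)^K / K.factorial ∂(PM y) ≤ ∫ θ, (Real.exp (s * SS y θ) + Real.exp (-s * SS y θ)) ∂(PM y) := by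
    refine integral_mono (SS_integrable y (fun x => (s * x)^K / K.factorial) (by fun_prop)) (i1.add i2) fun θ => ?_
    simp only
    rw [neg_mul]
    exact even_pow_le_cosh K hK _
  rw [integral_add i1 i2] at h2
  have h3 := SS_mgf_le y s
  have h4 := SS_mgf_le y (-s)
  rw [neg_sq] at h4
  linarith

/-- coefficients -/
noncomputable def cc {y : ℝ} (x : Pr y × Bool) : ℂ :=
  (if x.2 then 1 else -1) * (1 / (2 * I * (Real.sqrt (x.1.1:ℝ) : ℂ)))

/-- signs -/
def sgn (b : Bool) : ℤ := if b then 1 else -1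

lemma SS_expand (y : ℝ) (θ : Pr y → ℝ) :
    (SS y θ : ℂ) = ∑ x : Pr y × Bool, cc x * Complex.exp (I * (sgn x.2 * θ x.1 : ℝ)) := by
  rw [Fintype.sum_prod_type]
  unfold SS
  push_cast
  refine Finset.sum_congr rfl fun p _ => ?_
  rw [Fintype.sum_bool]
  simp only [cc, sgn]
  rw [Complex.sin]
  have : (Real.sqrt (p.1:ℝ) : ℂ) ≠ 0 := by
    have := (mem_primesLe p.2).pos
    have h : 0 < Real.sqrt (p.1:ℝ) := Real.sqrt_pos.2 (by exact_mod_cast this)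
    exact_mod_cast h.ne'
  simp
  rw [show -((θ p : ℂ) * I) = -(I * θ p) by ring, show ((θ p : ℂ) * I) = (I * θ p) by ring]
  field_simp
  ring

/-- signed exponent -/
def nj {y : ℝ} {k : ℕ} (j : Fin k → Pr y × Bool) (p : Pr y) : ℤ :=
  ∑ i, if (j i).1 = p then sgn (j i).2 else 0

lemma phase_eq {y : ℝ} {k : ℕ} (j : Fin k → Pr y × Bool) (θ : Pr y → ℝ) :
    ∑ i, ((sgn (j i).2 : ℝ) * θ (j i).1) = ∑ p, (nj j p : ℝ) * θ p := by
  unfold nj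
  push_cast
  simp only [Finset.sum_mul]
  rw [Finset.sum_comm]
  refine Finset.sum_congr rfl fun i _ => ?_
  simp [ite_mul]

lemma SS_pow (y : ℝ) (k : ℕ) (θ : Pr y → ℝ) :
    ((SS y θ)^k : ℂ) = ∑ j : Fin k → Pr y × Bool, (∏ i, cc (j i)) * Complex.exp (I * ((∑ p, (nj j p : ℝ) * θ p : ℝ) : ℂ)) := by
  rw [SS_expand, Fintype.sum_pow]
  refine Finset.sum_congr rfl fun j _ => ?_
  rw [Finset.prod_mul_distrib, ← Complex.exp_sum, ← phase_eq, ← Finset.mul_sum]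
  push_cast; rfl

lemma PM_avg {y : ℝ} {k : ℕ} (j : Fin k → Pr y × Bool) :
    ∫ θ, Complex.exp (I * ((∑ p, (nj j p : ℝ) * θ p : ℝ) : ℂ)) ∂(PM y) = if nj j = 0 then 1 else 0 := by
  split_ifs with h
  · simp [h]
  · have e : (fun θ : Pr y → ℝ => Complex.exp (I * ((∑ p, (nj j p : ℝ) * θ p : ℝ) : ℂ))) =
      fun θ => ∏ p : Pr y, (fun (p : Pr y) (x : ℝ) => Complex.exp (I * ((nj j p : ℂ) * x))) p (θ p) := by
      funext θ
      simp only
      rw [← Complex.exp_sum, ← Finset.mul_sum]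
      push_cast; rfl
    rw [e]
    unfold PM
    refine (integral_fintype_prod_eq_prod (μ := fun _ : Pr y => unif)
      (fun (p : Pr y) (x : ℝ) => Complex.exp (I * ((nj j p : ℂ) * x)))).trans ?_
    obtain ⟨p, hp⟩ := Function.ne_iff.1 h
    exact Finset.prod_eq_zero (Finset.mem_univ p) (unif_exp _ hp)


lemma nat_log_diff (A B : ℕ) (hA : 0 < A) (hB : 0 < B) (h : A ≠ B) (M : ℝ) (hAM : (A:ℝ) ≤ M) (hBM : (B:ℝ) ≤ M) :
    1 / M ≤ |Real.log A - Real.log B| := by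
  have main : ∀ A B : ℕ, 0 < B → B < A → (A:ℝ) ≤ M → 1 / M ≤ Real.log A - Real.log B := by
    intro A B hB h hM
    have hA : (0:ℝ) < A := by exact_mod_cast hB.trans h
    have hB' : (0:ℝ) < B := by exact_mod_cast hB
    have h1 : (B:ℝ) + 1 ≤ A := by exact_mod_cast h
    rw [← Real.log_div hA.ne' hB'.ne']
    have h2 := Real.one_sub_inv_le_log_of_pos (div_pos hA hB')
    refine le_trans ?_ h2
    rw [inv_div]
    calc 1 / M ≤ 1 / A := by gcongr
      _ ≤ 1 - B / A := by rw [le_sub_iff_add_le, ← add_div, div_le_one hA]; linarith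
  rcases lt_or_gt_of_ne h with h | h
  · rw [abs_sub_comm]; exact (main B A hA h hBM).trans (le_abs_self _)
  · exact (main A B hB h hAM).trans (le_abs_self _)

lemma primesLe_le {y : ℝ} (hy : 0 ≤ y) {p : ℕ} (hp : p ∈ primesLe y) : (p:ℝ) ≤ y := by
  unfold primesLe at hp
  rw [Finset.mem_filter, Finset.mem_range] at hp
  exact (Nat.cast_le.2 (Nat.lt_succ_iff.1 hp.1)).trans (Nat.floor_le hy)

/-- half products -/
def nA {y : ℝ} {k : ℕ} (c : Bool) (j : Fin k → Pr y × Bool) : ℕ :=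
  ∏ i, if (j i).2 = c then (j i).1.1 else 1

lemma nA_pos {y : ℝ} {k : ℕ} (c : Bool) (j : Fin k → Pr y × Bool) : 0 < nA c j := by
  unfold nA
  refine Finset.prod_pos fun i _ => ?_
  split_ifs
  · exact (mem_primesLe (j i).1.2).pos
  · exact one_pos

lemma nA_le {y : ℝ} (hy : 1 ≤ y) {k : ℕ} (c : Bool) (j : Fin k → Pr y × Bool) : (nA c j : ℝ) ≤ y^k := by
  unfold nA
  push_cast
  refine (Finset.prod_le_prod (g := fun _ => y) (fun i _ => by positivity) fun i _ => ?_).trans (by simp)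
  split_ifs
  · exact primesLe_le (by linarith) (j i).1.2
  · exact_mod_cast hy

lemma nA_log {y : ℝ} {k : ℕ} (j : Fin k → Pr y × Bool) :
    Real.log (nA true j) - Real.log (nA false j) = ∑ p, (nj j p : ℝ) * Real.log (p.1 : ℝ) := by
  rw [← phase_eq j (fun p => Real.log (p.1:ℝ))]
  unfold nA
  push_cast
  rw [Real.log_prod, Real.log_prod, ← Finset.sum_sub_distrib]
  · refine Finset.sum_congr rfl fun i _ => ?_
    cases h : (j i).2 <;> simp [sgn]
  all_goals
    intro i _
    have := (mem_primesLe (j i).1.2).ne_zero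
    split_ifs
    · exact_mod_cast this
    · norm_num

lemma nA_fact {y : ℝ} {k : ℕ} (j : Fin k → Pr y × Bool) (p : Pr y) :
    ((nA true j).factorization p.1 : ℤ) - (nA false j).factorization p.1 = nj j p := by
  unfold nA nj
  rw [Nat.factorization_prod, Nat.factorization_prod, Finsupp.finsetSum_apply, Finsupp.finsetSum_apply]
  · push_cast
    rw [← Finset.sum_sub_distrib]
    refine Finset.sum_congr rfl fun i _ => ?_
    have hp := mem_primesLe (j i).1.2
    by_cases hq : (j i).1 = p
    · subst hq
      cases h : (j i).2 <;> simp [sgn, hp.factorization]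
    · have hq2 : (j i).1.1 ≠ p.1 := fun h => hq (Subtype.ext h)
      cases h : (j i).2 <;> simp [sgn, hp.factorization, hq, hq2]
  all_goals
    intro i _
    have := (mem_primesLe (j i).1.2).ne_zero
    split_ifs
    · exact this
    · norm_num

lemma freq_lower {y : ℝ} (hy : 1 ≤ y) {k : ℕ} (j : Fin k → Pr y × Bool) (h : nj j ≠ 0) :
    1 / y^k ≤ |∑ p, (nj j p : ℝ) * Real.log (p.1 : ℝ)| := by
  rw [← nA_log]
  refine nat_log_diff _ _ (nA_pos _ _) (nA_pos _ _) (fun he => h ?_) _ (nA_le hy _ _) (nA_le hy _ _)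
  funext p
  rw [← nA_fact, he]; simp

lemma time_avg (L T H : ℝ) (hL : L ≠ 0) :
    ‖∫ t in T..(T+H), Complex.exp (I * ((L * t : ℝ) : ℂ))‖ ≤ 2 / |L| := by
  have hc : I * (L:ℂ) ≠ 0 := by simp [hL]
  have := integral_exp_mul_complex (a := T) (b := T + H) hc
  have e : (fun t : ℝ => Complex.exp (I * ((L * t : ℝ) : ℂ))) = fun t : ℝ => Complex.exp (I * L * t) := by
    funext t; congr 1; push_cast; ring
  rw [e, this, norm_div]
  have h2 : ‖I * (L:ℂ)‖ = |L| := by simp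
  rw [h2]
  gcongr
  refine (norm_sub_le _ _).trans ?_
  rw [norm_exp_aux2, norm_exp_aux2]; norm_num

lemma cc_sum (y : ℝ) (hy : 1 ≤ y) : ∑ x : Pr y × Bool, ‖cc x‖ ≤ y := by
  rw [Fintype.sum_prod_type]
  have h1 : ∀ p : Pr y, ∑ b : Bool, ‖cc (p, b)‖ ≤ 1 := by
    intro p
    rw [Fintype.sum_bool]
    have hp : 1 ≤ (p.1 : ℝ) := by exact_mod_cast (mem_primesLe p.2).one_lt.le
    have : 1 ≤ Real.sqrt (p.1:ℝ) := Real.one_le_sqrt.2 hp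
    simp only [cc]
    simp [abs_of_pos (by linarith : 0 < Real.sqrt (p.1:ℝ))]
    have h3 : (Real.sqrt (p.1:ℝ))⁻¹ ≤ 1 := inv_le_one_of_one_le₀ this
    linarith
  refine (Finset.sum_le_card_nsmul _ _ 1 fun p _ => h1 p).trans ?_
  rw [nsmul_one, Finset.card_univ, Fintype.card_coe]
  have : (primesLe y).card ≤ ⌊y⌋₊ := by
    have hsub : primesLe y ⊆ Finset.Icc 1 ⌊y⌋₊ := by
      intro p hp
      have h1 := (mem_primesLe hp).pos
      unfold primesLe at hp
      rw [Finset.mem_filter, Finset.mem_range] at hp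
      rw [Finset.mem_Icc]; omega
    simpa using Finset.card_le_card hsub
  exact (Nat.cast_le.2 this).trans (Nat.floor_le (by linarith))

lemma moment_cmp (y : ℝ) (hy : 1 ≤ y) (T H : ℝ) (hH : 0 < H) (k : ℕ) :
    |H⁻¹ * (∫ t in T..(T+H), Vy y t ^ k) - ∫ θ, SS y θ ^ k ∂(PM y)| ≤ 2 * y^(2*k) / H := by
  rw [← Real.norm_eq_abs, ← Complex.norm_real]
  push_cast
  rw [← intervalIntegral.integral_ofReal, ← integral_complex_ofReal]
  have e1 : ∫ t in T..(T+H), ((Vy y t ^ k : ℝ) : ℂ) =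
      ∑ j : Fin k → Pr y × Bool, (∏ i, cc (j i)) *
        ∫ t in T..(T+H), Complex.exp (I * (((∑ p, (nj j p : ℝ) * Real.log (p.1 : ℝ)) * t : ℝ) : ℂ)) := by
    have : (fun t : ℝ => ((Vy y t ^ k : ℝ) : ℂ)) = fun t => ∑ j : Fin k → Pr y × Bool, (∏ i, cc (j i)) *
        Complex.exp (I * (((∑ p, (nj j p : ℝ) * Real.log (p.1 : ℝ)) * t : ℝ) : ℂ)) := by
      funext t
      rw [Vy_eq_SS, Complex.ofReal_pow, SS_pow]
      refine Finset.sum_congr rfl fun j _ => ?_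
      congr 4
      rw [Finset.sum_mul]
      exact Finset.sum_congr rfl fun p _ => by ring
    rw [this, intervalIntegral.integral_finsetSum]
    · refine Finset.sum_congr rfl fun j _ => ?_
      rw [intervalIntegral.integral_const_mul]
    · intro j _
      exact Continuous.intervalIntegrable (by fun_prop) _ _
  have e2 : ∫ θ, ((SS y θ ^ k : ℝ) : ℂ) ∂(PM y) =
      ∑ j : Fin k → Pr y × Bool, (∏ i, cc (j i)) * (if nj j = 0 then 1 else 0) := by
    have : (fun θ => ((SS y θ ^ k : ℝ) : ℂ)) = fun θ => ∑ j : Fin k → Pr y × Bool, (∏ i, cc (j i)) * Complex.exp (I * ((∑ p, (nj j p : ℝ) * θ p : ℝ) : ℂ)) := by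
      funext θ
      rw [Complex.ofReal_pow, SS_pow]
    rw [this, integral_finsetSum]
    · refine Finset.sum_congr rfl fun j _ => ?_
      rw [integral_const_mul, PM_avg]
    · intro j _
      refine Integrable.const_mul ?_ _
      refine Integrable.of_bound (C := 1) (Continuous.aestronglyMeasurable (by fun_prop)) (Filter.Eventually.of_forall fun θ => ?_)
      rw [Complex.norm_exp_I_mul_ofReal]
  rw [e1, e2, Finset.mul_sum, ← Finset.sum_sub_distrib]
  refine (norm_sum_le _ _).trans ?_
  have hb : ∀ j : Fin k → Pr y × Bool, ‖(H:ℂ)⁻¹ * ((∏ i, cc (j i)) *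
        ∫ t in T..(T+H), Complex.exp (I * (((∑ p, (nj j p : ℝ) * Real.log (p.1 : ℝ)) * t : ℝ) : ℂ))) -
        (∏ i, cc (j i)) * (if nj j = 0 then 1 else 0)‖ ≤ (∏ i, ‖cc (j i)‖) * (2 * y^k / H) := by
    intro j
    have hHc : (H:ℂ) ≠ 0 := by exact_mod_cast hH.ne'
    split_ifs with h
    · simp [h, hHc]
      have : (H:ℂ)⁻¹ * ((∏ i, cc (j i)) * H) - ∏ i, cc (j i) = 0 := by
        field_simp; ring
      rw [this, norm_zero]
      positivity
    · rw [mul_zero, sub_zero, norm_mul, norm_mul, norm_prod, norm_inv, Complex.norm_real, Real.norm_eq_abs, abs_of_pos hH]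
      have hf := freq_lower hy j h
      have hyk : 0 < y^k := by positivity
      have hL : 0 < |∑ p, (nj j p : ℝ) * Real.log (p.1 : ℝ)| := lt_of_lt_of_le (by positivity) hf
      have ht := time_avg (∑ p, (nj j p : ℝ) * Real.log (p.1 : ℝ)) T H (abs_pos.1 hL)
      have h2 : 2 / |∑ p, (nj j p : ℝ) * Real.log (p.1 : ℝ)| ≤ 2 * y^k := by
        rw [div_le_iff₀ hL]
        rw [div_le_iff₀ hyk] at hf
        linarith
      calc _ ≤ H⁻¹ * ((∏ i, ‖cc (j i)‖) * (2 * y^k)) := by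
            gcongr
            exact ht.trans h2
        _ = _ := by ring
  refine (Finset.sum_le_sum fun j _ => hb j).trans ?_
  have hsp := Fintype.sum_pow (fun x : Pr y × Bool => ‖cc x‖) k
  rw [← Finset.sum_mul, ← hsp]
  have := cc_sum y hy
  calc _ ≤ y^k * (2 * y^k / H) := by gcongr
    _ = _ := by ring

lemma Vy_continuous (y : ℝ) : Continuous (Vy y) := by unfold Vy; fun_prop

lemma charfun_cmp (y : ℝ) (hy : 1 ≤ y) (T H : ℝ) (hH : 0 < H) (K : ℕ) (hK : Even K) (hK1 : 1 ≤ K)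
    (lam s : ℝ) (hs : 0 < s) :
    ‖(H:ℂ)⁻¹ * (∫ t in T..(T+H), Complex.exp (I * ((lam * Vy y t : ℝ) : ℂ))) -
      Complex.exp (-(lam:ℂ)^2/4 * sigmay y) * Phifun y (-(lam:ℂ)^2/4)‖ ≤
      |lam| * Real.exp |lam| * (2 * y^(2*K) / H) + 4 * (|lam|/s)^K * Real.exp (s^2/4 * sigmay y) := by
  have hHc : (H:ℂ) ≠ 0 := by exact_mod_cast hH.ne'
  have hV := Vy_continuous y
  have hmg := SS_mgf y (I * lam)
  rw [show (I * (lam:ℂ))^2 = -(lam:ℂ)^2 by rw [mul_pow, Complex.I_sq]; ring] at hmg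
  rw [← hmg]
  -- remainder functions
  set R : ℝ → ℂ := fun x => Complex.exp (I * x) - ∑ k ∈ Finset.range K, (I * x)^k / (k.factorial : ℂ) with hR
  have hRc : Continuous R := by rw [hR]; fun_prop
  set m : ℕ → ℝ := fun k => H⁻¹ * (∫ t in T..(T+H), Vy y t ^ k) with hm
  set M : ℕ → ℝ := fun k => ∫ θ, SS y θ ^ k ∂(PM y) with hM
  have hcmp : ∀ k, |m k - M k| ≤ 2 * y^(2*k) / H := moment_cmp y hy T H hH
  have i1 : (H:ℂ)⁻¹ * (∫ t in T..(T+H), Complex.exp (I * ((lam * Vy y t : ℝ) : ℂ))) =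
     (∑ k ∈ Finset.range K, (I * lam)^k / (k.factorial : ℂ) * m k) + (H:ℂ)⁻¹ * ∫ t in T..(T+H), R (lam * Vy y t) := by
    have e : (fun t : ℝ => Complex.exp (I * ((lam * Vy y t : ℝ) : ℂ))) =
       fun t : ℝ => (∑ k ∈ Finset.range K, (I * lam)^k / (k.factorial : ℂ) * ((Vy y t ^ k : ℝ) : ℂ)) + R (lam * Vy y t) := by
      funext t
      simp only [hR]
      have : ∀ k, (I * lam)^k / (k.factorial : ℂ) * ((Vy y t ^ k : ℝ) : ℂ) = (I * ((lam * Vy y t : ℝ) : ℂ))^k / (k.factorial : ℂ) := by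
        intro k; push_cast; rw [← mul_assoc, mul_pow (I * (lam:ℂ))]; ring
      simp only [this]; ring
    rw [e, intervalIntegral.integral_add, intervalIntegral.integral_finsetSum, mul_add, Finset.mul_sum]
    · congr 1
      refine Finset.sum_congr rfl fun k _ => ?_
      rw [intervalIntegral.integral_const_mul, intervalIntegral.integral_ofReal]
      simp only [hm]; push_cast; ring
    · intro k _; exact Continuous.intervalIntegrable (by fun_prop) _ _
    · exact Continuous.intervalIntegrable (by fun_prop) _ _
    · exact Continuous.intervalIntegrable (by fun_prop) _ _
  have i2 : ∫ θ, Complex.exp (I * lam * SS y θ) ∂(PM y) =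
     (∑ k ∈ Finset.range K, (I * lam)^k / (k.factorial : ℂ) * M k) + ∫ θ, R (lam * SS y θ) ∂(PM y) := by
    have e : (fun θ => Complex.exp (I * lam * SS y θ)) =
       fun θ => (∑ k ∈ Finset.range K, (I * lam)^k / (k.factorial : ℂ) * ((SS y θ ^ k : ℝ) : ℂ)) + R (lam * SS y θ) := by
      funext θ
      simp only [hR]
      have : ∀ k, (I * lam)^k / (k.factorial : ℂ) * ((SS y θ ^ k : ℝ) : ℂ) = (I * ((lam * SS y θ : ℝ) : ℂ))^k / (k.factorial : ℂ) := by
        intro k; push_cast; rw [← mul_assoc, mul_pow (I * (lam:ℂ))]; ring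
      simp only [this]; push_cast; rw [← mul_assoc]; ring
    rw [e, integral_add, integral_finsetSum]
    · congr 1
      refine Finset.sum_congr rfl fun k _ => ?_
      rw [integral_const_mul, integral_complex_ofReal]
    · intro k _
      exact SS_integrable y (fun x => (I * lam)^k / (k.factorial : ℂ) * ((x ^ k : ℝ) : ℂ)) (by fun_prop)
    · exact SS_integrable y (fun x => ∑ k ∈ Finset.range K, (I * lam)^k / (k.factorial : ℂ) * ((x ^ k : ℝ) : ℂ)) (by fun_prop)
    · exact SS_integrable y (fun x => R (lam * x)) (by fun_prop)
  have hRb : ∀ x, ‖R (lam * x)‖ ≤ |lam|^K / K.factorial * x^K := by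
    intro x
    refine (taylor_exp K (lam * x)).trans (le_of_eq ?_)
    rw [abs_mul, mul_pow, Even.pow_abs hK x]; ring
  have r1 : ‖(H:ℂ)⁻¹ * ∫ t in T..(T+H), R (lam * Vy y t)‖ ≤ |lam|^K / K.factorial * m K := by
    rw [norm_mul, norm_inv, Complex.norm_real, Real.norm_eq_abs, abs_of_pos hH]
    have := intervalIntegral.norm_integral_le_of_norm_le (a := T) (b := T+H) (μ := volume) (by linarith)
      (Filter.Eventually.of_forall fun t _ => hRb (Vy y t))
      (Continuous.intervalIntegrable (by fun_prop) _ _)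
    rw [intervalIntegral.integral_const_mul] at this
    calc _ ≤ H⁻¹ * (|lam|^K / K.factorial * ∫ t in T..(T+H), Vy y t ^ K) := by gcongr
      _ = _ := by simp only [hm]; ring
  have r2 : ‖∫ θ, R (lam * SS y θ) ∂(PM y)‖ ≤ |lam|^K / K.factorial * M K := by
    have := norm_integral_le_of_norm_le (μ := PM y) (f := fun θ => R (lam * SS y θ))
      (SS_integrable y (fun x => |lam|^K / K.factorial * x^K) (by fun_prop))
      (Filter.Eventually.of_forall fun θ => hRb (SS y θ))
    rwa [integral_const_mul] at this
  have hy2 : ∀ k ≤ K, y^(2*k) ≤ y^(2*K) := fun k hk => pow_le_pow_right₀ hy (by omega)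
  set Q := 2 * y^(2*K) / H with hQ
  have hQ0 : 0 ≤ Q := by positivity
  have hcmp' : ∀ k ≤ K, |m k - M k| ≤ Q := fun k hk => (hcmp k).trans (by
    rw [hQ]; have := hy2 k hk; gcongr)
  have hm0 : m 0 = M 0 := by simp [hm, hM, hH.ne']
  have hsum : ‖∑ k ∈ Finset.range K, (I * lam)^k / (k.factorial : ℂ) * ((m k : ℂ) - M k)‖ + |lam|^K / K.factorial * |m K - M K|
      ≤ |lam| * Real.exp |lam| * Q := by
    have h1 : ‖∑ k ∈ Finset.range K, (I * lam)^k / (k.factorial : ℂ) * ((m k : ℂ) - M k)‖ ≤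
        ∑ k ∈ Finset.range K, |lam|^k / k.factorial * |m k - M k| := by
      refine (norm_sum_le _ _).trans (le_of_eq (Finset.sum_congr rfl fun k _ => ?_))
      rw [← Complex.ofReal_sub, norm_mul, norm_div, norm_pow, norm_mul, Complex.norm_I, one_mul,
        Complex.norm_real, Complex.norm_real, Complex.norm_natCast]
      rfl
    have h2 : ∑ k ∈ Finset.range (K+1), |lam|^k / k.factorial * |m k - M k| ≤
        |lam| * Real.exp |lam| * Q := by
      rw [Finset.sum_range_succ', hm0]
      simp only [sub_self, abs_zero, mul_zero, add_zero]
      have h3 : ∀ k ∈ Finset.range K, |lam|^(k+1) / (k+1).factorial * |m (k+1) - M (k+1)| ≤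
          (|lam| * (|lam|^k / k.factorial)) * Q := by
        intro k hk
        rw [Finset.mem_range] at hk
        have h4 : (k.factorial:ℝ) ≤ (k+1).factorial := by exact_mod_cast Nat.factorial_le (Nat.le_succ k)
        have h5 : (0:ℝ) < k.factorial := by exact_mod_cast k.factorial_pos
        have := hcmp' (k+1) hk
        calc _ ≤ |lam|^(k+1) / k.factorial * Q := by gcongr
          _ = _ := by ring
      refine (Finset.sum_le_sum h3).trans ?_
      rw [← Finset.sum_mul, ← Finset.mul_sum]
      have := Real.sum_le_exp_of_nonneg (abs_nonneg lam) K
      gcongr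
    rw [Finset.sum_range_succ] at h2
    linarith
  have hMK := SS_moment_le y s hs K hK
  have hlast : |lam|^K / K.factorial * M K ≤ 2 * (|lam|/s)^K * Real.exp (s^2/4 * sigmay y) := by
    calc |lam|^K / K.factorial * M K = |lam|^K * (M K / K.factorial) := by ring
      _ ≤ |lam|^K * (2 * Real.exp (s^2/4 * sigmay y) / s^K) := by gcongr
      _ = _ := by rw [div_pow]; ring
  have hdiff : |lam|^K / K.factorial * m K ≤ |lam|^K / K.factorial * |m K - M K| + |lam|^K / K.factorial * M K := by
    rw [← mul_add]
    have := le_abs_self (m K - M K)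
    gcongr; linarith
  rw [i1, i2]
  have eq : (∑ k ∈ Finset.range K, (I * lam)^k / (k.factorial : ℂ) * (m k : ℂ)) + (H:ℂ)⁻¹ * (∫ t in T..(T+H), R (lam * Vy y t))
     - ((∑ k ∈ Finset.range K, (I * lam)^k / (k.factorial : ℂ) * (M k : ℂ)) + ∫ θ, R (lam * SS y θ) ∂(PM y)) =
     (∑ k ∈ Finset.range K, (I * lam)^k / (k.factorial : ℂ) * ((m k : ℂ) - M k)) + (H:ℂ)⁻¹ * (∫ t in T..(T+H), R (lam * Vy y t)) - ∫ θ, R (lam * SS y θ) ∂(PM y) := by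
    simp only [mul_sub, Finset.sum_sub_distrib]; ring
  rw [eq]
  refine (norm_sub_le _ _).trans ?_
  have := norm_add_le (∑ k ∈ Finset.range K, (I * lam)^k / (k.factorial : ℂ) * ((m k : ℂ) - M k)) ((H:ℂ)⁻¹ * (∫ t in T..(T+H), R (lam * Vy y t)))
  linarith


lemma sigma_lower {y : ℝ} (hy : 1 ≤ y) (hl : 1 ≤ Real.log y) : Real.log (Real.log y) - 1 ≤ sigmay y := by
  have h1 : 1 ≤ ⌊y⌋₊ := Nat.one_le_floor_iff _ |>.2 hy
  have h := mertens_lower ⌊y⌋₊ h1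
  unfold sigmay
  rw [primesLe_eq]
  have h2 : y ≤ (⌊y⌋₊:ℝ) + 1 := (Nat.lt_floor_add_one y).le
  have h3 : Real.log y ≤ Real.log ((⌊y⌋₊:ℝ)+1) := Real.log_le_log (by linarith) h2
  have h4 := Real.log_le_log (by linarith) h3
  linarith

lemma Lf_pos {n : ℕ} (hn : 1 ≤ n) : 0 < Lf n := lt_of_lt_of_le (by norm_num) (Lf_ge hn)

lemma Lf_ratio {n : ℕ} (hn : 1 ≤ n) : (Lf (n+1))^n ≤ Real.exp 4 * (Lf n)^n := by
  have hL := Lf_ge hn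
  have hn1 : (1:ℝ) ≤ n := by exact_mod_cast hn
  have hlog : 1/2 ≤ Real.log ((n:ℝ)+1) := by
    have := Real.log_two_gt_d9
    have h2 : Real.log 2 ≤ Real.log ((n:ℝ)+1) := Real.log_le_log (by norm_num) (by linarith)
    linarith
  have hd : Lf (n+1) - Lf n ≤ 2/((n:ℝ)+1) := by
    unfold Lf
    push_cast
    have e : (n:ℝ)+1+1 = ((n:ℝ)+1) * (1 + 1/((n:ℝ)+1)) := by field_simp
    have hp : (0:ℝ) < 1/((n:ℝ)+1) := by positivity
    have h1 : Real.log ((n:ℝ)+1+1) ≤ Real.log ((n:ℝ)+1) + 1/((n:ℝ)+1) := by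
      rw [e, Real.log_mul (by positivity) (by positivity)]
      have := Real.log_le_sub_one_of_pos (show (0:ℝ) < 1 + 1/((n:ℝ)+1) by positivity)
      linarith
    have h2 : Real.log (Real.log ((n:ℝ)+1+1)) ≤ Real.log (Real.log ((n:ℝ)+1) * (1 + 2/((n:ℝ)+1))) := by
      apply Real.log_le_log
      · apply Real.log_pos; linarith
      · refine h1.trans ?_
        have : 1/((n:ℝ)+1) ≤ Real.log ((n:ℝ)+1) * (2/((n:ℝ)+1)) := by
          rw [← mul_div_assoc]
          gcongr
          linarith
        linarith
    rw [Real.log_mul (by positivity) (by positivity)] at h2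
    have := Real.log_le_sub_one_of_pos (show (0:ℝ) < 1 + 2/((n:ℝ)+1) by positivity)
    linarith
  have h5 : Lf (n+1) ≤ (1 + 4/((n:ℝ)+1)) * Lf n := by
    have : 2/((n:ℝ)+1) ≤ 4/((n:ℝ)+1) * Lf n := by
      calc 2/((n:ℝ)+1) = 4/((n:ℝ)+1) * (1/2) := by ring
        _ ≤ _ := by gcongr
    linarith
  calc (Lf (n+1))^n ≤ ((1 + 4/((n:ℝ)+1)) * Lf n)^n := by
        gcongr
        exact (Lf_pos (by omega)).le
    _ = (1 + 4/((n:ℝ)+1))^n * Lf n^n := by rw [mul_pow]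
    _ ≤ (Real.exp (4/((n:ℝ)+1)))^n * Lf n^n := by
        gcongr
        have := Real.add_one_le_exp (4/((n:ℝ)+1))
        linarith
    _ ≤ _ := by
        rw [← Real.exp_nat_mul]
        gcongr
        rw [← mul_div_assoc, div_le_iff₀ (by positivity)]
        linarith

/-- the third term. -/
noncomputable def bb (σ : ℝ) (m : ℕ) : ℝ := (1/((m:ℝ)+1)) * (Lf (m+1) / σ)^(m+1)

lemma bb_nonneg {σ : ℝ} (hσ : 0 < σ) (m : ℕ) : 0 ≤ bb σ m := by
  unfold bb
  have := Lf_pos (show 1 ≤ m+1 by omega)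
  positivity

lemma bb_ratio {σ : ℝ} (hσ : 0 < σ) (m : ℕ) (h : Lf (m+2) ≤ σ/200) : 2 * bb σ (m+1) ≤ bb σ m := by
  unfold bb
  have h1 := Lf_pos (show 1 ≤ m+1 by omega)
  have h2 := Lf_pos (show 1 ≤ m+2 by omega)
  have hr := Lf_ratio (show 1 ≤ m+1 by omega)
  have he : Real.exp 4 ≤ 100 := by
    have : Real.exp 4 = (Real.exp 1)^4 := by rw [← Real.exp_nat_mul]; norm_num
    rw [this]
    have h3 := Real.exp_one_lt_d9
    calc (Real.exp 1)^4 ≤ (2.7182818286)^4 := by gcongr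
      _ ≤ 100 := by norm_num
  have hs : Lf (m+2) / σ ≤ 1/200 := by rw [div_le_iff₀ hσ]; linarith
  push_cast
  have e : (Lf (m+1+1)/σ)^(m+1+1) ≤ (1/2) * (Lf (m+1)/σ)^(m+1) := by
    calc (Lf (m+1+1)/σ)^(m+1+1) = (Lf (m+1+1))^(m+1) / σ^(m+1) * (Lf (m+2)/σ) := by
          rw [pow_succ, div_pow]
      _ ≤ (Real.exp 4 * Lf (m+1)^(m+1)) / σ^(m+1) * (1/200) := by gcongr
      _ ≤ (100 * Lf (m+1)^(m+1)) / σ^(m+1) * (1/200) := by gcongr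
      _ = _ := by rw [div_pow]; ring
  calc 2 * (1/((m:ℝ)+1+1) * (Lf (m+1+1)/σ)^(m+1+1)) ≤ 2 * (1/((m:ℝ)+1) * ((1/2) * (Lf (m+1)/σ)^(m+1))) := by
        gcongr
        linarith
    _ = _ := by ring

lemma bb_sum {σ : ℝ} (hσ : 0 < σ) (ν n1 : ℕ) (h : Lf n1 ≤ σ/200) :
    ∑ m ∈ Finset.Ico ν n1, bb σ m ≤ 2 * bb σ ν := by
  by_cases hν : n1 ≤ ν
  · rw [Finset.Ico_eq_empty (by omega), Finset.sum_empty]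
    have := bb_nonneg hσ ν
    linarith
  have key : ∀ M, ν + 1 ≤ M → M ≤ n1 → ∑ m ∈ Finset.Ico ν M, bb σ m ≤ 2 * bb σ ν - bb σ (M-1) := by
    intro M hM
    induction M, hM using Nat.le_induction with
    | base => intro _; simp; linarith
    | succ M hM ih =>
      intro hM1
      rw [Finset.sum_Ico_succ_top (by omega)]
      have := ih (by omega)
      obtain ⟨k, rfl⟩ : ∃ k, M = k+1 := ⟨M-1, by omega⟩
      have h3 := bb_ratio hσ k ((Lf_mono (by omega) (by omega)).trans h)
      simp only [Nat.add_sub_cancel] at *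
      linarith
  have := key n1 (by omega) le_rfl
  have := bb_nonneg hσ (n1-1)
  linarith


lemma big_facts {y : ℝ} (hy : 1 ≤ y) (hl : 1000000 ≤ Real.log (Real.log y)) (hL0 : 0 < Real.log y) :
    Real.log (Real.log y) + 1 ≤ Real.log y ∧ Real.log (Real.log y) - 1 ≤ sigmay y ∧
      Lf ⌈(Real.log y)^2⌉₊ ≤ sigmay y / 200 := by
  set L := Real.log y with hL
  set l := Real.log L with hll
  have h1 : l + 1 ≤ L := by
    have := Real.log_le_sub_one_of_pos hL0
    linarith
  have h2 : l - 1 ≤ sigmay y := sigma_lower hy (by linarith)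
  refine ⟨h1, h2, ?_⟩
  have h3 : Lf ⌈L^2⌉₊ ≤ Real.log (3 * l) + 1 := by
    unfold Lf
    have hc : (⌈L^2⌉₊:ℝ) < L^2 + 1 := Nat.ceil_lt_add_one (by positivity)
    have hc0 : L^2 ≤ (⌈L^2⌉₊:ℝ) := Nat.le_ceil _
    have hL2 : 1 ≤ L^2 := by nlinarith
    have hle : (⌈L^2⌉₊:ℝ) + 1 ≤ L^3 := by nlinarith
    have ha : Real.log ((⌈L^2⌉₊:ℝ) + 1) ≤ 3 * l := by
      calc _ ≤ Real.log (L^3) := Real.log_le_log (by positivity) hle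
        _ = 3 * l := by rw [Real.log_pow, ← hll]; norm_num
    have hb : 0 < Real.log ((⌈L^2⌉₊:ℝ) + 1) := Real.log_pos (by linarith)
    have := Real.log_le_log hb ha
    linarith
  have hsq : 1000 ≤ Real.sqrt l := by
    apply Real.le_sqrt_of_sq_le; norm_num; linarith
  have hss : Real.sqrt l ^ 2 = l := Real.sq_sqrt (by linarith)
  have h4 : Real.log (3 * l) ≤ 2 + 2 * Real.sqrt l := by
    rw [Real.log_mul (by norm_num) (by linarith), ← hss, Real.log_pow]
    have := Real.log_le_sub_one_of_pos (show (0:ℝ) < 3 by norm_num)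
    have := Real.log_le_sub_one_of_pos (show (0:ℝ) < Real.sqrt l by linarith)
    rw [hss]
    push_cast
    linarith
  have : 3 + 2 * Real.sqrt l ≤ (l - 1)/200 := by nlinarith
  linarith

lemma nu_Lf {y : ℝ} (hy : 1 ≤ y) (hl : 1000000 ≤ Real.log (Real.log y)) (hL0 : 0 < Real.log y)
    {ν : ℕ} (hν : (ν : ℝ) ≤ Real.exp ((Real.log y) ^ ((1 : ℝ) / 4))) {n : ℕ} (hn : 1 ≤ n) (hnν : n ≤ ν) :
    Lf n ≤ sigmay y / 2 := by
  obtain ⟨h1, h2, -⟩ := big_facts hy hl hL0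
  set L := Real.log y with hL
  set l := Real.log L with hll
  set w := L ^ ((1:ℝ)/4) with hw
  have hw1 : 1 ≤ w := Real.one_le_rpow (by linarith) (by norm_num)
  have hn1 : (1:ℝ) ≤ n := by exact_mod_cast hn
  have hnn : (n:ℝ) ≤ ν := by exact_mod_cast hnν
  have h3 : (n:ℝ) + 1 ≤ Real.exp (2 * w) := by
    have : Real.exp (2*w) = Real.exp w * Real.exp w := by rw [← Real.exp_add]; ring_nf
    have h4 := Real.add_one_le_exp w
    have : 2 ≤ Real.exp w := by linarith
    nlinarith
  have h5 : Real.log ((n:ℝ)+1) ≤ 2 * w := by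
    rw [Real.log_le_iff_le_exp (by positivity)]; exact h3
  have h6 : Real.log (Real.log ((n:ℝ)+1)) ≤ Real.log (2 * w) :=
    Real.log_le_log (Real.log_pos (by linarith)) h5
  rw [Real.log_mul (by norm_num) (by linarith), hw, Real.log_rpow hL0] at h6
  have := Real.log_two_lt_d9
  unfold Lf
  linarith

/-- sum bound -/
lemma coef_sum_bound : ∃ C > 0, ∀ y : ℝ, 1 ≤ y → 1000000 ≤ Real.log (Real.log y) → 0 < Real.log y → ∀ ν : ℕ,
    (ν : ℝ) ≤ Real.exp ((Real.log y) ^ ((1 : ℝ) / 4)) →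
    ∑ n ∈ Finset.range (ν+1), (n.factorial : ℝ) * |PhiCoefR y n| / sigmay y ^ n ≤ C := by
  obtain ⟨C₁, hC₁, hc⟩ := coef_main
  refine ⟨1 + C₁ * 2, by positivity, ?_⟩
  intro y hy hl hL0 ν hν
  obtain ⟨h1, h2, -⟩ := big_facts hy hl hL0
  have hσ : 0 < sigmay y := by linarith
  rw [Finset.sum_range_succ']
  have e0 : ((Nat.factorial 0 : ℕ):ℝ) * |PhiCoefR y 0| / sigmay y ^ 0 = 1 := by
    rw [coef_zero]; simp
  rw [e0]
  have hb : ∑ n ∈ Finset.range ν, ((n+1).factorial : ℝ) * |PhiCoefR y (n+1)| / sigmay y ^ (n+1) ≤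
      ∑ n ∈ Finset.range ν, C₁ * (1/2)^(n+1) := by
    refine Finset.sum_le_sum fun n hn => ?_
    have hn := Finset.mem_range.1 hn
    have hLn := nu_Lf hy hl hL0 hν (show 1 ≤ n+1 by omega) (by omega)
    have hLp := Lf_pos (show 1 ≤ n+1 by omega)
    have := hc (n+1) (by omega) y
    calc _ ≤ C₁ * (Lf (n+1))^(n+1) / sigmay y^(n+1) := by gcongr
      _ = C₁ * (Lf (n+1) / sigmay y)^(n+1) := by rw [div_pow]; ring
      _ ≤ _ := by
        have hq : Lf (n+1) / sigmay y ≤ 1/2 := by rw [div_le_iff₀ hσ]; linarith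
        have hq0 : 0 ≤ Lf (n+1) / sigmay y := by positivity
        exact mul_le_mul_of_nonneg_left (pow_le_pow_left₀ hq0 hq _) hC₁.le
  have hg : ∑ n ∈ Finset.range ν, C₁ * (1/2:ℝ)^(n+1) ≤ C₁ * 2 := by
    rw [← Finset.mul_sum]
    gcongr
    have := (Summable.sum_le_tsum (Finset.range ν) (fun i _ => by positivity) summable_geometric_two)
    rw [tsum_geometric_two] at this
    refine le_trans (Finset.sum_le_sum fun n _ => ?_) this
    rw [pow_succ]
    have : (0:ℝ) < (1/2)^n := by positivity
    linarith
  linarith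

/-- series tail, pointwise. -/
lemma series_pt {y : ℝ} (hσ : 0 < sigmay y) {Λ : ℝ} (hΛ : 0 < Λ) (ν n1 : ℕ) (ξ : ℝ) (hξ : |ξ| ≤ Λ) :
    |(Phifun y ((-ξ^2/(2*sigmay y) : ℝ):ℂ)).re - ∑ n ∈ Finset.range (ν+1), PhiCoefR y n * (-ξ^2/(2*sigmay y))^n| ≤
      (∑ m ∈ Finset.Ico ν n1, |PhiCoefR y (m+1)| * (ξ^2/(2*sigmay y))^(m+1)) +
      (|ξ|/Λ) * (Real.exp (2*Λ^2) * (1/4)^n1) := by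
  set σ := sigmay y with hσd
  set x := -ξ^2/(2*σ) with hx
  have hax : |x| = ξ^2/(2*σ) := by
    rw [hx, abs_div, abs_neg, abs_of_nonneg (sq_nonneg ξ), abs_of_pos (by positivity)]
  have hs := Phi_hasSum y x
  set M := max ν n1 + 1 with hM
  have ht := (hasSum_nat_add_iff' M).2 hs
  have hcb : ∀ n, |PhiCoefR y n| ≤ Real.exp (2*Λ^2) / (2*Λ^2/σ)^n := by
    intro n
    refine coef_bound y (2*Λ^2/σ) _ (by positivity) n fun z hz => ?_
    refine (Phi_norm_sigma y z).trans (le_of_eq ?_)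
    rw [hz, ← hσd]; congr 1; field_simp
  have htb : ∀ n, 1 ≤ n → ‖PhiCoefR y n * x^n‖ ≤ (|ξ|/Λ) * Real.exp (2*Λ^2) * (1/4)^n := by
    intro n hn
    rw [norm_mul, norm_pow, Real.norm_eq_abs, Real.norm_eq_abs, hax]
    have hr0 : 0 ≤ |ξ|/Λ := by positivity
    have hr1 : |ξ|/Λ ≤ 1 := by rw [div_le_one hΛ]; exact hξ
    calc _ ≤ Real.exp (2*Λ^2) / (2*Λ^2/σ)^n * (ξ^2/(2*σ))^n := by gcongr; exact hcb n
      _ = Real.exp (2*Λ^2) * ((|ξ|/Λ)^(2*n) * (1/4)^n) := by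
        rw [div_mul_eq_mul_div, mul_div_assoc, ← div_pow, pow_mul, ← mul_pow, div_pow |ξ| Λ, sq_abs]
        congr 2
        field_simp
        norm_num
      _ ≤ Real.exp (2*Λ^2) * ((|ξ|/Λ)^1 * (1/4)^n) := by
        have := pow_le_pow_of_le_one hr0 hr1 (show 1 ≤ 2*n by omega)
        exact mul_le_mul_of_nonneg_left (mul_le_mul_of_nonneg_right this (by positivity)) (Real.exp_pos _).le
      _ = _ := by ring
  have hgeo : HasSum (fun n : ℕ => (|ξ|/Λ) * Real.exp (2*Λ^2) * (1/4)^(n+M)) ((|ξ|/Λ) * Real.exp (2*Λ^2) * (1/4)^M * (1-1/4)⁻¹) := by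
    have := (hasSum_geometric_of_lt_one (show (0:ℝ) ≤ 1/4 by norm_num) (by norm_num)).mul_left ((|ξ|/Λ) * Real.exp (2*Λ^2) * (1/4)^M)
    refine this.congr_fun ?_ |> fun h => h
    intro n
    rw [pow_add]; ring
  have hT := ht.norm_le_of_bounded hgeo (fun n => htb _ (by omega))
  have hsplit : ∑ n ∈ Finset.range M, PhiCoefR y n * x^n = ∑ n ∈ Finset.range (ν+1), PhiCoefR y n * x^n +
      ∑ m ∈ Finset.Ico ν (max ν n1), PhiCoefR y (m+1) * x^(m+1) := by
    rw [Finset.range_eq_Ico, Finset.range_eq_Ico, ← Finset.sum_Ico_consecutive _ (Nat.zero_le (ν+1)) (show ν+1 ≤ M by omega), Finset.sum_Ico_add' (fun n => PhiCoefR y n * x^n)]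
  have hfin : |∑ m ∈ Finset.Ico ν (max ν n1), PhiCoefR y (m+1) * x^(m+1)| ≤
      ∑ m ∈ Finset.Ico ν n1, |PhiCoefR y (m+1)| * (ξ^2/(2*σ))^(m+1) := by
    have e : Finset.Ico ν (max ν n1) = Finset.Ico ν n1 := by
      ext i; simp only [Finset.mem_Ico]; omega
    rw [e]
    refine (Finset.abs_sum_le_sum_abs _ _).trans (le_of_eq ?_)
    refine Finset.sum_congr rfl fun m _ => ?_
    rw [abs_mul, abs_pow, hax]
  have hlast : (|ξ|/Λ) * Real.exp (2*Λ^2) * (1/4)^M * (1-1/4)⁻¹ ≤ (|ξ|/Λ) * (Real.exp (2*Λ^2) * (1/4)^n1) := by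
    have : (1/4:ℝ)^M ≤ (1/4)^(n1+1) := pow_le_pow_of_le_one (by norm_num) (by norm_num) (by omega)
    have h0 : (0:ℝ) < (1/4)^n1 := by positivity
    rw [pow_succ (1/4:ℝ) n1] at this
    have h3 : (1/4:ℝ)^M * (1-1/4)⁻¹ ≤ (1/4)^n1 := by
      rw [show (1 - 1/4:ℝ)⁻¹ = 4/3 by norm_num]
      linarith
    have hr0 : 0 ≤ |ξ|/Λ * Real.exp (2*Λ^2) := by positivity
    calc _ = (|ξ|/Λ * Real.exp (2*Λ^2)) * ((1/4:ℝ)^M * (1-1/4)⁻¹) := by ring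
      _ ≤ (|ξ|/Λ * Real.exp (2*Λ^2)) * (1/4)^n1 := by gcongr
      _ = _ := by ring
  rw [Real.norm_eq_abs, hsplit] at hT
  calc _ = |((Phifun y (x:ℂ)).re - (∑ n ∈ Finset.range (ν+1), PhiCoefR y n * x^n +
      ∑ m ∈ Finset.Ico ν (max ν n1), PhiCoefR y (m+1) * x^(m+1))) + ∑ m ∈ Finset.Ico ν (max ν n1), PhiCoefR y (m+1) * x^(m+1)| := by
        congr 1; ring
    _ ≤ _ := by
      refine (abs_add_le _ _).trans ?_
      linarith


/-- first term of Delta -/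
noncomputable def dl (y : ℝ) : ℝ := (Real.log y) ^ (-(1 : ℝ) / 2) / Real.log (Real.log y)

lemma dl_eq {y : ℝ} (hL : 0 < Real.log y) : dl y = 1 / (Real.sqrt (Real.log y) * Real.log (Real.log y)) := by
  unfold dl
  rw [neg_div, Real.rpow_neg hL.le, ← Real.sqrt_eq_rpow]
  field_simp

lemma dl_ge {y : ℝ} (hL : 0 < Real.log y) (hl : 0 < Real.log (Real.log y)) : 1 / Real.log y ≤ 2 * dl y := by
  rw [dl_eq hL]
  have hs := Real.sqrt_pos.2 hL
  have hss := Real.sq_sqrt hL.le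
  have h : Real.log (Real.log y) ≤ 2 * Real.sqrt (Real.log y) := by
    have h1 := Real.log_le_sub_one_of_pos hs
    have h2 : Real.log (Real.log y) = 2 * Real.log (Real.sqrt (Real.log y)) := by
      rw [Real.log_sqrt hL.le]; ring
    linarith
  rw [mul_one_div, div_le_div_iff₀ hL (by positivity)]
  nlinarith

lemma tail_small {y Λ : ℝ} (hL : 1 ≤ Real.log y) (hl : 0 < Real.log (Real.log y)) (hΛ : Λ^2 ≤ (Real.log y)^2/4) :
    Real.exp (2*Λ^2) * (1/4)^⌈(Real.log y)^2⌉₊ ≤ 2 * dl y := by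
  refine le_trans ?_ (dl_ge (by linarith) hl)
  set L := Real.log y
  have h1 : (1/4:ℝ) ≤ Real.exp (-1) := by
    rw [Real.exp_neg, ← one_div]
    have := Real.exp_one_lt_d9
    apply one_div_le_one_div_of_le (Real.exp_pos _); linarith
  have h2 : (1/4:ℝ)^⌈L^2⌉₊ ≤ Real.exp (-L^2) := by
    calc _ ≤ (Real.exp (-1))^⌈L^2⌉₊ := by gcongr
      _ = Real.exp (-(⌈L^2⌉₊:ℝ)) := by rw [← Real.exp_nat_mul]; ring_nf
      _ ≤ _ := by
        apply Real.exp_le_exp.2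
        have := Nat.le_ceil (L^2)
        linarith
  have h3 : Real.exp (2*Λ^2) ≤ Real.exp (L^2/2) := Real.exp_le_exp.2 (by linarith)
  calc _ ≤ Real.exp (L^2/2) * Real.exp (-L^2) := by gcongr
    _ = 1 / Real.exp (L^2/2) := by rw [← Real.exp_add, one_div, ← Real.exp_neg]; ring_nf
    _ ≤ 1 / L := by
      apply one_div_le_one_div_of_le (by linarith)
      have := Real.add_one_le_exp (L^2/2)
      nlinarith [sq_nonneg (L-1)]

lemma series_B : ∃ C > 0, ∀ y : ℝ, 1 ≤ y → 1000000 ≤ Real.log (Real.log y) → 0 < Real.log y → ∀ ν : ℕ,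
    ∀ Λ : ℝ, 0 < Λ → Λ^2 ≤ (Real.log y)^2/4 → ∃ B : ℝ → ℝ, Continuous B ∧
      (∀ ξ : ℝ, |ξ| ≤ Λ → Real.exp (-ξ^2/2) * |(Phifun y ((-ξ^2/(2*sigmay y) : ℝ):ℂ)).re - ∑ n ∈ Finset.range (ν+1), PhiCoefR y n * (-ξ^2/(2*sigmay y))^n| ≤ |ξ| * B ξ) ∧
      ∫ ξ in (-Λ)..Λ, B ξ ≤ C * (dl y + bb (sigmay y) ν) := by
  obtain ⟨C₁, hC₁, hc⟩ := coef_main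
  refine ⟨4 + 2 * C₁, by positivity, ?_⟩
  intro y hy hl hL0 ν Λ hΛ hΛL
  obtain ⟨h1, h2, h3⟩ := big_facts hy hl hL0
  have hσ : 0 < sigmay y := by linarith
  set n1 := ⌈(Real.log y)^2⌉₊ with hn1
  set ε := Real.exp (2*Λ^2) * (1/4)^n1 with hε
  have hε0 : 0 < ε := by positivity
  have hεb : ε ≤ 2 * dl y := tail_small (by linarith) (by linarith) hΛL
  set σ := sigmay y with hσd
  refine ⟨fun ξ => (∑ m ∈ Finset.Ico ν n1, (|PhiCoefR y (m+1)| / (2*σ)^(m+1)) * (Real.exp (-ξ^2/2) * |ξ|^(2*m+1))) + ε/Λ, by fun_prop, ?_, ?_⟩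
  · intro ξ hξ
    have := series_pt hσ hΛ ν n1 ξ hξ
    rw [← hσd, ← hε] at this
    have he : Real.exp (-ξ^2/2) ≤ 1 := Real.exp_le_one_iff.2 (by nlinarith [sq_nonneg ξ])
    calc _ ≤ Real.exp (-ξ^2/2) * ((∑ m ∈ Finset.Ico ν n1, |PhiCoefR y (m+1)| * (ξ^2/(2*σ))^(m+1)) + (|ξ|/Λ) * ε) := by gcongr
      _ ≤ Real.exp (-ξ^2/2) * (∑ m ∈ Finset.Ico ν n1, |PhiCoefR y (m+1)| * (ξ^2/(2*σ))^(m+1)) + (|ξ|/Λ) * ε := by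
        rw [mul_add]
        have : Real.exp (-ξ^2/2) * (|ξ|/Λ*ε) ≤ 1 * (|ξ|/Λ*ε) := by gcongr
        linarith
      _ = _ := by
        rw [mul_add, Finset.mul_sum, Finset.mul_sum]
        congr 1
        · refine Finset.sum_congr rfl fun m _ => ?_
          rw [div_pow, ← sq_abs ξ, ← pow_mul]
          ring
        · ring
  · have hintv : ∀ m : ℕ, IntervalIntegrable (fun ξ : ℝ => (|PhiCoefR y (m+1)| / (2*σ)^(m+1)) * (Real.exp (-ξ^2/2) * |ξ|^(2*m+1))) volume (-Λ) Λ :=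
      fun m => Continuous.intervalIntegrable (by fun_prop) _ _
    rw [intervalIntegral.integral_add (Continuous.intervalIntegrable (by fun_prop) _ _) (by simp),
      intervalIntegral.integral_finsetSum (fun m _ => hintv m)]
    have hsum : ∑ m ∈ Finset.Ico ν n1, ∫ ξ in (-Λ)..Λ, (|PhiCoefR y (m+1)| / (2*σ)^(m+1)) * (Real.exp (-ξ^2/2) * |ξ|^(2*m+1)) ≤ C₁ * (2 * bb σ ν) := by
      refine le_trans ?_ (mul_le_mul_of_nonneg_left (bb_sum hσ ν n1 h3) hC₁.le)
      rw [Finset.mul_sum]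
      refine Finset.sum_le_sum fun m _ => ?_
      rw [intervalIntegral.integral_const_mul]
      have hg := gauss_abs_moment m Λ hΛ.le
      have hcm := hc (m+1) (by omega) y
      have hm : (0:ℝ) < (m:ℝ)+1 := by positivity
      calc _ ≤ (|PhiCoefR y (m+1)| / (2*σ)^(m+1)) * (2^(m+1) * m.factorial) := by gcongr
        _ = (((m+1).factorial : ℝ) * |PhiCoefR y (m+1)|) * (1/((m:ℝ)+1)) / σ^(m+1) := by
          rw [Nat.factorial_succ, mul_pow]; push_cast; field_simp
        _ ≤ (C₁ * Lf (m+1)^(m+1)) * (1/((m:ℝ)+1)) / σ^(m+1) := by gcongr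
        _ = _ := by unfold bb; rw [div_pow]; ring
    have hcst : ∫ _ξ in (-Λ)..Λ, ε/Λ = 2 * ε := by
      rw [intervalIntegral.integral_const, smul_eq_mul]; field_simp; ring
    rw [hcst]
    have hb0 := bb_nonneg hσ ν
    have hd0 : 0 ≤ dl y := by linarith
    nlinarith

/-- the approximating density -/
noncomputable def gnu (y : ℝ) (ν : ℕ) (u : ℝ) : ℝ :=
  ∑ n ∈ Finset.range (ν+1), (1/Real.sqrt (2*π)) * (PhiCoefR y n / (2*sigmay y)^n) * hf (2*n) u

lemma gnu_integrable (y : ℝ) (ν : ℕ) : Integrable (gnu y ν) := by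
  unfold gnu
  exact integrable_finsetSum _ fun n _ => (hf_integrable _).const_mul _

lemma gnu_fourier (y : ℝ) (ν : ℕ) (ξ : ℝ) :
    ∫ u : ℝ, Complex.exp (I*ξ*u) * (gnu y ν u : ℂ) =
      ((Real.exp (-ξ^2/2) * ∑ n ∈ Finset.range (ν+1), PhiCoefR y n * (-ξ^2/(2*sigmay y))^n : ℝ):ℂ) := by
  have h2 : (Real.sqrt (2*π) : ℂ) ≠ 0 := by
    have : Real.sqrt (2*π) ≠ 0 := by positivity
    exact_mod_cast this
  have e : ∀ u : ℝ, Complex.exp (I*ξ*u) * (gnu y ν u : ℂ) = ∑ n ∈ Finset.range (ν+1),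
      (((1/Real.sqrt (2*π)) * (PhiCoefR y n / (2*sigmay y)^n) : ℝ):ℂ) * (Complex.exp (I*ξ*u) * (hf (2*n) u : ℂ)) := by
    intro u
    unfold gnu
    push_cast
    rw [Finset.mul_sum]
    refine Finset.sum_congr rfl fun n _ => ?_
    ring
  simp_rw [e]
  rw [integral_finsetSum]
  · push_cast
    rw [Finset.mul_sum]
    refine Finset.sum_congr rfl fun n _ => ?_
    rw [integral_const_mul, hf_fourier, pow_mul, mul_pow I, Complex.I_sq, div_pow]
    push_cast
    field_simp
  · intro n _
    exact (integrable_exp_mul (hf_integrable _).ofReal ξ).const_mul _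

lemma gnu_sup : ∃ C > 0, ∀ y : ℝ, 1 ≤ y → 1000000 ≤ Real.log (Real.log y) → 0 < Real.log y → ∀ ν : ℕ,
    (ν : ℝ) ≤ Real.exp ((Real.log y) ^ ((1 : ℝ) / 4)) → ∀ u, |gnu y ν u| ≤ C := by
  obtain ⟨C, hC, h⟩ := coef_sum_bound
  refine ⟨C, hC, ?_⟩
  intro y hy hl hL0 ν hν u
  obtain ⟨h1, h2, h3⟩ := big_facts hy hl hL0
  have hσ : 0 < sigmay y := by linarith
  refine le_trans ?_ (h y hy hl hL0 ν hν)
  unfold gnu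
  refine (Finset.abs_sum_le_sum_abs _ _).trans (Finset.sum_le_sum fun n _ => ?_)
  have hs : 1 ≤ Real.sqrt (2*π) := by
    rw [Real.one_le_sqrt]; nlinarith [Real.pi_gt_three]
  have hs1 : 1/Real.sqrt (2*π) ≤ 1 := by rw [div_le_one (by positivity)]; exact hs
  rw [abs_mul, abs_mul, abs_div (PhiCoefR y n), abs_of_nonneg (show 0 ≤ 1/Real.sqrt (2*π) by positivity),
    abs_of_pos (show 0 < (2*sigmay y)^n by positivity)]
  calc _ ≤ 1 * (|PhiCoefR y n| / (2*sigmay y)^n) * (2^n * n.factorial) := by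
        gcongr
        exact hf_sup n u
    _ = _ := by rw [mul_pow]; field_simp

lemma gnu_Icc (y : ℝ) (ν : ℕ) (a b H : ℝ) :
    H * ∫ x in Set.Icc a b, gnu y ν x = H / Real.sqrt (2 * π) * ∑ n ∈ Finset.range (ν + 1),
                (PhiCoefR y n / (2 * sigmay y) ^ n) *
                  ∫ u : ℝ, Real.exp (-u ^ 2 / 2) * hermiteEval (2 * n) u *
                    (Set.Icc a b).indicator (fun _ => (1 : ℝ)) u := by
  unfold gnu
  rw [integral_finsetSum]
  · rw [Finset.mul_sum, Finset.mul_sum]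
    refine Finset.sum_congr rfl fun n _ => ?_
    rw [integral_const_mul, ← integral_indicator measurableSet_Icc]
    have : ∀ u, Real.exp (-u ^ 2 / 2) * hermiteEval (2 * n) u * (Set.Icc a b).indicator (fun _ => (1 : ℝ)) u
        = (Set.Icc a b).indicator (fun x => hf (2*n) x) u := by
      intro u
      by_cases hu : u ∈ Set.Icc a b
      · rw [Set.indicator_of_mem hu, Set.indicator_of_mem hu, mul_one]; rfl
      · rw [Set.indicator_of_notMem hu, Set.indicator_of_notMem hu, mul_zero]
    simp_rw [this]
    ring
  · intro n _
    exact ((hf_integrable _).const_mul _).integrableOn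


lemma gnu_bdd : ∃ C > 0, ∀ y : ℝ, 1 ≤ y → 1000000 ≤ Real.log (Real.log y) → 0 < Real.log y → ∀ ν : ℕ,
    (ν : ℝ) ≤ Real.exp ((Real.log y) ^ ((1 : ℝ) / 4)) → ∀ a b, a ≤ b → |∫ x in Set.Icc a b, gnu y ν x| ≤ C := by
  obtain ⟨C0, hC0, hs⟩ := smoothL
  obtain ⟨C1, hC1, h1⟩ := coef_sum_bound
  obtain ⟨C2, hC2, h2⟩ := gnu_sup
  refine ⟨1 + C0 * (2 * (1 + C1) + C2), by positivity, ?_⟩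
  intro y hy hl hL0 ν hν a b hab
  obtain ⟨hh1, hh2, -⟩ := big_facts hy hl hL0
  have hσ : 0 < sigmay y := by linarith
  have hσ1 : 1 ≤ sigmay y := by linarith
  have key := hs (Measure.dirac 0) (gnu y ν) C2 1 (fun _ => 1 + C1) one_pos (gnu_integrable y ν)
    (h2 y hy hl hL0 ν hν) continuous_const ?_ a b hab
  · have e : ∫ _ξ in (-1:ℝ)..1, (1 + C1) = 2 * (1 + C1) := by
      rw [intervalIntegral.integral_const, smul_eq_mul]; ring
    rw [e, div_one] at key
    have hm0 : 0 ≤ (Measure.dirac (0:ℝ)).real (Set.Icc a b) := measureReal_nonneg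
    have hm1 : (Measure.dirac (0:ℝ)).real (Set.Icc a b) ≤ 1 := measureReal_le_one
    rw [abs_le] at key ⊢
    constructor <;> linarith [key.1, key.2]
  · intro ξ hξ
    rw [integral_dirac, gnu_fourier]
    simp only [Complex.ofReal_zero, mul_zero, Complex.exp_zero]
    rw [← Complex.ofReal_one, ← Complex.ofReal_sub, Complex.norm_real, Real.norm_eq_abs]
    rw [Finset.sum_range_succ', coef_zero]
    have hb := h1 y hy hl hL0 ν hν
    rw [Finset.sum_range_succ'] at hb
    have hz : (0:ℝ) ≤ ((Nat.factorial 0 : ℕ):ℝ) * |PhiCoefR y 0| / sigmay y ^ 0 := by positivity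
    have hS : |∑ n ∈ Finset.range ν, PhiCoefR y (n+1) * (-ξ^2/(2*sigmay y))^(n+1)| ≤ |ξ| * C1 := by
      have hb' : ∑ n ∈ Finset.range ν, ((n+1).factorial : ℝ) * |PhiCoefR y (n+1)| / sigmay y ^ (n+1) ≤ C1 := by linarith
      refine le_trans ?_ (mul_le_mul_of_nonneg_left hb' (abs_nonneg ξ))
      rw [Finset.mul_sum]
      refine (Finset.abs_sum_le_sum_abs _ _).trans (Finset.sum_le_sum fun n _ => ?_)
      have hx : |(-ξ^2/(2*sigmay y))| ≤ |ξ|^2 / sigmay y := by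
        rw [abs_div, abs_neg, abs_of_nonneg (sq_nonneg ξ), abs_of_pos (by positivity : 0 < 2 * sigmay y), sq_abs]
        gcongr
        linarith
      have hf1 : (1:ℝ) ≤ ((n+1).factorial : ℝ) := by exact_mod_cast Nat.succ_le_of_lt (Nat.factorial_pos _)
      have hp : (|ξ|^2)^(n+1) ≤ |ξ| := by
        rw [← pow_mul]
        exact (pow_le_pow_of_le_one (abs_nonneg _) hξ (show 1 ≤ 2*(n+1) by omega)).trans (by simp)
      rw [abs_mul, abs_pow]
      calc _ ≤ |PhiCoefR y (n+1)| * (|ξ|^2 / sigmay y)^(n+1) := by gcongr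
        _ = (|ξ|^2)^(n+1) * (|PhiCoefR y (n+1)| / sigmay y^(n+1)) := by rw [div_pow]; ring
        _ ≤ |ξ| * (((n+1).factorial : ℝ) * (|PhiCoefR y (n+1)| / sigmay y^(n+1))) := by
          gcongr
          exact le_mul_of_one_le_left (by positivity) hf1
        _ = _ := by ring
    set S := ∑ n ∈ Finset.range ν, PhiCoefR y (n+1) * (-ξ^2/(2*sigmay y))^(n+1) with hSd
    have he1 : Real.exp (-ξ^2/2) ≤ 1 := Real.exp_le_one_iff.2 (by nlinarith [sq_nonneg ξ])
    have he0 := Real.exp_pos (-ξ^2/2)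
    have he2 := Real.add_one_le_exp (-ξ^2/2)
    have hsq : ξ^2 ≤ |ξ| := by rw [← sq_abs]; nlinarith [abs_nonneg ξ]
    have heS : |Real.exp (-ξ^2/2) * S| ≤ |ξ| * C1 := by
      rw [abs_mul, abs_of_pos he0]
      calc _ ≤ 1 * |S| := by gcongr
        _ ≤ _ := by linarith
    have hfin : |1 - Real.exp (-ξ^2/2)| ≤ |ξ| := by
      rw [abs_of_nonneg (by linarith)]
      have := abs_nonneg ξ
      linarith
    calc _ = |(1 - Real.exp (-ξ^2/2)) - Real.exp (-ξ^2/2) * S| := by congr 1; simp; ring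
      _ ≤ |1 - Real.exp (-ξ^2/2)| + |Real.exp (-ξ^2/2) * S| := abs_sub _ _
      _ ≤ _ := by linarith

/-- the law of the normalized sum -/
noncomputable def law (y T H r : ℝ) : Measure ℝ :=
  (ENNReal.ofReal H⁻¹ • volume.restrict (Set.Ioc T (T+H))).map (fun t => r * Vy y t)

lemma law_prob (y T H r : ℝ) (hH : 0 < H) : IsProbabilityMeasure (law y T H r) := by
  have hm : Measurable (fun t => r * Vy y t) := ((Vy_continuous y).measurable).const_mul r
  have : IsProbabilityMeasure (ENNReal.ofReal H⁻¹ • volume.restrict (Set.Ioc T (T+H))) := by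
    constructor
    rw [Measure.smul_apply, Measure.restrict_apply_univ, Real.volume_Ioc, smul_eq_mul,
      ← ENNReal.ofReal_mul (by positivity)]
    simp [hH.ne']
  exact Measure.isProbabilityMeasure_map hm.aemeasurable

lemma law_char (y T H r : ℝ) (hH : 0 < H) (ξ : ℝ) :
    ∫ x, Complex.exp (I * ξ * x) ∂(law y T H r) =
      (H:ℂ)⁻¹ * (∫ t in T..(T+H), Complex.exp (I * ((ξ * r * Vy y t : ℝ) : ℂ))) := by
  have hm : Measurable (fun t => r * Vy y t) := ((Vy_continuous y).measurable).const_mul r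
  unfold law
  rw [integral_map hm.aemeasurable (Continuous.aestronglyMeasurable (by fun_prop)), integral_smul_measure,
    intervalIntegral.integral_of_le (by linarith), ENNReal.toReal_ofReal (by positivity), Complex.real_smul]
  push_cast
  congr 1
  refine integral_congr_ae (Filter.Eventually.of_forall fun t => ?_)
  simp only
  congr 1; ring

lemma law_Icc (y T H r : ℝ) (hH : 0 < H) (hr : 0 < r) (α β : ℝ) :
    H * (law y T H r).real (Set.Icc (α * r) (β * r)) =
      ∫ t in T..(T + H), (Set.Icc α β).indicator (fun _ => (1 : ℝ)) (Vy y t) := by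
  have hm : Measurable (fun t => r * Vy y t) := ((Vy_continuous y).measurable).const_mul r
  have hpre : (fun t => r * Vy y t) ⁻¹' (Set.Icc (α * r) (β * r)) = (Vy y) ⁻¹' (Set.Icc α β) := by
    ext t
    simp only [Set.mem_preimage, Set.mem_Icc]
    rw [mul_comm α, mul_comm β, mul_le_mul_iff_right₀ hr, mul_le_mul_iff_right₀ hr]
  have hms : MeasurableSet ((Vy y) ⁻¹' (Set.Icc α β)) := (Vy_continuous y).measurable measurableSet_Icc
  unfold law
  rw [measureReal_def, Measure.map_apply hm measurableSet_Icc, hpre, Measure.smul_apply, smul_eq_mul, ENNReal.toReal_mul,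
    ENNReal.toReal_ofReal (by positivity), ← mul_assoc, mul_inv_cancel₀ hH.ne', one_mul,
    intervalIntegral.integral_of_le (by linarith)]
  have : ∀ t, (Set.Icc α β).indicator (fun _ => (1 : ℝ)) (Vy y t) = ((Vy y) ⁻¹' (Set.Icc α β)).indicator (fun _ => (1:ℝ)) t := by
    intro t; rfl
  simp_rw [this]
  rw [integral_indicator_const _ hms]
  simp [measureReal_def]


lemma log_sq_le {L : ℝ} (hL0 : 0 < L) (hl : 1000000 ≤ Real.log L) : L * (Real.log L)^2 ≤ L^2/4 := by
  have h := Real.pow_div_factorial_le_exp (Real.log L) (by linarith) 3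
  rw [Real.exp_log hL0] at h
  set l := Real.log L
  have h6 : ((Nat.factorial 3 : ℕ):ℝ) = 6 := by norm_num [Nat.factorial]
  rw [h6, div_le_iff₀ (by norm_num)] at h
  have : 4 * l^2 ≤ L := by nlinarith [sq_nonneg l]
  nlinarith

/-- error pieces from the truncated moment comparison -/
lemma err_bound {y H N Λ σ : ℝ} (hy : 1 ≤ y) (hL : 1 ≤ Real.log y) (hH : 0 < H) (hN : 32 ≤ N)
    (hNH : Real.log H = N * Real.log y) (hΛ : 0 < Λ) (hΛN : Λ ≤ Real.sqrt N / 16) (hσ : 2 ≤ σ) (K : ℕ)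
    (hK : (K:ℝ) ≤ N/8) (hK' : N/16 ≤ (K:ℝ)) (ξ : ℝ) (hξ : |ξ| ≤ Λ) :
    |ξ * Real.sqrt (2/σ)| * Real.exp |ξ * Real.sqrt (2/σ)| * (2 * y^(2*K) / H) +
      4 * (|ξ * Real.sqrt (2/σ)|/(4 * Λ * Real.sqrt (2/σ)))^K * Real.exp ((4 * Λ * Real.sqrt (2/σ))^2/4 * σ) ≤
    |ξ| * (2 * Real.exp (-N/2) + 4 * (1/2)^K / Λ) := by
  set r := Real.sqrt (2/σ) with hr
  have hr0 : 0 < r := Real.sqrt_pos.2 (by positivity)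
  have hr2 : r^2 = 2/σ := Real.sq_sqrt (by positivity)
  have hr1 : r ≤ 1 := by
    rw [hr]
    refine (Real.sqrt_le_sqrt ((div_le_one (by linarith)).2 hσ)).trans (by simp)
  have hsN : 0 ≤ Real.sqrt N := Real.sqrt_nonneg _
  have hsN2 : Real.sqrt N^2 = N := Real.sq_sqrt (by linarith)
  have hΛ2 : Λ^2 ≤ N/256 := by nlinarith
  rw [abs_mul, abs_of_pos hr0]
  have hξr : |ξ| * r ≤ |ξ| := mul_le_of_le_one_right (abs_nonneg _) hr1
  have hΛ4 : Λ ≤ N/4 := by nlinarith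
  have hHy : 2 * y^(2*K)/H ≤ 2 * Real.exp (-(3*N/4)) := by
    have e1 : y^(2*K) = Real.exp ((2*K:ℝ) * Real.log y) := by
      rw [← Real.exp_log (show 0 < y by linarith), ← Real.exp_nat_mul, Real.exp_log (show 0 < y by linarith)]
      push_cast; rfl
    have e2 : H = Real.exp (N * Real.log y) := by rw [← hNH, Real.exp_log hH]
    rw [e2, e1, mul_div_assoc, ← Real.exp_sub]
    gcongr
    nlinarith
  have hA : |ξ| * r * Real.exp (|ξ| * r) * (2 * y^(2*K)/H) ≤ |ξ| * (2 * Real.exp (-N/2)) := by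
    calc _ ≤ |ξ| * Real.exp (N/4) * (2 * Real.exp (-(3*N/4))) := by
          gcongr; linarith
      _ = |ξ| * (2 * (Real.exp (N/4) * Real.exp (-(3*N/4)))) := by ring
      _ = _ := by rw [← Real.exp_add]; ring_nf
  have hB : 4 * (|ξ| * r/(4 * Λ * r))^K * Real.exp ((4 * Λ * r)^2/4 * σ) ≤ |ξ| * (4 * (1/2)^K/Λ) := by
    have e1 : |ξ| * r/(4 * Λ * r) = (|ξ|/Λ) * (1/4) := by field_simp
    have e2 : (4 * Λ * r)^2/4 * σ = 8 * Λ^2 := by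
      rw [mul_pow, hr2]; field_simp; ring
    have e3 : Real.exp (8*Λ^2) ≤ 2^K := by
      calc Real.exp (8*Λ^2) ≤ Real.exp ((K:ℝ) * (1/2)) := Real.exp_le_exp.2 (by linarith)
        _ = (Real.exp (1/2))^K := by rw [Real.exp_nat_mul]
        _ ≤ 2^K := by
          gcongr
          have h1 : (Real.exp (1/2))^2 = Real.exp 1 := by rw [← Real.exp_nat_mul]; norm_num
          have h2 := Real.exp_one_lt_d9
          nlinarith [Real.exp_pos (1/2)]
    have hq0 : 0 ≤ |ξ|/Λ := by positivity
    have hq1 : |ξ|/Λ ≤ 1 := by rw [div_le_one hΛ]; exact hξ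
    have hK1 : 1 ≤ K := by
      have : (1:ℝ) ≤ K := by linarith
      exact_mod_cast this
    have hq := pow_le_pow_of_le_one hq0 hq1 hK1
    rw [e1, e2, mul_pow]
    calc _ ≤ 4 * ((|ξ|/Λ)^1 * (1/4)^K) * 2^K := by gcongr
      _ = |ξ| * (4 * ((1/4)^K * 2^K)/Λ) := by ring
      _ = _ := by rw [← mul_pow]; norm_num
  linarith

lemma err_int {N Λ : ℝ} (hN : 32 ≤ N) (hΛ : 0 < Λ) (hΛN : Λ ≤ Real.sqrt N / 16) (K : ℕ) (hK' : N/16 ≤ (K:ℝ)) :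
    ∫ _ξ in (-Λ)..Λ, (2 * Real.exp (-N/2) + 4 * (1/2)^K / Λ) ≤ 200 * (1 / Real.sqrt N) := by
  rw [intervalIntegral.integral_const, smul_eq_mul]
  have hN0 : 0 < N := by linarith
  have hs : 0 < Real.sqrt N := Real.sqrt_pos.2 hN0
  have hs2 : Real.sqrt N^2 = N := Real.sq_sqrt hN0.le
  have hs1 : 1 ≤ Real.sqrt N := by rw [Real.one_le_sqrt]; linarith
  have h1 : Real.exp (-N/2) ≤ 2/N := by
    have := Real.add_one_le_exp (N/2)
    rw [neg_div, Real.exp_neg, inv_eq_one_div, div_le_div_iff₀ (Real.exp_pos _) hN0]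
    linarith
  have h2 : (1/2:ℝ)^K ≤ 16/N := by
    have : (K:ℝ) ≤ 2^K := by exact_mod_cast (Nat.lt_two_pow_self).le
    rw [one_div, inv_pow, inv_eq_one_div, div_le_div_iff₀ (by positivity) hN0]
    linarith
  have h3 : 1/N ≤ 1/Real.sqrt N := by
    apply one_div_le_one_div_of_le hs; nlinarith
  have h4 : Real.sqrt N / N = 1/Real.sqrt N := by
    rw [div_eq_div_iff hN0.ne' hs.ne']; nlinarith
  calc (Λ - -Λ) * (2 * Real.exp (-N/2) + 4 * (1/2)^K / Λ) = 4 * Λ * Real.exp (-N/2) + 8 * (1/2)^K := by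
        field_simp; ring
    _ ≤ 4 * (Real.sqrt N/16) * (2/N) + 8 * (16/N) := by gcongr
    _ = (1/2) * (Real.sqrt N/N) + 128 * (1/N) := by ring
    _ ≤ _ := by
      rw [h4]
      have : 0 < 1/Real.sqrt N := by positivity
      linarith

lemma main_regime : ∃ C > 0, ∀ y : ℝ, 1 ≤ y → 1000000 ≤ Real.log (Real.log y) → 0 < Real.log y → ∀ ν : ℕ,
    (ν : ℝ) ≤ Real.exp ((Real.log y) ^ ((1 : ℝ) / 4)) → ∀ T H : ℝ, 0 < H → 32 ≤ Real.log H / Real.log y → ∀ a b, a ≤ b →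
    |(law y T H (Real.sqrt (2/sigmay y))).real (Set.Icc a b) - ∫ x in Set.Icc a b, gnu y ν x| ≤
      C * (dl y + 1 / Real.sqrt (Real.log H / Real.log y) + bb (sigmay y) ν) := by
  obtain ⟨C0, hC0, hs⟩ := smoothL
  obtain ⟨C1, hC1, h1⟩ := series_B
  obtain ⟨C2, hC2, h2⟩ := gnu_sup
  refine ⟨C0 * (C1 + 200 + 16 * C2), by positivity, ?_⟩
  intro y hy hl hL0 ν hν T H hH hN a b hab
  obtain ⟨hh1, hh2, -⟩ := big_facts hy hl hL0
  have hσ : 0 < sigmay y := by linarith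
  have hσ1 : 2 ≤ sigmay y := by linarith
  set L := Real.log y with hL
  set N := Real.log H / L with hNd
  have hN0 : 0 < N := by linarith
  have hNH : Real.log H = N * L := by rw [hNd]; field_simp
  have hl0 : 0 < Real.log L := by linarith
  have hsL : 0 < Real.sqrt L := Real.sqrt_pos.2 hL0
  have hsN : 0 < Real.sqrt N := Real.sqrt_pos.2 hN0
  set Λ := min (Real.sqrt N / 16) (Real.sqrt L * Real.log L) with hΛd
  have hΛ : 0 < Λ := lt_min (by positivity) (by positivity)
  have hΛN : Λ ≤ Real.sqrt N / 16 := min_le_left _ _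
  have hΛL : Λ^2 ≤ L^2/4 := by
    refine le_trans ?_ (log_sq_le hL0 hl)
    calc Λ^2 ≤ (Real.sqrt L * Real.log L)^2 := by gcongr; exact min_le_right _ _
      _ = _ := by rw [mul_pow, Real.sq_sqrt hL0.le]
  have hinv : 1/Λ ≤ 16 * (1/Real.sqrt N) + dl y := by
    rw [dl_eq hL0, ← hL]
    rcases min_choice (Real.sqrt N / 16) (Real.sqrt L * Real.log L) with h | h
    · rw [hΛd, h]
      have : 0 < 1 / (Real.sqrt L * Real.log L) := by positivity
      have e : 1 / (Real.sqrt N/16) = 16 * (1/Real.sqrt N) := by field_simp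
      linarith
    · rw [hΛd, h]
      have : 0 < 1 / Real.sqrt N := by positivity
      linarith
  set K := 2 * ⌊N/16⌋₊ with hKd
  have hK : (K:ℝ) ≤ N/8 := by
    have := Nat.floor_le (show 0 ≤ N/16 by positivity)
    rw [hKd]; push_cast; linarith
  have hK' : N/16 ≤ (K:ℝ) := by
    have := Nat.lt_floor_add_one (N/16)
    rw [hKd]; push_cast; linarith
  have hK1 : 1 ≤ K := by
    have : (1:ℝ) ≤ K := by linarith
    exact_mod_cast this
  obtain ⟨B, hBc, hB, hBi⟩ := h1 y hy hl hL0 ν Λ hΛ hΛL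
  set r := Real.sqrt (2/sigmay y) with hr
  have hr0 : 0 < r := Real.sqrt_pos.2 (by positivity)
  have hr2 : r^2 = 2/sigmay y := Real.sq_sqrt (by positivity)
  have hpr := law_prob y T H r hH
  set c := 2 * Real.exp (-N/2) + 4 * (1/2)^K / Λ with hc
  have key := hs (law y T H r) (gnu y ν) C2 Λ (fun ξ => B ξ + c) hΛ (gnu_integrable y ν)
    (h2 y hy hl hL0 ν hν) (hBc.add continuous_const) ?_ a b hab
  · refine key.trans ?_
    rw [mul_assoc]
    refine mul_le_mul_of_nonneg_left ?_ hC0.le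
    have hci := err_int hN hΛ hΛN K hK'
    rw [intervalIntegral.integral_add (hBc.intervalIntegrable _ _) (by simp)]
    have hb0 := bb_nonneg hσ ν
    have hd0 : 0 ≤ dl y := by rw [dl_eq hL0]; positivity
    have hq0 : 0 ≤ 1/Real.sqrt N := by positivity
    have hm : C2 / Λ ≤ C2 * (16 * (1/Real.sqrt N) + dl y) := by
      rw [div_eq_mul_one_div]; gcongr
    nlinarith [mul_nonneg hC1.le hq0, mul_nonneg hC2.le hb0, mul_nonneg hC2.le hd0]
  · intro ξ hξ
    rw [law_char y T H r hH, gnu_fourier]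
    have hcf := charfun_cmp y hy T H hH K ⟨⌊N/16⌋₊, by omega⟩ hK1 (ξ * r) (4 * Λ * r) (by positivity)
    have heb := err_bound hy (by linarith : 1 ≤ Real.log y) hH hN hNH hΛ hΛN hσ1 K hK hK' ξ hξ
    have hc1 := hcf.trans heb
    have e1 : (-((ξ * r : ℝ):ℂ)^2/4) = ((-ξ^2/(2*sigmay y) : ℝ):ℂ) := by
      rw [← Complex.ofReal_pow, mul_pow, hr2]
      push_cast
      have : (sigmay y : ℂ) ≠ 0 := by exact_mod_cast hσ.ne'
      field_simp
      norm_num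
    have e2 : Complex.exp (((-ξ^2/(2*sigmay y) : ℝ):ℂ) * sigmay y) * Phifun y ((-ξ^2/(2*sigmay y) : ℝ):ℂ) =
        ((Real.exp (-ξ^2/2) * (Phifun y ((-ξ^2/(2*sigmay y) : ℝ):ℂ)).re : ℝ):ℂ) := by
      rw [Complex.ofReal_mul, ← Phi_real, ← Complex.ofReal_mul, ← Complex.ofReal_exp]
      congr 3
      field_simp
    rw [e1, e2] at hc1
    have hser := hB ξ hξ
    set P := (Phifun y ((-ξ^2/(2*sigmay y) : ℝ):ℂ)).re with hP
    set S := ∑ n ∈ Finset.range (ν+1), PhiCoefR y n * (-ξ^2/(2*sigmay y))^n with hS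
    have h3 : ‖((Real.exp (-ξ^2/2) * P : ℝ):ℂ) - ((Real.exp (-ξ^2/2) * S : ℝ):ℂ)‖ ≤ |ξ| * B ξ := by
      rw [← Complex.ofReal_sub, Complex.norm_real, Real.norm_eq_abs, ← mul_sub, abs_mul, abs_of_pos (Real.exp_pos _)]
      exact hser
    refine (norm_sub_le_norm_sub_add_norm_sub _ ((Real.exp (-ξ^2/2) * P : ℝ):ℂ) _).trans ?_
    rw [mul_add]
    linarith


/-- **Corollary 1** (Ivić–Korolev). Under the hypotheses of Theorem 3, for `α < β`,
`∫_T^{T+H} χ_{α,β}(V_y(t)) dt = (H/√(2π)) ∑_{n=0}^{ν} (Φ_n/(2σ)ⁿ)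
  ∫_{-∞}^{∞} e^{-u²/2} H_{2n}(u) χ_{a,b}(u) du + O(HΔ)`,
where `a = α√(2/σ)`, `b = β√(2/σ)`, with an absolute `O`-constant. -/
theorem indicator_Vy_asymptotic :
    ∃ C y₀ : ℝ, 0 < C ∧ 2 < y₀ ∧
      ∀ H₀ H y : ℝ, 1 < H₀ → H₀ < H →
        y₀ < y → y ≤ Real.exp (Real.log H / (14000 * Real.log (Real.log H))) →
        ∀ ν : ℕ, (ν : ℝ) ≤ Real.exp ((Real.log y) ^ ((1 : ℝ) / 4)) →
        ∀ T α β : ℝ, α < β →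
          |(∫ t in T..(T + H), (Set.Icc α β).indicator (fun _ => (1 : ℝ)) (Vy y t))
            - H / Real.sqrt (2 * π) * ∑ n ∈ Finset.range (ν + 1),
                (PhiCoefR y n / (2 * sigmay y) ^ n) *
                  ∫ u : ℝ, Real.exp (-u ^ 2 / 2) * hermiteEval (2 * n) u *
                    (Set.Icc (α * Real.sqrt (2 / sigmay y))
                      (β * Real.sqrt (2 / sigmay y))).indicator (fun _ => (1 : ℝ)) u|
          ≤ C * H * ((Real.log y) ^ (-(1 : ℝ) / 2) / Real.log (Real.log y)
              + (Real.log y / Real.log H) ^ ((1 : ℝ) / 2)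
              + (1 / ((ν : ℝ) + 1)) *
                  ((Real.log (Real.log ((ν : ℝ) + 2)) + 1) / sigmay y) ^ (ν + 1)) := by
  obtain ⟨C, hC, hmain⟩ := main_regime
  obtain ⟨D, hD, htriv⟩ := gnu_bdd
  refine ⟨C + 6 * (1 + D), Real.exp (Real.exp 1000000), by positivity, ?_, ?_⟩
  · have h1 := Real.add_one_le_exp (1000000:ℝ)
    have h2 := Real.add_one_le_exp (Real.exp 1000000)
    linarith
  intro H₀ H y hH₀ hH hy _ ν hν T α β hαβ
  have hH1 : 1 < H := by linarith
  have hH0 : 0 < H := by linarith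
  have hexp1 := Real.add_one_le_exp (1000000:ℝ)
  have hyp : 0 < y := lt_trans (Real.exp_pos _) hy
  have hy1 : 1 ≤ y := by
    have h2 := Real.add_one_le_exp (Real.exp 1000000)
    linarith
  have hLe : Real.exp 1000000 ≤ Real.log y := (Real.le_log_iff_exp_le hyp).2 hy.le
  have hL0 : 0 < Real.log y := lt_of_lt_of_le (Real.exp_pos _) hLe
  have hl : 1000000 ≤ Real.log (Real.log y) := (Real.le_log_iff_exp_le hL0).2 hLe
  obtain ⟨hh1, hh2, -⟩ := big_facts hy1 hl hL0
  have hσ : 0 < sigmay y := by linarith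
  have hr0 : 0 < Real.sqrt (2/sigmay y) := Real.sqrt_pos.2 (by positivity)
  have hlogH : 0 < Real.log H := Real.log_pos hH1
  have hab : α * Real.sqrt (2/sigmay y) ≤ β * Real.sqrt (2/sigmay y) := by gcongr
  rw [← law_Icc y T H (Real.sqrt (2/sigmay y)) hH0 hr0, ← gnu_Icc, ← mul_sub, abs_mul, abs_of_pos hH0]
  have e3 : (1 / ((ν : ℝ) + 1)) * ((Real.log (Real.log ((ν : ℝ) + 2)) + 1) / sigmay y) ^ (ν + 1) = bb (sigmay y) ν := by
    unfold bb Lf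
    push_cast
    rw [show (ν:ℝ) + 1 + 1 = ν + 2 by ring]
  have e2 : (Real.log y / Real.log H) ^ ((1 : ℝ) / 2) = 1 / Real.sqrt (Real.log H / Real.log y) := by
    rw [← Real.sqrt_eq_rpow, ← inv_div, Real.sqrt_inv, one_div]
  have e1 : (Real.log y) ^ (-(1 : ℝ) / 2) / Real.log (Real.log y) = dl y := rfl
  rw [e1, e2, e3]
  have hb0 := bb_nonneg hσ ν
  have hl0 : 0 < Real.log (Real.log y) := by linarith
  have hd0 : 0 ≤ dl y := by rw [dl_eq hL0]; positivity
  have hq0 : 0 < 1/Real.sqrt (Real.log H / Real.log y) := by positivity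
  rw [mul_comm _ H, mul_assoc]
  refine mul_le_mul_of_nonneg_left ?_ hH0.le
  by_cases hN : 32 ≤ Real.log H / Real.log y
  · refine (hmain y hy1 hl hL0 ν hν T H hH0 hN _ _ hab).trans ?_
    gcongr
    linarith
  · push Not at hN
    have hpr := law_prob y T H (Real.sqrt (2/sigmay y)) hH0
    have hg := htriv y hy1 hl hL0 ν hν _ _ hab
    have hm0 : 0 ≤ (law y T H (Real.sqrt (2/sigmay y))).real (Set.Icc (α * Real.sqrt (2/sigmay y)) (β * Real.sqrt (2/sigmay y))) := measureReal_nonneg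
    have hm1 : (law y T H (Real.sqrt (2/sigmay y))).real (Set.Icc (α * Real.sqrt (2/sigmay y)) (β * Real.sqrt (2/sigmay y))) ≤ 1 := measureReal_le_one
    have hq : 1/6 ≤ 1/Real.sqrt (Real.log H / Real.log y) := by
      apply one_div_le_one_div_of_le (by positivity)
      rw [Real.sqrt_le_left (by norm_num)]
      linarith
    have hA : |(law y T H (Real.sqrt (2/sigmay y))).real (Set.Icc (α * Real.sqrt (2/sigmay y)) (β * Real.sqrt (2/sigmay y))) -
        ∫ x in Set.Icc (α * Real.sqrt (2/sigmay y)) (β * Real.sqrt (2/sigmay y)), gnu y ν x| ≤ 1 + D := by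
      rw [abs_le] at hg ⊢
      constructor <;> linarith [hg.1, hg.2]
    refine hA.trans ?_
    calc 1 + D = 6 * (1 + D) * (1/6) := by ring
      _ ≤ (C + 6 * (1+D)) * (dl y + 1/Real.sqrt (Real.log H / Real.log y) + bb (sigmay y) ν) := by
        gcongr <;> linarith
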